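/- arXiv:math/0201023 — 14 statements merged into one kernel-verified Lean document; each statement's English description precedes it below -/
import Mathlib

section
/- Let n ≥ 1 and let A ⊆ ℝⁿ be an unbounded set with the c-isometric approximation property for some c > 0. Then μ(A) ≥ 1/(17c). -/
open Filter Metric Bornology RealInnerProductSpace

/-- `f` is an `ε`-nearisometry on `A`: `||f x - f y| - |x - y|| ≤ ε` for all `x, y ∈ A`. -/
def IsNearisometryOn {E F : Type*} [NormedAddCommGroup E] [NormedAddCommGroup F]
    (f : E → F) (A : Set E) (ε : ℝ) : Prop :=
  ∀ x ∈ A, ∀ y ∈ A, |‖f x - f y‖ - ‖x - y‖| ≤ ε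

/-- `u` is a cluster direction of `A`: there is a sequence `(x_j)` in `A` with
`‖x_j‖ → ∞` and `x_j / ‖x_j‖ → u`. -/
def IsClusterDirection {E : Type*} [NormedAddCommGroup E] [NormedSpace ℝ E]
    (A : Set E) (u : E) : Prop :=
  ∃ x : ℕ → E, (∀ j, x j ∈ A) ∧ Tendsto (fun j => ‖x j‖) atTop atTop ∧
    Tendsto (fun j => ‖x j‖⁻¹ • x j) atTop (nhds u)

/-- `μ(A) = μ₁(cd A)`, where `μ₁(X) = inf_{|e|=1} sup {|u ⬝ e| : u ∈ X}` (with `sup ∅ = 0`,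
as is the convention for `Real.sSup`). -/
noncomputable def muDir {E : Type*} [NormedAddCommGroup E] [InnerProductSpace ℝ E]
    (A : Set E) : ℝ :=
  sInf {s | ∃ e : E, ‖e‖ = 1 ∧
    s = sSup {t | ∃ u, IsClusterDirection A u ∧ t = abs ⟪u, e⟫}}

/-- `A ⊆ ℝⁿ` has the `c`-isometric approximation property. -/
def HasIAP {n : ℕ} (c : ℝ) (A : Set (EuclideanSpace ℝ (Fin n))) : Prop :=
  ∀ ε : ℝ, 0 ≤ ε → ∀ f : EuclideanSpace ℝ (Fin n) → EuclideanSpace ℝ (Fin n),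
    IsNearisometryOn f A ε →
    ∃ T : EuclideanSpace ℝ (Fin n) → EuclideanSpace ℝ (Fin n),
      Isometry T ∧ ∀ x ∈ A, ‖T x - f x‖ ≤ c * ε

lemma iap_aux_dir {n : ℕ} (A : Set (EuclideanSpace ℝ (Fin n))) (e : EuclideanSpace ℝ (Fin n))
    (he : ‖e‖ = 1) (t : ℝ)
    (ht : sSup {t | ∃ u, IsClusterDirection A u ∧ t = abs ⟪u, e⟫} < t) :
    ∃ R : ℝ, ∀ x ∈ A, R ≤ ‖x‖ → |⟪x, e⟫| ≤ t * ‖x‖ := by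
  by_contra! hcon
  have h1 : ∀ k : ℕ, ∃ x ∈ A, (k : ℝ) + 1 ≤ ‖x‖ ∧ t * ‖x‖ < |⟪x, e⟫| := fun k => hcon (k + 1)
  choose x hxA hxn hxt using h1
  have hb : ∀ y : EuclideanSpace ℝ (Fin n), ‖‖y‖⁻¹ • y‖ ≤ 1 := by
    intro y
    rw [norm_smul, norm_inv, norm_norm]
    exact inv_mul_le_one
  obtain ⟨u, -, φ, hφ, hu⟩ := tendsto_subseq_of_bounded
    (isBounded_closedBall (x := (0 : EuclideanSpace ℝ (Fin n))) (r := 1))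
    (x := fun k => ‖x k‖⁻¹ • x k) (fun k => by simpa using hb (x k))
  have hinf : Tendsto (fun k => ‖x k‖) atTop atTop :=
    tendsto_atTop_mono (fun k => (by linarith [hxn k] : (k : ℝ) ≤ ‖x k‖))
      tendsto_natCast_atTop_atTop
  have hcd : IsClusterDirection A u :=
    ⟨x ∘ φ, fun j => hxA _, hinf.comp hφ.tendsto_atTop, hu⟩
  have hbd : BddAbove {t | ∃ u, IsClusterDirection A u ∧ t = abs ⟪u, e⟫} := by
    refine ⟨1, ?_⟩
    rintro _ ⟨v, ⟨y, -, -, hy⟩, rfl⟩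
    have : ‖v‖ ≤ 1 := le_of_tendsto hy.norm (Eventually.of_forall fun j => hb (y j))
    calc |⟪v, e⟫| ≤ ‖v‖ * ‖e‖ := abs_real_inner_le_norm v e
      _ ≤ 1 := by rw [he]; linarith
  have h2 : |⟪u, e⟫| ≤ sSup {t | ∃ u, IsClusterDirection A u ∧ t = abs ⟪u, e⟫} :=
    le_csSup hbd ⟨u, hcd, rfl⟩
  have h3 : t ≤ |⟪u, e⟫| := by
    have hl : Tendsto (fun j => |⟪((fun k => ‖x k‖⁻¹ • x k) ∘ φ) j, e⟫|) atTop (nhds |⟪u, e⟫|) :=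
      (hu.inner tendsto_const_nhds).abs
    refine ge_of_tendsto hl (Eventually.of_forall fun j => ?_)
    have hp : 0 < ‖x (φ j)‖ := by
      have := hxn (φ j)
      have h0 : (0 : ℝ) ≤ (φ j : ℝ) := Nat.cast_nonneg _
      linarith
    simp only [Function.comp, real_inner_smul_left, abs_mul, abs_inv, abs_norm]
    rw [inv_mul_eq_div, le_div_iff₀ hp]
    exact (hxt (φ j)).le
  linarith

lemma iap_aux_seq {n : ℕ} (A : Set (EuclideanSpace ℝ (Fin n))) (hA : ¬ IsBounded A) :
    ∃ x : ℕ → EuclideanSpace ℝ (Fin n), (∀ j, x j ∈ A) ∧ Tendsto (fun j => ‖x j‖) atTop atTop ∧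
      ∀ w : EuclideanSpace ℝ (Fin n), (∃ C : ℝ, ∀ y ∈ A, |⟪w, y⟫| ≤ C) →
        ∃ l : ℝ, Tendsto (fun j => ⟪w, x j⟫) atTop (nhds l) := by
  let W : Submodule ℝ (EuclideanSpace ℝ (Fin n)) :=
    { carrier := {w | ∃ C : ℝ, ∀ y ∈ A, |⟪w, y⟫| ≤ C}
      add_mem' := by
        rintro a b ⟨C, hC⟩ ⟨D, hD⟩
        refine ⟨C + D, fun y hy => ?_⟩
        rw [inner_add_left]
        exact (abs_add_le _ _).trans (add_le_add (hC y hy) (hD y hy))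
      zero_mem' := ⟨0, fun y _ => by simp⟩
      smul_mem' := by
        rintro r a ⟨C, hC⟩
        refine ⟨|r| * C, fun y hy => ?_⟩
        rw [real_inner_smul_left, abs_mul]
        exact mul_le_mul_of_nonneg_left (hC y hy) (abs_nonneg r) }
  let b := stdOrthonormalBasis ℝ W
  have hW : ∀ i, ∃ C : ℝ, ∀ y ∈ A, |⟪(b i : EuclideanSpace ℝ (Fin n)), y⟫| ≤ C := fun i => (b i).2
  choose C hC using hW
  have h1 : ∀ k : ℕ, ∃ x ∈ A, (k : ℝ) ≤ ‖x‖ := by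
    intro k
    by_contra! hcon
    exact hA (isBounded_iff_forall_norm_le.2 ⟨k, fun x hx => (hcon x hx).le⟩)
  choose x hxA hxn using h1
  have hinf : Tendsto (fun k => ‖x k‖) atTop atTop :=
    tendsto_atTop_mono hxn tendsto_natCast_atTop_atTop
  have hPb : ∀ k, W.orthogonalProjectionOnto (x k) ∈ closedBall (0 : W) (∑ i, C i) := by
    intro k
    rw [mem_closedBall_zero_iff, ← b.sum_repr' (W.orthogonalProjectionOnto (x k))]
    refine (norm_sum_le _ _).trans (Finset.sum_le_sum fun i _ => ?_)
    rw [norm_smul, b.norm_eq_one, mul_one, Real.norm_eq_abs]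
    rw [Submodule.inner_orthogonalProjectionOnto_eq_of_mem_left]
    exact hC i _ (hxA k)
  obtain ⟨p, -, φ, hφ, hp⟩ := tendsto_subseq_of_bounded isBounded_closedBall hPb
  refine ⟨x ∘ φ, fun j => hxA _, hinf.comp hφ.tendsto_atTop, fun w hw => ?_⟩
  refine ⟨⟪(⟨w, hw⟩ : W), p⟫, ?_⟩
  have := (tendsto_const_nhds (x := (⟨w, hw⟩ : W))).inner (𝕜 := ℝ) hp
  refine this.congr fun j => ?_
  simp only [Function.comp]
  rw [Submodule.inner_orthogonalProjectionOnto_eq_of_mem_left]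

lemma iap_aux_sparse (l : ℕ → ℝ) (hl : Tendsto l atTop atTop) :
    ∃ ψ : ℕ → ℕ, StrictMono ψ ∧ ∀ j k, j < k → l (ψ j) + 1 ≤ l (ψ k) := by
  have h : ∀ m : ℕ, ∃ m', m < m' ∧ l m + 1 ≤ l m' := fun m =>
    ((eventually_gt_atTop m).and (hl.eventually_ge_atTop (l m + 1))).exists
  choose g hg1 hg2 using h
  have hs : ∀ k, g^[k+1] 0 = g (g^[k] 0) := fun k => Function.iterate_succ_apply' g k 0
  have hm : StrictMono fun k => l (g^[k] 0) := strictMono_nat_of_lt_succ fun k => by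
    rw [hs]; linarith [hg2 (g^[k] 0)]
  refine ⟨fun k => g^[k] 0, strictMono_nat_of_lt_succ fun k => by rw [hs]; exact hg1 _, ?_⟩
  intro j k hjk
  have h1 : l (g^[j+1] 0) ≤ l (g^[k] 0) := hm.monotone hjk
  rw [hs] at h1
  linarith [hg2 (g^[j] 0)]

lemma iap_aux_phi (l : ℕ → ℝ) (hl : ∀ j k, j < k → l j + 1 ≤ l k) :
    ∃ φ : ℝ → ℝ, (∀ r, 0 ≤ φ r ∧ φ r ≤ 1) ∧ (∀ r s, |φ r - φ s| ≤ |r - s|) ∧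
      (∀ j, φ (l (2 * j)) = 0) ∧ (∀ j, φ (l (2 * j + 1)) = 1) := by
  let S : Set ℝ := Set.range fun j => l (2 * j)
  have hS : S.Nonempty := Set.range_nonempty _
  refine ⟨fun r => min 1 (infDist r S), fun r => ⟨le_min zero_le_one infDist_nonneg, min_le_left _ _⟩,
    fun r s => ?_, fun j => ?_, fun j => ?_⟩
  · have h1 := infDist_le_infDist_add_dist (s := S) (x := r) (y := s)
    have h2 := infDist_le_infDist_add_dist (s := S) (x := s) (y := r)
    rw [Real.dist_eq] at h1 h2
    rw [abs_sub_comm s r] at h2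
    refine (abs_min_sub_min_le_max _ _ _ _).trans ?_
    simp only [sub_self, abs_zero]
    exact max_le (abs_nonneg _) (abs_sub_le_iff.2 ⟨by linarith, by linarith⟩)
  · have : infDist (l (2 * j)) S = 0 := infDist_zero_of_mem ⟨j, rfl⟩
    simp [this]
  · refine min_eq_left ((le_infDist hS).2 ?_)
    rintro _ ⟨k, rfl⟩
    rw [Real.dist_eq]
    rcases lt_or_ge (2 * k) (2 * j + 1) with h | h
    · exact le_abs.2 (Or.inl (by have := hl _ _ h; dsimp only; linarith))
    · exact le_abs.2 (Or.inr (by have := hl (2*j+1) (2*k) (by omega); dsimp only; linarith))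

/-- one-sided estimate, `‖y‖ ≤ ‖x‖`. -/
lemma iap_aux_near {n : ℕ} (A : Set (EuclideanSpace ℝ (Fin n))) (e : EuclideanSpace ℝ (Fin n))
    (he : ‖e‖ = 1) (t R₀ R : ℝ) (ht : 0 < t) (hR : 1 ≤ R) (hR0 : R₀ ≤ R) (hR0t : R₀ ≤ t * R)
    (hA : ∀ x ∈ A, R₀ ≤ ‖x‖ → |⟪x, e⟫| ≤ t * ‖x‖) (φ : ℝ → ℝ) (h01 : ∀ r, 0 ≤ φ r ∧ φ r ≤ 1)
    (hφ : ∀ r s, |φ r - φ s| ≤ |r - s|) (x y : EuclideanSpace ℝ (Fin n)) (hx : x ∈ A) (hy : y ∈ A)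
    (hyx : ‖y‖ ≤ ‖x‖) :
    |‖(x + φ (Real.log (max ‖x‖ R)) • e) - (y + φ (Real.log (max ‖y‖ R)) • e)‖ - ‖x - y‖|
      ≤ 8 * t + 2 / R := by
  have hRpos : 0 < R := by linarith
  have hε : 0 ≤ 8 * t + 2 / R := by positivity
  set Δ := φ (Real.log (max ‖x‖ R)) - φ (Real.log (max ‖y‖ R)) with hΔ
  have hrw : (x + φ (Real.log (max ‖x‖ R)) • e) - (y + φ (Real.log (max ‖y‖ R)) • e)
      = (x - y) + Δ • e := by rw [hΔ, sub_smul]; abel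
  rw [hrw]
  rcases le_or_gt ‖x‖ R with hxR | hxR
  · have : Δ = 0 := by
      rw [hΔ, max_eq_right hxR, max_eq_right (hyx.trans hxR), sub_self]
    simpa [this] using hε
  rw [max_eq_left hxR.le] at hΔ
  set b := max ‖y‖ R with hb
  have hbpos : 0 < b := lt_of_lt_of_le hRpos (le_max_right _ _)
  have hxpos : 0 < ‖x‖ := by linarith
  have hbx : b ≤ ‖x‖ := max_le hyx hxR.le
  have hd : ‖x‖ - b ≤ ‖x - y‖ := by
    have := norm_sub_norm_le x y
    have := le_max_left ‖y‖ R
    linarith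
  have hΔ1 : |Δ| ≤ 1 := by
    rw [abs_le]
    constructor <;> linarith [h01 (Real.log ‖x‖), h01 (Real.log b)]
  have hΔ2 : |Δ| * ‖x‖ ≤ 2 * ‖x - y‖ := by
    rcases le_or_gt (2 * b) ‖x‖ with h | h
    · nlinarith
    · have h1 : |Δ| ≤ |Real.log ‖x‖ - Real.log b| := by rw [hΔ]; exact hφ _ _
      rw [← Real.log_div hxpos.ne' hbpos.ne', abs_of_nonneg
        (Real.log_nonneg ((one_le_div hbpos).2 hbx))] at h1
      have h2 := Real.log_le_sub_one_of_pos (div_pos hxpos hbpos)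
      have h3 : |Δ| * b ≤ ‖x‖ - b := by
        have : |Δ| ≤ ‖x‖ / b - 1 := h1.trans h2
        calc |Δ| * b ≤ (‖x‖ / b - 1) * b := by gcongr
          _ = ‖x‖ - b := by field_simp
      nlinarith [abs_nonneg Δ]
  have hh : |⟪x - y, e⟫| ≤ 2 * t * ‖x‖ := by
    have h1 := hA x hx (by linarith)
    have h2 : |⟪y, e⟫| ≤ t * ‖x‖ := by
      rcases le_or_gt R₀ ‖y‖ with h | h
      · exact (hA y hy h).trans (by gcongr)
      · have := abs_real_inner_le_norm y e
        rw [he, mul_one] at this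
        nlinarith
    rw [inner_sub_left]
    have := abs_sub (⟪x, e⟫) (⟪y, e⟫)
    linarith
  set d := ‖x - y‖ with hdd
  rcases (norm_nonneg (x - y)).eq_or_lt with h0 | hdpos
  · rw [← hdd] at h0
    have : |Δ| = 0 := by
      have := abs_nonneg Δ
      nlinarith
    have : Δ = 0 := abs_eq_zero.1 this
    rw [this, zero_smul, add_zero, ← hdd, sub_self, abs_zero]
    exact hε
  rw [← hdd] at hdpos
  set F := ‖(x - y) + Δ • e‖ with hF
  have hF0 : 0 ≤ F := norm_nonneg _
  have hsq : F ^ 2 = d ^ 2 + 2 * (Δ * ⟪x - y, e⟫) + Δ ^ 2 := by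
    rw [hF, norm_add_sq_real, real_inner_smul_right, norm_smul, he, mul_one, Real.norm_eq_abs,
      sq_abs]
  have hmul : |F - d| * (F + d) = |2 * (Δ * ⟪x - y, e⟫) + Δ ^ 2| := by
    rw [← abs_of_nonneg (by linarith : 0 ≤ F + d), ← abs_mul]
    congr 1
    linarith [hsq, abs_of_nonneg (by linarith : 0 ≤ F + d)]
  have hle : |2 * (Δ * ⟪x - y, e⟫) + Δ ^ 2| ≤ |Δ| * (4 * t * ‖x‖ + 1) := by
    have h1 := abs_add_le (2 * (Δ * ⟪x - y, e⟫)) (Δ ^ 2)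
    rw [abs_mul, abs_mul, abs_two, abs_pow] at h1
    nlinarith [abs_nonneg Δ, abs_nonneg (⟪x - y, e⟫ : ℝ), mul_le_mul_of_nonneg_left hh (abs_nonneg Δ)]
  have h4 : |F - d| * d ≤ |Δ| * (4 * t * ‖x‖ + 1) := by
    have : |F - d| * d ≤ |F - d| * (F + d) := by gcongr; linarith
    linarith
  have h5 : |Δ| * (4 * t * ‖x‖ + 1) ≤ (8 * t + 2 / R) * d := by
    have h6 : |Δ| ≤ 2 / R * d := by
      rw [div_mul_eq_mul_div, le_div_iff₀ hRpos]
      nlinarith [abs_nonneg Δ]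
    nlinarith
  exact le_of_mul_le_mul_right (h4.trans h5) hdpos

/-- If an unbounded set `A ⊆ ℝⁿ` has the `c`-IAP, then `μ(A) ≥ 1/(17c)`. -/
theorem iap_implies_mu {n : ℕ} (hn : 1 ≤ n) (A : Set (EuclideanSpace ℝ (Fin n)))
    (hA : ¬ IsBounded A) (c : ℝ) (hc : 0 < c) (hIAP : HasIAP c A) :
    1 / (17 * c) ≤ muDir A := by
  by_contra! hlt
  unfold muDir at hlt
  obtain ⟨_, ⟨e, he, rfl⟩, hs⟩ := exists_lt_of_csInf_lt (by
    exact ⟨_, EuclideanSpace.single (⟨0, hn⟩ : Fin n) (1 : ℝ), by simp, rfl⟩) hlt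
  obtain ⟨t, hst, htc⟩ := exists_between hs
  have ht : 0 < t := lt_of_le_of_lt (Real.sSup_nonneg (by
    rintro _ ⟨u, -, rfl⟩; exact abs_nonneg _)) hst
  obtain ⟨R₀, hR₀⟩ := iap_aux_dir A e he t hst
  have h17 : 17 * (c * t) < 1 := by
    rw [lt_div_iff₀ (by positivity)] at htc; linarith
  obtain ⟨x, hxA, hxinf, hxW⟩ := iap_aux_seq A hA
  obtain ⟨ψ, hψ, hψl⟩ := iap_aux_sparse (fun j => Real.log ‖x j‖)
    (Real.tendsto_log_atTop.comp hxinf)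
  obtain ⟨φ, h01, hφ, hφ0, hφ1⟩ := iap_aux_phi (fun j => Real.log ‖x (ψ j)‖) hψl
  have hct : 0 < c * t := by positivity
  set R := max (max 1 R₀) (max (R₀ / t) (8 / t)) with hRdef
  have hR1 : 1 ≤ R := (le_max_left _ _).trans (le_max_left _ _)
  have hR2 : R₀ ≤ R := (le_max_right _ _).trans (le_max_left _ _)
  have hR3 : R₀ ≤ t * R := by
    have : R₀ / t ≤ R := (le_max_left _ _).trans (le_max_right _ _)
    rw [div_le_iff₀ ht] at this; linarith
  have hR4 : 8 ≤ t * R := by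
    have : 8 / t ≤ R := (le_max_right _ _).trans (le_max_right _ _)
    rw [div_le_iff₀ ht] at this; linarith
  have hRpos : 0 < R := by linarith
  have hR5 : 2 / R ≤ t / 4 := by
    rw [div_le_iff₀ hRpos]; linarith
  let f : EuclideanSpace ℝ (Fin n) → EuclideanSpace ℝ (Fin n) :=
    fun x => x + φ (Real.log (max ‖x‖ R)) • e
  have hf : IsNearisometryOn f A (8 * t + 2 / R) := by
    intro a ha b hb
    rcases le_total ‖b‖ ‖a‖ with h | h
    · exact iap_aux_near A e he t R₀ R ht hR1 hR2 hR3 hR₀ φ h01 hφ a b ha hb h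
    · rw [norm_sub_rev (f a), norm_sub_rev a]
      exact iap_aux_near A e he t R₀ R ht hR1 hR2 hR3 hR₀ φ h01 hφ b a hb ha h
  obtain ⟨T, hT, hTf⟩ := hIAP _ (by positivity) f hf
  set ε := 8 * t + 2 / R with hε
  let L := hT.affineIsometryOfStrictConvexSpace.linearIsometry
  have hL : ∀ y, T y = L y + T 0 := by
    intro y
    have := hT.affineIsometryOfStrictConvexSpace.map_vadd 0 y
    simpa using this
  let w := ContinuousLinearMap.adjoint L.toContinuousLinearMap e - e
  have hw : ∀ y, ⟪w, y⟫ = ⟪e, L y - y⟫ := by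
    intro y
    simp only [w]
    rw [inner_sub_left, ContinuousLinearMap.adjoint_inner_left, inner_sub_right]
    rfl
  have hee : ⟪e, e⟫ = (1 : ℝ) := by rw [real_inner_self_eq_norm_sq, he]; norm_num
  have key : ∀ y ∈ A, |⟪w, y⟫ + ⟪e, T 0⟫ - φ (Real.log (max ‖y‖ R))| ≤ c * ε := by
    intro y hy
    have h1 : ⟪w, y⟫ + ⟪e, T 0⟫ - φ (Real.log (max ‖y‖ R)) = ⟪e, T y - f y⟫ := by
      rw [hw, hL y]
      simp only [f, inner_sub_right, inner_add_right, real_inner_smul_right, hee]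
      ring
    rw [h1]
    refine (abs_real_inner_le_norm _ _).trans ?_
    rw [he, one_mul]
    exact hTf y hy
  obtain ⟨l, hl⟩ := hxW w ⟨c * ε + |⟪e, T 0⟫| + 1, fun y hy => by
    have h1 := abs_le.1 (key y hy)
    have h2 := h01 (Real.log (max ‖y‖ R))
    have h3 := neg_abs_le (⟪e, T 0⟫ : ℝ)
    have h4 := le_abs_self (⟪e, T 0⟫ : ℝ)
    rw [abs_le]
    constructor <;> linarith [h1.1, h1.2, h2.1, h2.2]⟩
  have e1 : Tendsto (fun j : ℕ => ψ (2 * j)) atTop atTop :=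
    hψ.tendsto_atTop.comp (tendsto_atTop_mono (fun j => by simp only [id]; omega) tendsto_id)
  have e2 : Tendsto (fun j : ℕ => ψ (2 * j + 1)) atTop atTop :=
    hψ.tendsto_atTop.comp (tendsto_atTop_mono (fun j => by simp only [id]; omega) tendsto_id)
  have hη : Tendsto (fun j => ⟪w, x (ψ (2 * j + 1))⟫ - ⟪w, x (ψ (2 * j))⟫) atTop (nhds (l - l)) :=
    (hl.comp e2).sub (hl.comp e1)
  have hfin : ∀ᶠ j in atTop,
      1 - 2 * (c * ε) ≤ ⟪w, x (ψ (2 * j + 1))⟫ - ⟪w, x (ψ (2 * j))⟫ := by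
    filter_upwards [(hxinf.comp e1).eventually_ge_atTop R, (hxinf.comp e2).eventually_ge_atTop R]
      with j h1 h2
    simp only [Function.comp] at h1 h2
    have k1 := abs_le.1 (key _ (hxA (ψ (2 * j))))
    have k2 := abs_le.1 (key _ (hxA (ψ (2 * j + 1))))
    rw [max_eq_left h1, hφ0] at k1
    rw [max_eq_left h2, hφ1] at k2
    linarith [k1.1, k1.2, k2.1, k2.2]
  have := ge_of_tendsto hη hfin
  have hcε : c * ε ≤ c * (8 * t + t / 4) := by
    rw [hε]; gcongr
  nlinarith
end

section
/- Let n ≥ 1, let c′ > 0, and let A ⊆ ℝⁿ be an unbounded set with μ(A) ≥ 1/c′. Then A has the (√2·c′)-isometric approximation property: for every ε ≥ 0 and every ε-nearisometry f : A → ℝⁿ there is an isometry T : ℝⁿ → ℝⁿ with |T x − f x| ≤ √2·c′·ε for all x ∈ A. -/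
open Filter Metric Bornology RealInnerProductSpace

open Topology

lemma near_scaled_norm {E : Type*} [NormedAddCommGroup E] [InnerProductSpace ℝ E]
    (z : ℕ → E) (r : ℕ → ℝ) (w : E) (hr : Tendsto r atTop atTop)
    (hz : Tendsto (fun j => (r j)⁻¹ • z j) atTop (𝓝 w)) (a : E) :
    Tendsto (fun j => (r j)⁻¹ • (z j - a)) atTop (𝓝 w) := by
  have h1 : Tendsto (fun j => (r j)⁻¹ • a) atTop (𝓝 ((0:ℝ) • a)) :=
    (tendsto_inv_atTop_zero.comp hr).smul_const a
  have h2 := hz.sub h1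
  simp only [zero_smul, sub_zero] at h2
  refine h2.congr fun j => ?_
  rw [smul_sub]

lemma near_busemann {E : Type*} [NormedAddCommGroup E] [InnerProductSpace ℝ E]
    (z : ℕ → E) (r : ℕ → ℝ) (w : E) (hr : Tendsto r atTop atTop) (hw : ‖w‖ = 1)
    (hz : Tendsto (fun j => (r j)⁻¹ • z j) atTop (𝓝 w)) (a b : E) :
    Tendsto (fun j => ‖z j - a‖ - ‖z j - b‖) atTop (𝓝 ⟪b - a, w⟫) := by
  have ha := near_scaled_norm z r w hr hz a
  have hb := near_scaled_norm z r w hr hz b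
  have hnum := (tendsto_const_nhds (x := b - a)).inner (𝕜 := ℝ) (ha.add hb)
  have hden := ha.norm.add hb.norm
  have hq := hnum.div hden (by rw [hw]; norm_num)
  have e : ⟪b - a, w + w⟫ / (‖w‖ + ‖w‖) = ⟪b - a, w⟫ := by
    rw [hw, inner_add_right]; ring
  rw [e] at hq
  refine hq.congr' ?_
  have hpos : ∀ᶠ j in atTop, 0 < ‖(r j)⁻¹ • (z j - a)‖ + ‖(r j)⁻¹ • (z j - b)‖ :=
    hden.eventually (lt_mem_nhds (by rw [hw]; norm_num))
  filter_upwards [hpos, hr.eventually_gt_atTop 0] with j hj hrj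
  simp only [Pi.div_apply]
  rw [div_eq_iff hj.ne', norm_smul, norm_smul, ← smul_add, inner_smul_right]
  have hbn : ‖(r j)⁻¹‖ = (r j)⁻¹ := by
    rw [Real.norm_eq_abs, abs_of_pos (inv_pos.2 hrj)]
  rw [hbn]
  have key : ⟪b - a, (z j - a) + (z j - b)⟫ = ‖z j - a‖ ^ 2 - ‖z j - b‖ ^ 2 := by
    rw [← real_inner_self_eq_norm_sq, ← real_inner_self_eq_norm_sq]
    simp only [inner_sub_left, inner_sub_right, inner_add_right]
    rw [real_inner_comm (z j) a, real_inner_comm (z j) b, real_inner_comm a b]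
    ring
  rw [key]; ring

lemma near_jung {E : Type*} [NormedAddCommGroup E] [InnerProductSpace ℝ E] [FiniteDimensional ℝ E]
    (S : Set E) (d : ℝ) (hd : 0 ≤ d) (hS : ∀ x ∈ S, ∀ y ∈ S, ‖x - y‖ ≤ d) :
    ∃ p, ∀ x ∈ S, 2 * ‖x - p‖ ^ 2 ≤ d ^ 2 := by
  have : ProperSpace E := FiniteDimensional.proper ℝ E
  rcases S.eq_empty_or_nonempty with rfl | ⟨s0, hs0⟩
  · exact ⟨0, by simp⟩
  have hKd : ∀ x ∈ closure S, ∀ y ∈ closure S, ‖x - y‖ ≤ d := by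
    intro x hx y hy
    have h : (x, y) ∈ closure (S ×ˢ S) := by
      rw [closure_prod_eq]; exact ⟨hx, hy⟩
    have hc : IsClosed {q : E × E | ‖q.1 - q.2‖ ≤ d} :=
      isClosed_le (by fun_prop) continuous_const
    exact hc.closure_subset_iff.2 (fun q hq => hS _ hq.1 _ hq.2) h
  have hs0' := subset_closure hs0
  have hK : IsCompact (closure S) := by
    refine (isCompact_closedBall s0 d).of_isClosed_subset isClosed_closure ?_
    intro x hx
    rw [mem_closedBall, dist_eq_norm]
    exact hKd x hx s0 hs0'
  set K := closure S with hKdef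
  have hbdd : ∀ c, BddAbove ((fun x => ‖x - c‖) '' K) := fun c =>
    (hK.image (by fun_prop)).bddAbove
  let F : E → ℝ := fun c => sSup ((fun x => ‖x - c‖) '' K)
  have hF : Continuous F := hK.continuous_sSup (f := fun c x => ‖x - c‖) (by fun_prop)
  have hle : ∀ c, ∀ x ∈ K, ‖x - c‖ ≤ F c := fun c x hx => le_csSup (hbdd c) ⟨x, hx, rfl⟩
  have hatt : ∀ c, ∃ x ∈ K, F c = ‖x - c‖ := fun c =>
    hK.exists_sSup_image_eq ⟨s0, hs0'⟩ (by fun_prop)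
  obtain ⟨c, hcB, hc⟩ := (isCompact_closedBall s0 d).exists_isMinOn
    ⟨s0, mem_closedBall_self hd⟩ hF.continuousOn
  have hmin : ∀ c', F c ≤ F c' := by
    intro c'
    by_cases h : c' ∈ closedBall s0 d
    · exact hc h
    · have h1 : F c ≤ F s0 := hc (mem_closedBall_self hd)
      obtain ⟨x, hx, hx'⟩ := hatt s0
      have h2 := hKd x hx s0 hs0'
      rw [mem_closedBall, dist_comm, dist_eq_norm] at h
      have h3 := hle c' s0 hs0'
      linarith
  obtain ⟨s, hs, hsF⟩ := hatt c
  have hFn : 0 ≤ F c := by rw [hsF]; positivity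
  have main : 2 * F c ^ 2 ≤ d ^ 2 := by
    by_contra hcon
    push Not at hcon
    set R := F c with hR
    have hRp : 0 < R ^ 2 := by nlinarith
    obtain ⟨t, ht0, ht1, ht⟩ : ∃ t : ℝ, 0 < t ∧ t ≤ 1 ∧ t * R ^ 2 < 2 * R ^ 2 - d ^ 2 := by
      refine ⟨min 1 ((2 * R ^ 2 - d ^ 2) / (2 * R ^ 2)), ?_, min_le_left _ _, ?_⟩
      · refine lt_min one_pos (div_pos (by linarith) (by linarith))
      · have := min_le_right 1 ((2 * R ^ 2 - d ^ 2) / (2 * R ^ 2))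
        calc _ ≤ (2 * R ^ 2 - d ^ 2) / (2 * R ^ 2) * R ^ 2 := by gcongr
          _ = (2 * R ^ 2 - d ^ 2) / 2 := by
            have hR0 : R ≠ 0 := fun h => by simp [h] at hRp
            field_simp
          _ < _ := by linarith
    obtain ⟨x, hx, hxF⟩ := hatt (c + t • (s - c))
    have h1 := hmin (c + t • (s - c))
    rw [hxF] at h1
    have hxc := hle c x hx
    have hxs := hKd x hx s hs
    have hid : ‖x - (c + t • (s - c))‖ ^ 2
        = (1 - t) * ‖x - c‖ ^ 2 + t * ‖x - s‖ ^ 2 - t * (1 - t) * ‖s - c‖ ^ 2 := by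
      have e1 : x - (c + t • (s - c)) = (x - c) - t • (s - c) := by abel
      have e2 : x - s = (x - c) - (s - c) := by abel
      rw [e1, e2, norm_sub_sq_real, norm_sub_sq_real (x - c) (s - c), inner_smul_right, norm_smul,
        mul_pow, Real.norm_eq_abs, sq_abs]
      ring
    rw [← hsF] at hid
    have q1 : ‖x - c‖ ^ 2 ≤ R ^ 2 := by gcongr
    have q2 : ‖x - s‖ ^ 2 ≤ d ^ 2 := by gcongr
    have q3 : R ^ 2 ≤ ‖x - (c + t • (s - c))‖ ^ 2 := by gcongr
    have q4 := mul_le_mul_of_nonneg_left q1 (by linarith : 0 ≤ 1 - t)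
    have q5 := mul_le_mul_of_nonneg_left q2 ht0.le
    have q6 := mul_lt_mul_of_pos_left ht ht0
    nlinarith
  refine ⟨c, fun x hx => ?_⟩
  have := hle c x (subset_closure hx)
  have : ‖x - c‖ ^ 2 ≤ F c ^ 2 := by gcongr
  linarith

/-- Extending an inner-product-preserving map on a total set. -/
lemma near_extend {E : Type*} [NormedAddCommGroup E] [InnerProductSpace ℝ E]
    (X : Set E) (hX : Submodule.span ℝ X = ⊤) (φ : X → E)
    (hφ : ∀ u v : X, ⟪φ u, φ v⟫ = ⟪(u : E), (v : E)⟫) :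
    ∃ U : E →ₗᵢ[ℝ] E, ∀ u : X, U u = φ u := by
  let L1 : (X →₀ ℝ) →ₗ[ℝ] E := Finsupp.linearCombination ℝ (fun u : X => (u : E))
  let L2 : (X →₀ ℝ) →ₗ[ℝ] E := Finsupp.linearCombination ℝ φ
  have hn : ∀ x, ‖L2 x‖ = ‖L1 x‖ := by
    intro x
    have : ‖L2 x‖ ^ 2 = ‖L1 x‖ ^ 2 := by
      rw [← real_inner_self_eq_norm_sq, ← real_inner_self_eq_norm_sq]
      simp only [L1, L2, Finsupp.linearCombination_apply, Finsupp.sum, sum_inner, inner_sum,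
        inner_smul_left, inner_smul_right, hφ]
    exact (sq_eq_sq₀ (norm_nonneg _) (norm_nonneg _)).1 this
  have hs : LinearMap.range L1 = ⊤ := by
    simp only [L1]
    rw [Finsupp.range_linearCombination, Subtype.range_coe, hX]
  obtain ⟨g, hg⟩ := L1.exists_rightInverse_of_surjective hs
  have hg' : ∀ e, L1 (g e) = e := fun e => LinearMap.congr_fun hg e
  refine ⟨⟨L2 ∘ₗ g, fun e => by rw [LinearMap.comp_apply, hn, hg']⟩, fun u => ?_⟩
  change L2 (g u) = φ u
  have h1 : L1 (Finsupp.single u 1) = u := by simp [L1]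
  have h2 : L2 (Finsupp.single u 1) = φ u := by simp [L2]
  rw [← h2, ← sub_eq_zero, ← map_sub, ← norm_eq_zero, hn, map_sub, hg', h1, sub_self, norm_zero]

lemma near_mu {E : Type*} [NormedAddCommGroup E] [InnerProductSpace ℝ E]
    (A : Set E) (c' : ℝ) (hc' : 0 < c') (hmu : 1 / c' ≤ muDir A) (K : ℝ) (hK : 0 ≤ K) (w : E)
    (hw : ∀ u, IsClusterDirection A u → |⟪u, w⟫| ≤ K) : ‖w‖ ≤ c' * K := by
  by_cases h0 : w = 0
  · rw [h0, norm_zero]; positivity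
  have hp : 0 < ‖w‖ := norm_pos_iff.2 h0
  have h1 : muDir A ≤ sSup {t | ∃ u, IsClusterDirection A u ∧ t = abs ⟪u, ‖w‖⁻¹ • w⟫} := by
    refine csInf_le ⟨0, ?_⟩ ⟨‖w‖⁻¹ • w, ?_, rfl⟩
    · rintro s ⟨e, -, rfl⟩
      refine Real.sSup_nonneg ?_
      rintro t ⟨u, -, rfl⟩
      exact abs_nonneg _
    · rw [norm_smul, norm_inv, norm_norm, inv_mul_cancel₀ hp.ne']
  have h2 : sSup {t | ∃ u, IsClusterDirection A u ∧ t = abs ⟪u, ‖w‖⁻¹ • w⟫} ≤ K / ‖w‖ := by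
    refine Real.sSup_le ?_ (by positivity)
    rintro t ⟨u, hu, rfl⟩
    rw [inner_smul_right, abs_mul, abs_of_pos (inv_pos.2 hp), div_eq_inv_mul]
    have := hw u hu
    gcongr
  have h3 := (hmu.trans h1).trans h2
  rw [div_le_div_iff₀ hc' hp] at h3
  linarith

/-- Data attached to a cluster direction. -/
lemma near_dir {E : Type*} [NormedAddCommGroup E] [InnerProductSpace ℝ E] [FiniteDimensional ℝ E]
    (A : Set E) (ε : ℝ) (f : E → E) (hf : IsNearisometryOn f A ε)
    (u : E) (hu : IsClusterDirection A u) :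
    ∃ (w : E) (x : ℕ → E), (∀ j, x j ∈ A) ∧ Tendsto (fun j => ‖x j‖) atTop atTop ∧
      Tendsto (fun j => ‖x j‖⁻¹ • x j) atTop (𝓝 u) ∧
      Tendsto (fun j => ‖x j‖⁻¹ • f (x j)) atTop (𝓝 w) ∧ ‖u‖ = 1 ∧ ‖w‖ = 1 := by
  have : ProperSpace E := FiniteDimensional.proper ℝ E
  obtain ⟨x, hxA, hxn, hxu⟩ := hu
  have hu1 : ‖u‖ = 1 := by
    refine tendsto_nhds_unique hxu.norm ?_
    refine tendsto_const_nhds.congr' ?_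
    filter_upwards [hxn.eventually_gt_atTop 0] with j hj
    rw [norm_smul, norm_inv, norm_norm, inv_mul_cancel₀ hj.ne']
  have hdiff : Tendsto (fun j => ‖‖x j‖⁻¹ • (f (x j) - f (x 0))‖ - ‖‖x j‖⁻¹ • (x j - x 0)‖)
      atTop (𝓝 0) := by
    have h0 : Tendsto (fun j => ‖x j‖⁻¹ * ε) atTop (𝓝 (0 * ε)) :=
      (tendsto_inv_atTop_zero.comp hxn).mul_const ε
    rw [zero_mul] at h0
    refine squeeze_zero_norm (fun j => ?_) h0
    rw [norm_smul, norm_smul, norm_inv, norm_norm, ← mul_sub, Real.norm_eq_abs, abs_mul,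
      abs_of_nonneg (inv_nonneg.2 (norm_nonneg (x j)))]
    have := hf _ (hxA j) _ (hxA 0)
    gcongr
  have hx1 := (near_scaled_norm x _ u hxn hxu (x 0)).norm
  have hy1 := hdiff.add hx1
  simp only [sub_add_cancel, zero_add, hu1] at hy1
  obtain ⟨C, hC⟩ := hy1.bddAbove_range
  have hmem : ∀ j, ‖x j‖⁻¹ • (f (x j) - f (x 0)) ∈ closedBall (0 : E) C := fun j => by
    rw [mem_closedBall_zero_iff]; exact hC ⟨j, rfl⟩
  obtain ⟨w, -, ψ, hψ, hw⟩ := (isCompact_closedBall (0 : E) C).tendsto_subseq hmem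
  have hψt := hψ.tendsto_atTop
  refine ⟨w, x ∘ ψ, fun j => hxA _, hxn.comp hψt, hxu.comp hψt, ?_, hu1, ?_⟩
  · have := near_scaled_norm (fun j => f (x (ψ j)) - f (x 0)) (fun j => ‖x (ψ j)‖) w
      (hxn.comp hψt) hw (- f (x 0))
    simpa using this
  · exact tendsto_nhds_unique hw.norm (hy1.comp hψt)

lemma near_pair {E : Type*} [NormedAddCommGroup E] [InnerProductSpace ℝ E]
    (A : Set E) (ε : ℝ) (f : E → E) (hf : IsNearisometryOn f A ε)
    (u w : E) (x : ℕ → E) (hxA : ∀ j, x j ∈ A) (hxn : Tendsto (fun j => ‖x j‖) atTop atTop)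
    (hxu : Tendsto (fun j => ‖x j‖⁻¹ • x j) atTop (𝓝 u))
    (hxw : Tendsto (fun j => ‖x j‖⁻¹ • f (x j)) atTop (𝓝 w)) (hu : ‖u‖ = 1) (hw : ‖w‖ = 1)
    (y y' : E) (hy : y ∈ A) (hy' : y' ∈ A) :
    |⟪f y - f y', w⟫ - ⟪y - y', u⟫| ≤ 2 * ε := by
  have h1 := near_busemann (fun j => f (x j)) _ w hxn hw hxw (f y') (f y)
  have h2 := near_busemann x _ u hxn hu hxu y' y
  refine le_of_tendsto (h1.sub h2).abs (Eventually.of_forall fun j => ?_)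
  have a1 := abs_le.1 (hf _ (hxA j) _ hy)
  have a2 := abs_le.1 (hf _ (hxA j) _ hy')
  rw [abs_le]
  constructor <;> linarith [a1.1, a1.2, a2.1, a2.2]

lemma near_inner {E : Type*} [NormedAddCommGroup E] [InnerProductSpace ℝ E]
    (A : Set E) (ε : ℝ) (f : E → E) (u w v z : E)
    (h : ∀ y ∈ A, ∀ y' ∈ A, |⟪f y - f y', w⟫ - ⟪y - y', u⟫| ≤ 2 * ε)
    (x : ℕ → E) (hxA : ∀ j, x j ∈ A) (hxn : Tendsto (fun j => ‖x j‖) atTop atTop)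
    (hxv : Tendsto (fun j => ‖x j‖⁻¹ • x j) atTop (𝓝 v))
    (hxz : Tendsto (fun j => ‖x j‖⁻¹ • f (x j)) atTop (𝓝 z)) :
    ⟪z, w⟫ = ⟪v, u⟫ := by
  have h1 := near_scaled_norm x _ v hxn hxv (x 0)
  have h2 := near_scaled_norm (fun j => f (x j)) _ z hxn hxz (f (x 0))
  have h3 := (h2.inner (𝕜 := ℝ) (tendsto_const_nhds (x := w))).sub
    (h1.inner (𝕜 := ℝ) (tendsto_const_nhds (x := u)))
  have h0 : Tendsto (fun j => ‖x j‖⁻¹ * (2 * ε)) atTop (𝓝 (0 * (2 * ε))) :=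
    (tendsto_inv_atTop_zero.comp hxn).mul_const _
  rw [zero_mul] at h0
  refine sub_eq_zero.1 (tendsto_nhds_unique h3 (squeeze_zero_norm (fun j => ?_) h0))
  rw [real_inner_smul_left, real_inner_smul_left, ← mul_sub, Real.norm_eq_abs, abs_mul,
      abs_of_nonneg (inv_nonneg.2 (norm_nonneg (x j)))]
  have := h _ (hxA j) _ (hxA 0)
  gcongr

theorem mu_implies_iap {n : ℕ} (hn : 1 ≤ n) (c' : ℝ) (hc' : 0 < c')
    (A : Set (EuclideanSpace ℝ (Fin n))) (hA : ¬ IsBounded A) (hmu : 1 / c' ≤ muDir A) :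
    ∀ ε : ℝ, 0 ≤ ε → ∀ f : EuclideanSpace ℝ (Fin n) → EuclideanSpace ℝ (Fin n),
      IsNearisometryOn f A ε →
      ∃ T : EuclideanSpace ℝ (Fin n) → EuclideanSpace ℝ (Fin n),
        Isometry T ∧ ∀ x ∈ A, ‖T x - f x‖ ≤ Real.sqrt 2 * c' * ε := by
  intro ε hε f hf
  let X : Set (EuclideanSpace ℝ (Fin n)) := {u | IsClusterDirection A u}
  have hdat := fun u : X => near_dir A ε f hf u.1 u.2
  choose φ x hxA hxn hxu hxw hu1 hw1 using hdat
  have hpair : ∀ u : X, ∀ y ∈ A, ∀ y' ∈ A, |⟪f y - f y', φ u⟫ - ⟪y - y', (u : _)⟫| ≤ 2 * ε :=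
    fun u y hy y' hy' => near_pair A ε f hf u (φ u) (x u) (hxA u) (hxn u) (hxu u) (hxw u)
      (hu1 u) (hw1 u) y y' hy hy'
  have hin : ∀ u v : X, ⟪φ u, φ v⟫ = ⟪(u : EuclideanSpace ℝ (Fin n)), (v : _)⟫ := fun u v =>
    near_inner A ε f v (φ v) u (φ u) (hpair v) (x u) (hxA u) (hxn u) (hxu u) (hxw u)
  have hspan : Submodule.span ℝ X = ⊤ := by
    rw [← Submodule.orthogonal_eq_bot_iff, Submodule.eq_bot_iff]
    intro w hw
    have := near_mu A c' hc' hmu 0 le_rfl w (fun u hu => by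
      rw [(Submodule.mem_orthogonal _ _).1 hw u (Submodule.subset_span hu), abs_zero])
    rw [mul_zero] at this
    exact norm_le_zero_iff.1 this
  obtain ⟨U0, hU0⟩ := near_extend X hspan φ hin
  let U := U0.toLinearIsometryEquiv rfl
  have hU : ∀ u : X, U u = φ u := hU0
  have hS : ∀ a ∈ (fun y => U.symm (f y) - y) '' A, ∀ b ∈ (fun y => U.symm (f y) - y) '' A,
      ‖a - b‖ ≤ c' * (2 * ε) := by
    rintro _ ⟨y, hy, rfl⟩ _ ⟨y', hy', rfl⟩
    refine near_mu A c' hc' hmu _ (by positivity) _ (fun u hu => ?_)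
    have h := hpair ⟨u, hu⟩ y hy y' hy'
    rw [← hU] at h
    have e : ⟪f y - f y', U u⟫ = ⟪U.symm (f y) - U.symm (f y'), u⟫ := by
      rw [← U.inner_map_map (_ - _) u, map_sub, U.apply_symm_apply, U.apply_symm_apply]
    rw [e, ← inner_sub_left] at h
    rw [real_inner_comm]
    have e3 : U.symm (f y) - y - (U.symm (f y') - y')
        = U.symm (f y) - U.symm (f y') - (y - y') := sub_sub_sub_comm _ _ _ _
    simp only [e3]
    exact h
  obtain ⟨p, hp⟩ := near_jung _ _ (by positivity) hS
  refine ⟨fun y => U (y + p), U.isometry.comp (isometry_add_right p), fun y hy => ?_⟩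
  have h := hp _ ⟨y, hy, rfl⟩
  have e : U (y + p) - f y = U (y + p - U.symm (f y)) := by
    rw [map_sub U (y + p), U.apply_symm_apply]
  have e2 : y + p - U.symm (f y) = -(U.symm (f y) - y - p) := by abel
  rw [e, U.norm_map, e2, norm_neg]
  refine abs_le_of_sq_le_sq' ?_ (by positivity) |>.2
  rw [mul_pow, mul_pow, Real.sq_sqrt (by norm_num)]
  simp only at h
  nlinarith
end

section
/- Let E be a real Hilbert space and let A ⊆ E be unbounded. Then τ(A) = sin φ(A) and μ(A) ≤ cos φ(A). Moreover, if E = ℝⁿ is finite-dimensional, then μ(A) = cos φ(A) = √(1 − τ(A)²). -/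
open Filter Metric Bornology RealInnerProductSpace

/-- The open double cone `D(e, α) = {x : |x ⬝ e| > |x| cos α}`. -/
def doubleCone {E : Type*} [NormedAddCommGroup E] [InnerProductSpace ℝ E]
    (e : E) (α : ℝ) : Set E :=
  {x | ‖x‖ * Real.cos α < abs ⟪x, e⟫}

/-- `φ(A) = sup {α ∈ [0, π/2] : A ∩ D(e, α) is bounded for some unit vector e}`. -/
noncomputable def phiDir {E : Type*} [NormedAddCommGroup E] [InnerProductSpace ℝ E]
    (A : Set E) : ℝ :=
  sSup {α | α ∈ Set.Icc 0 (Real.pi / 2) ∧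
    ∃ e : E, ‖e‖ = 1 ∧ Bornology.IsBounded (A ∩ doubleCone e α)}

/-- `τ(A) = sup_{|e|=1} liminf_{|t|→∞} dist(t e, A)/|t|`. -/
noncomputable def tauDir {E : Type*} [NormedAddCommGroup E] [NormedSpace ℝ E]
    (A : Set E) : ℝ :=
  sSup {s | ∃ e : E, ‖e‖ = 1 ∧
    s = Filter.liminf (fun t : ℝ => Metric.infDist (t • e) A / |t|) (Filter.cocompact ℝ)}

section helpers

variable {E : Type*} [NormedAddCommGroup E] [InnerProductSpace ℝ E]

lemma aux_eventually {P : ℝ → Prop} :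
    (∀ᶠ t in Filter.cocompact ℝ, P t) ↔ ∃ T : ℝ, ∀ t : ℝ, T ≤ |t| → P t := by
  rw [← Metric.cobounded_eq_cocompact, ← comap_norm_atTop (E := ℝ), Filter.eventually_comap, Filter.eventually_atTop]
  constructor
  · rintro ⟨T, h⟩
    exact ⟨T, fun t ht => h |t| ht t rfl⟩
  · rintro ⟨T, h⟩
    refine ⟨T, fun b hb t ht => h t ?_⟩
    rw [← Real.norm_eq_abs, ht]
    exact hb

lemma aux_bddBelow (A : Set E) (e : E) :
    Filter.IsBoundedUnder (· ≥ ·) (Filter.cocompact ℝ)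
      (fun t : ℝ => Metric.infDist (t • e) A / |t|) :=
  Filter.isBoundedUnder_of ⟨0, fun t => div_nonneg Metric.infDist_nonneg (abs_nonneg t)⟩

lemma aux_ratio_le {A : Set E} (hA : A.Nonempty) {e : E} (he : ‖e‖ = 1) {c : ℝ} (hc : 1 < c) :
    ∀ᶠ t in Filter.cocompact ℝ, Metric.infDist (t • e) A / |t| ≤ c := by
  obtain ⟨a, ha⟩ := hA
  rw [aux_eventually]
  refine ⟨max 1 (‖a‖ / (c - 1)), fun t ht => ?_⟩
  have h1 : 1 ≤ |t| := le_trans (le_max_left _ _) ht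
  have h2 : ‖a‖ / (c - 1) ≤ |t| := le_trans (le_max_right _ _) ht
  rw [div_le_iff₀ (by linarith)] at h2 ⊢
  have h3 : Metric.infDist (t • e) A ≤ dist (t • e) a := Metric.infDist_le_dist_of_mem ha
  have h4 : dist (t • e) a ≤ ‖t • e‖ + ‖a‖ := by
    rw [dist_eq_norm]; exact norm_sub_le _ _
  rw [norm_smul, he, Real.norm_eq_abs] at h4
  nlinarith

lemma aux_cobdd {A : Set E} (hA : A.Nonempty) {e : E} (he : ‖e‖ = 1) :
    Filter.IsCoboundedUnder (· ≥ ·) (Filter.cocompact ℝ)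
      (fun t : ℝ => Metric.infDist (t • e) A / |t|) := by
  have h : Filter.IsBoundedUnder (· ≤ ·) (Filter.cocompact ℝ)
      (fun t : ℝ => Metric.infDist (t • e) A / |t|) := ⟨2, aux_ratio_le hA he (by norm_num)⟩
  exact h.isCoboundedUnder_ge

lemma aux_liminf_le_one {A : Set E} (hA : A.Nonempty) {e : E} (he : ‖e‖ = 1) :
    Filter.liminf (fun t : ℝ => Metric.infDist (t • e) A / |t|) (Filter.cocompact ℝ) ≤ 1 := by
  refine le_of_forall_gt_imp_ge_of_dense fun c hc => ?_
  exact Filter.liminf_le_of_frequently_le (aux_ratio_le hA he hc).frequently (aux_bddBelow A e)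

lemma aux_normsq (x e : E) (he : ‖e‖ = 1) (t : ℝ) :
    ‖t • e - x‖ ^ 2 = t ^ 2 - 2 * t * ⟪x, e⟫ + ‖x‖ ^ 2 := by
  rw [norm_sub_sq_real, norm_smul, he, inner_smul_left, real_inner_comm]
  simp
  ring

lemma aux_sin_le {A : Set E} (hA : A.Nonempty) {e : E} (he : ‖e‖ = 1) {α : ℝ}
    (hα : α ∈ Set.Icc 0 (Real.pi / 2)) (hb : IsBounded (A ∩ doubleCone e α)) :
    Real.sin α ≤
      Filter.liminf (fun t : ℝ => Metric.infDist (t • e) A / |t|) (Filter.cocompact ℝ) := by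
  obtain ⟨R, hR⟩ := hb.exists_norm_le
  refine le_of_forall_lt_imp_le_of_dense fun c hc => ?_
  refine Filter.le_liminf_of_le (aux_cobdd hA he) ?_
  have hc1 : c < 1 := lt_of_lt_of_le hc (Real.sin_le_one α)
  have hs : 0 ≤ Real.sin α := Real.sin_nonneg_of_nonneg_of_le_pi hα.1 (by linarith [hα.2, Real.pi_pos])
  rw [aux_eventually]
  refine ⟨max 1 (R / (1 - c)), fun t ht => ?_⟩
  have h1 : 1 ≤ |t| := le_trans (le_max_left _ _) ht
  have h2 : R / (1 - c) ≤ |t| := le_trans (le_max_right _ _) ht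
  rw [div_le_iff₀ (by linarith)] at h2
  rw [le_div_iff₀ (by linarith)]
  rw [Metric.le_infDist hA]
  intro x hx
  rw [dist_eq_norm]
  by_cases hxD : x ∈ doubleCone e α
  · have h3 := hR x ⟨hx, hxD⟩
    have h4 := norm_sub_norm_le (t • e) x
    rw [norm_smul, he, Real.norm_eq_abs] at h4
    linarith
  · have h3 : |⟪x, e⟫| ≤ ‖x‖ * Real.cos α := not_lt.mp hxD
    have h4 : |t| * Real.sin α ≤ ‖t • e - x‖ := by
      refine le_of_sq_le_sq ?_ (norm_nonneg _)
      rw [aux_normsq x e he t]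
      have h5 : t * ⟪x, e⟫ ≤ |t| * (‖x‖ * Real.cos α) := by
        calc t * ⟪x, e⟫ ≤ |t * ⟪x, e⟫| := le_abs_self _
          _ = |t| * |⟪x, e⟫| := abs_mul _ _
          _ ≤ _ := by gcongr
      have h6 := Real.sin_sq_add_cos_sq α
      have h7 : Real.sin α ^ 2 = 1 - Real.cos α ^ 2 := by linarith
      have h8 := sq_abs t
      rw [mul_pow, h7, ← h8]
      nlinarith [sq_nonneg (‖x‖ - |t| * Real.cos α)]
    nlinarith

lemma aux_bounded {A : Set E} {e : E} (he : ‖e‖ = 1) {β : ℝ}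
    (hβ : β ∈ Set.Icc 0 (Real.pi / 2))
    (h : Real.sin β <
      Filter.liminf (fun t : ℝ => Metric.infDist (t • e) A / |t|) (Filter.cocompact ℝ)) :
    IsBounded (A ∩ doubleCone e β) := by
  have hev := Filter.eventually_lt_of_lt_liminf h (aux_bddBelow A e)
  rw [aux_eventually] at hev
  obtain ⟨T, hT⟩ := hev
  have hs : 0 ≤ Real.sin β := Real.sin_nonneg_of_nonneg_of_le_pi hβ.1 (by linarith [hβ.2, Real.pi_pos])
  have hcos : 0 ≤ Real.cos β := Real.cos_nonneg_of_mem_Icc ⟨by linarith [hβ.1, Real.pi_pos], hβ.2⟩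
  rw [isBounded_iff_forall_norm_le]
  refine ⟨T, ?_⟩
  rintro x ⟨hx, hxD⟩
  have hxD : ‖x‖ * Real.cos β < |⟪x, e⟫| := hxD
  by_contra! hTx
  have hip : 0 < |⟪x, e⟫| := lt_of_le_of_lt (by positivity) hxD
  have hle : |⟪x, e⟫| ≤ ‖x‖ := by
    have := abs_real_inner_le_norm x e
    rwa [he, mul_one] at this
  have hxpos : 0 < ‖x‖ := lt_of_lt_of_le hip hle
  set t : ℝ := ‖x‖ ^ 2 / ⟪x, e⟫ with ht
  have hne : ⟪x, e⟫ ≠ 0 := abs_pos.mp hip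
  have hti : t * ⟪x, e⟫ = ‖x‖ ^ 2 := by rw [ht]; field_simp
  have htabs : |t| * |⟪x, e⟫| = ‖x‖ ^ 2 := by rw [← abs_mul, hti, abs_of_nonneg (by positivity)]
  have htx : ‖x‖ ≤ |t| := by
    by_contra! hlt
    nlinarith [abs_nonneg t]
  have htpos : 0 < |t| := lt_of_lt_of_le hxpos htx
  have h1 := hT t (by linarith)
  rw [lt_div_iff₀ htpos] at h1
  have h2 : Metric.infDist (t • e) A ≤ ‖t • e - x‖ := by
    rw [← dist_eq_norm]; exact Metric.infDist_le_dist_of_mem hx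
  have h3 : Real.sin β * |t| < ‖t • e - x‖ := lt_of_lt_of_le h1 h2
  have h4 : (Real.sin β * |t|) ^ 2 < ‖t • e - x‖ ^ 2 := by gcongr
  rw [aux_normsq x e he t, mul_pow, sq_abs] at h4
  have h5 : |t| * Real.cos β < ‖x‖ := by
    have : |t| * (‖x‖ * Real.cos β) < |t| * |⟪x, e⟫| := by gcongr
    rw [htabs] at this
    nlinarith
  have h6 : (|t| * Real.cos β) ^ 2 < ‖x‖ ^ 2 := by gcongr
  rw [mul_pow, sq_abs] at h6
  nlinarith [Real.sin_sq_add_cos_sq β]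

lemma aux_cluster_le {A : Set E} {e : E} {α : ℝ}
    (hb : IsBounded (A ∩ doubleCone e α)) {u : E} (hu : IsClusterDirection A u) :
    |⟪u, e⟫| ≤ Real.cos α := by
  obtain ⟨R, hR⟩ := hb.exists_norm_le
  obtain ⟨x, hxA, hxn, hxu⟩ := hu
  have hlim : Tendsto (fun j => |⟪‖x j‖⁻¹ • x j, e⟫|) atTop (nhds |⟪u, e⟫|) :=
    (hxu.inner tendsto_const_nhds).abs
  refine le_of_tendsto hlim ?_
  filter_upwards [hxn.eventually_gt_atTop (max R 0)] with j hj
  have h0 : 0 < ‖x j‖ := lt_of_le_of_lt (le_max_right _ _) hj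
  have hR' : R < ‖x j‖ := lt_of_le_of_lt (le_max_left _ _) hj
  have hnot : x j ∉ doubleCone e α := fun hD => absurd (hR _ ⟨hxA j, hD⟩) (not_le.mpr hR')
  have h3 : |⟪x j, e⟫| ≤ ‖x j‖ * Real.cos α := not_lt.mp hnot
  rw [real_inner_smul_left, abs_mul, abs_of_pos (inv_pos.mpr h0), inv_mul_le_iff₀ h0]
  exact h3

lemma aux_exists_cluster [FiniteDimensional ℝ E] {A : Set E} {e : E} {β : ℝ}
    (hb : ¬ IsBounded (A ∩ doubleCone e β)) :
    ∃ u, IsClusterDirection A u ∧ Real.cos β ≤ |⟪u, e⟫| := by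
  have hex : ∀ n : ℕ, ∃ x ∈ A ∩ doubleCone e β, (n : ℝ) < ‖x‖ := by
    intro n
    by_contra! hcon
    exact hb (isBounded_iff_forall_norm_le.mpr ⟨n, hcon⟩)
  choose x hx hn using hex
  have hpos : ∀ n, 0 < ‖x n‖ := fun n => lt_of_le_of_lt (Nat.cast_nonneg n) (hn n)
  have hsph : ∀ n, ‖x n‖⁻¹ • x n ∈ Metric.sphere (0 : E) 1 := by
    intro n
    rw [mem_sphere_zero_iff_norm, norm_smul, norm_inv, norm_norm, inv_mul_cancel₀ (hpos n).ne']
  have : ProperSpace E := FiniteDimensional.proper ℝ E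
  obtain ⟨u, -, f, hf, hlim⟩ := (isCompact_sphere (0 : E) 1).tendsto_subseq hsph
  have hxn : Tendsto (fun n => ‖x n‖) atTop atTop :=
    tendsto_atTop_mono (fun n => (hn n).le) tendsto_natCast_atTop_atTop
  refine ⟨u, ⟨fun j => x (f j), fun j => (hx _).1, hxn.comp hf.tendsto_atTop, hlim⟩, ?_⟩
  have hlim2 : Tendsto (fun j => |⟪‖x (f j)‖⁻¹ • x (f j), e⟫|) atTop (nhds |⟪u, e⟫|) :=
    (Tendsto.inner hlim tendsto_const_nhds).abs
  refine ge_of_tendsto' hlim2 fun j => ?_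
  have h3 : ‖x (f j)‖ * Real.cos β < |⟪x (f j), e⟫| := (hx (f j)).2
  rw [real_inner_smul_left, abs_mul, abs_of_pos (inv_pos.mpr (hpos _)), le_inv_mul_iff₀ (hpos _)]
  exact h3.le

lemma aux_cluster_le_one {A : Set E} {e : E} (he : ‖e‖ = 1) {u : E}
    (hu : IsClusterDirection A u) : |⟪u, e⟫| ≤ 1 := by
  have h : IsBounded (A ∩ doubleCone e 0) := by
    have : doubleCone e 0 = ∅ := by
      ext x
      simp only [doubleCone, Real.cos_zero, mul_one, Set.mem_setOf_eq, Set.mem_empty_iff_false,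
        iff_false, not_lt]
      have := abs_real_inner_le_norm x e
      rwa [he, mul_one] at this
    simp [this]
  simpa using aux_cluster_le h hu

end helpers

/-- For an unbounded subset `A` of a real Hilbert space `E`, `τ(A) = sin φ(A)` and
`μ(A) ≤ cos φ(A)`; if moreover `E` is finite-dimensional, then
`μ(A) = cos φ(A) = √(1 - τ(A)²)`. -/
theorem tau_phi_mu {E : Type*} [NormedAddCommGroup E] [InnerProductSpace ℝ E]
    [CompleteSpace E] [Nontrivial E] (A : Set E) (hA : ¬ IsBounded A) :
    tauDir A = Real.sin (phiDir A) ∧ muDir A ≤ Real.cos (phiDir A) ∧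
      (FiniteDimensional ℝ E →
        muDir A = Real.cos (phiDir A) ∧
        Real.cos (phiDir A) = Real.sqrt (1 - tauDir A ^ 2)) := by
  classical
  have hne : A.Nonempty := by
    rw [Set.nonempty_iff_ne_empty]
    rintro rfl
    exact hA isBounded_empty
  obtain ⟨e₀, he₀⟩ := exists_norm_eq E (zero_le_one (α := ℝ))
  have hpi := Real.pi_pos
  set S : Set ℝ := {α | α ∈ Set.Icc 0 (Real.pi / 2) ∧
    ∃ e : E, ‖e‖ = 1 ∧ Bornology.IsBounded (A ∩ doubleCone e α)} with hS
  have h0S : (0 : ℝ) ∈ S := by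
    refine ⟨⟨le_rfl, by positivity⟩, e₀, he₀, ?_⟩
    have : doubleCone e₀ 0 = ∅ := by
      ext x
      simp only [doubleCone, Real.cos_zero, mul_one, Set.mem_setOf_eq, Set.mem_empty_iff_false,
        iff_false, not_lt]
      have := abs_real_inner_le_norm x e₀
      rwa [he₀, mul_one] at this
    simp [this]
  have hSb : BddAbove S := ⟨Real.pi / 2, fun α hα => hα.1.2⟩
  have hφ : phiDir A = sSup S := rfl
  have hle : ∀ α ∈ S, α ≤ phiDir A := fun α hα => le_csSup hSb hα
  have hφ0 : 0 ≤ phiDir A := hle 0 h0S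
  have hφ1 : phiDir A ≤ Real.pi / 2 := csSup_le ⟨0, h0S⟩ fun α hα => hα.1.2
  have hcosφ : 0 ≤ Real.cos (phiDir A) := Real.cos_nonneg_of_mem_Icc ⟨by linarith, hφ1⟩
  have hsinφ : 0 ≤ Real.sin (phiDir A) := Real.sin_nonneg_of_nonneg_of_le_pi hφ0 (by linarith)
  -- tau
  set L : E → ℝ := fun e =>
    Filter.liminf (fun t : ℝ => Metric.infDist (t • e) A / |t|) (Filter.cocompact ℝ) with hL
  have hτb : BddAbove {s | ∃ e : E, ‖e‖ = 1 ∧ s = L e} := by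
    refine ⟨1, ?_⟩
    rintro _ ⟨e, he, rfl⟩
    exact aux_liminf_le_one hne he
  have hτle : ∀ e : E, ‖e‖ = 1 → L e ≤ tauDir A := fun e he => le_csSup hτb ⟨e, he, rfl⟩
  have hτ1 : tauDir A ≤ 1 := by
    refine csSup_le ⟨_, e₀, he₀, rfl⟩ ?_
    rintro _ ⟨e, he, rfl⟩
    exact aux_liminf_le_one hne he
  have hSτ : ∀ α ∈ S, Real.sin α ≤ tauDir A := by
    rintro α ⟨hα, e, he, hb⟩
    exact (aux_sin_le hne he hα hb).trans (hτle e he)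
  have hτ0 : 0 ≤ tauDir A := by simpa using hSτ 0 h0S
  have hτ : tauDir A = Real.sin (phiDir A) := by
    apply le_antisymm
    · refine csSup_le ⟨_, e₀, he₀, rfl⟩ ?_
      rintro _ ⟨e, he, rfl⟩
      by_contra! hlt
      obtain ⟨s, hs1, hs2⟩ := exists_between hlt
      have hs3 : s ≤ 1 := hs2.le.trans (aux_liminf_le_one hne he)
      have hsin : Real.sin (Real.arcsin s) = s := Real.sin_arcsin (by linarith) hs3
      have hmem : Real.arcsin s ∈ Set.Icc 0 (Real.pi / 2) :=
        ⟨Real.arcsin_nonneg.mpr (by linarith), Real.arcsin_le_pi_div_two s⟩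
      have hin : Real.arcsin s ∈ S :=
        ⟨hmem, e, he, aux_bounded he hmem (by rw [hsin]; exact hs2)⟩
      have h1 := Real.sin_le_sin_of_le_of_le_pi_div_two (by linarith [hmem.1]) hφ1 (hle _ hin)
      linarith
    · have h1 : phiDir A ≤ Real.arcsin (tauDir A) := by
        refine csSup_le ⟨0, h0S⟩ fun α hα => ?_
        rw [← Real.arcsin_sin (by linarith [hα.1.1]) hα.1.2]
        exact Real.monotone_arcsin (hSτ α hα)
      have h2 := Real.sin_le_sin_of_le_of_le_pi_div_two (by linarith)
        (Real.arcsin_le_pi_div_two _) h1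
      rwa [Real.sin_arcsin (by linarith) hτ1] at h2
  -- mu
  set M : E → ℝ := fun e => sSup {t | ∃ u, IsClusterDirection A u ∧ t = abs ⟪u, e⟫} with hM
  have hM0 : ∀ e, 0 ≤ M e := by
    intro e
    apply Real.sSup_nonneg
    rintro _ ⟨u, -, rfl⟩
    exact abs_nonneg _
  have hMb : BddBelow {s | ∃ e : E, ‖e‖ = 1 ∧ s = M e} := by
    refine ⟨0, ?_⟩
    rintro _ ⟨e, -, rfl⟩
    exact hM0 e
  have hμS : ∀ α ∈ S, muDir A ≤ Real.cos α := by
    rintro α ⟨hα, e, he, hb⟩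
    have h1 : muDir A ≤ M e := csInf_le hMb ⟨e, he, rfl⟩
    refine h1.trans (Real.sSup_le ?_ (Real.cos_nonneg_of_mem_Icc ⟨by linarith [hα.1], hα.2⟩))
    rintro _ ⟨u, hu, rfl⟩
    exact aux_cluster_le hb hu
  have hμ0 : 0 ≤ muDir A := by
    apply Real.sInf_nonneg
    rintro _ ⟨e, -, rfl⟩
    exact hM0 e
  have hμ1 : muDir A ≤ 1 := by simpa using hμS 0 h0S
  have hμ : muDir A ≤ Real.cos (phiDir A) := by
    have h1 : phiDir A ≤ Real.arccos (muDir A) := by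
      refine csSup_le ⟨0, h0S⟩ fun α hα => ?_
      rw [← Real.arccos_cos hα.1.1 (by linarith [hα.1.2])]
      exact Real.antitone_arccos (hμS α hα)
    have h2 := Real.cos_le_cos_of_nonneg_of_le_pi hφ0 (Real.arccos_le_pi _) h1
    rwa [Real.cos_arccos (by linarith) hμ1] at h2
  refine ⟨hτ, hμ, fun hfd => ⟨le_antisymm hμ ?_, ?_⟩⟩
  · refine le_csInf ⟨_, e₀, he₀, rfl⟩ ?_
    rintro _ ⟨e, he, rfl⟩
    by_contra! hlt
    obtain ⟨c, hc1, hc2⟩ := exists_between hlt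
    have hc0 : 0 ≤ c := (hM0 e).trans hc1.le
    have hcle : c ≤ 1 := hc2.le.trans (Real.cos_le_one _)
    have hcos : Real.cos (Real.arccos c) = c := Real.cos_arccos (by linarith) hcle
    have hmem : Real.arccos c ∈ Set.Icc 0 (Real.pi / 2) :=
      ⟨Real.arccos_nonneg c, Real.arccos_le_pi_div_two.mpr hc0⟩
    have hbd : IsBounded (A ∩ doubleCone e (Real.arccos c)) := by
      by_contra hnb
      obtain ⟨u, hu, hcu⟩ := aux_exists_cluster hnb
      have h1 : |⟪u, e⟫| ≤ M e := by
        refine le_csSup ⟨1, ?_⟩ ⟨u, hu, rfl⟩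
        rintro _ ⟨v, hv, rfl⟩
        exact aux_cluster_le_one he hv
      rw [hcos] at hcu
      linarith
    have h1 := Real.cos_le_cos_of_nonneg_of_le_pi (Real.arccos_nonneg c) (by linarith)
      (hle _ ⟨hmem, e, he, hbd⟩)
    linarith
  · rw [hτ, ← Real.cos_sq', Real.sqrt_sq hcosφ]
end

section
/- Let n ≥ 2, write points of ℝⁿ = ℝ^{n−1} × ℝ as z = (x,t), let M ≥ 1, and define g : ℝⁿ → ℝⁿ by g(x,t) = (x, t + √|x|) if |x| ≤ M and g(x,t) = (x, t + √M) if |x| ≥ M. Let r = 1/(8√M) and let z = (x,t), z′ = (x′,t′) ∈ ℝⁿ satisfy |x| ≤ |x′| ≤ M, |t| ≤ r|x′| and |t′| ≤ 3r|x′|. Then ||g z′ − g z| − |z′ − z|| ≤ 1. -/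
open Filter Metric Bornology

/-- The auxiliary map `g : ℝⁿ = ℝ^{n-1} × ℝ → ℝⁿ`, `g(x,t) = (x, t + √|x|)` for `|x| ≤ M`
and `g(x,t) = (x, t + √M)` for `|x| ≥ M`.  Here `ℝ^{n-1} × ℝ` carries the euclidean
(`ℓ²`) norm, via `WithLp 2`. -/
noncomputable def gMap {m : ℕ} (M : ℝ) (z : WithLp 2 (EuclideanSpace ℝ (Fin m) × ℝ)) :
    WithLp 2 (EuclideanSpace ℝ (Fin m) × ℝ) :=
  (WithLp.equiv 2 _).symm
    ((WithLp.equiv 2 _ z).1,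
      (WithLp.equiv 2 _ z).2 +
        if ‖(WithLp.equiv 2 _ z).1‖ ≤ M then Real.sqrt ‖(WithLp.equiv 2 _ z).1‖
        else Real.sqrt M)

/-- Lemma 3.3: with `M ≥ 1`, `r = 1/(8√M)`, if `|x| ≤ |x'| ≤ M`, `|t| ≤ r|x'|` and
`|t'| ≤ 3r|x'|`, then `||g z' - g z| - |z' - z|| ≤ 1` for `z = (x,t)`, `z' = (x',t')`. -/
theorem gMap_nearisometry_bounded_part {n : ℕ} (hn : 2 ≤ n) (M : ℝ) (hM : 1 ≤ M)
    (r : ℝ) (hr : r = 1 / (8 * Real.sqrt M))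
    (x x' : EuclideanSpace ℝ (Fin (n - 1))) (t t' : ℝ)
    (hxx' : ‖x‖ ≤ ‖x'‖) (hx'M : ‖x'‖ ≤ M)
    (ht : |t| ≤ r * ‖x'‖) (ht' : |t'| ≤ 3 * r * ‖x'‖) :
    |‖gMap M ((WithLp.equiv 2 _).symm (x', t')) - gMap M ((WithLp.equiv 2 _).symm (x, t))‖ -
      ‖(WithLp.equiv 2 (EuclideanSpace ℝ (Fin (n - 1)) × ℝ)).symm (x', t') -
        (WithLp.equiv 2 (EuclideanSpace ℝ (Fin (n - 1)) × ℝ)).symm (x, t)‖| ≤ 1 := by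
  have hxM : ‖x‖ ≤ M := hxx'.trans hx'M
  have hd : ‖x'‖ - ‖x‖ ≤ ‖x' - x‖ := norm_sub_norm_le x' x
  rw [WithLp.prod_norm_eq_of_L2, WithLp.prod_norm_eq_of_L2]
  simp only [gMap, WithLp.equiv_apply, WithLp.equiv_symm_apply, WithLp.sub_fst, WithLp.sub_snd,
    hxM, hx'M, if_true, Real.norm_eq_abs, sq_abs]
  change |√(‖x' - x‖ ^ 2 + (t' + √‖x'‖ - (t + √‖x‖)) ^ 2) - √(‖x' - x‖ ^ 2 + (t' - t) ^ 2)| ≤ 1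
  have hd0 : 0 ≤ ‖x' - x‖ := norm_nonneg _
  have hp0 := Real.sqrt_nonneg ‖x'‖
  have hq0 := Real.sqrt_nonneg ‖x‖
  have hp2 := Real.mul_self_sqrt (norm_nonneg x')
  have hq2 := Real.mul_self_sqrt (norm_nonneg x)
  have hpq := Real.sqrt_le_sqrt hxx'
  have hpM := Real.sqrt_le_sqrt hx'M
  have hm : 1 ≤ √M := Real.one_le_sqrt.2 hM
  have hrm : r * √M = 1 / 8 := by rw [hr]; field_simp
  have hr0 : 0 ≤ r := by rw [hr]; positivity
  generalize ‖x' - x‖ = d at *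
  generalize √‖x'‖ = p at *
  generalize √‖x‖ = q at *
  generalize ‖x'‖ = b at *
  generalize ‖x‖ = a at *
  have hrp : r * p ≤ 1 / 8 := by
    rw [← hrm]; exact mul_le_mul_of_nonneg_left hpM hr0
  have hrb : r * b ≤ p / 8 := by
    rw [← hp2]; nlinarith
  have h1 := abs_le.1 ht
  have h2 := abs_le.1 ht'
  have hu1 : t' - t ≤ p / 2 := by linarith
  have hu2 : -(p / 2) ≤ t' - t := by linarith
  have e : t' + p - (t + q) = (t' - t) + (p - q) := by ring
  rw [e]
  generalize t' - t = u at *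
  obtain ⟨s, hs⟩ : ∃ s, s = p - q := ⟨_, rfl⟩
  rw [← hs]
  have hs0 : 0 ≤ s := by linarith
  have hsp : s * p ≤ d := by subst hs; nlinarith
  have hss : s * s ≤ d := by nlinarith
  have hus1 : 2 * (u * s) ≤ d := by nlinarith
  have hus2 : -d ≤ 2 * (u * s) := by nlinarith
  have hA : d ≤ √(d ^ 2 + (u + s) ^ 2) := Real.le_sqrt_of_sq_le (by nlinarith [sq_nonneg (u + s)])
  have hB : d ≤ √(d ^ 2 + u ^ 2) := Real.le_sqrt_of_sq_le (by nlinarith [sq_nonneg u])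
  have hA2 := Real.mul_self_sqrt (show 0 ≤ d ^ 2 + (u + s) ^ 2 by positivity)
  have hB2 := Real.mul_self_sqrt (show 0 ≤ d ^ 2 + u ^ 2 by positivity)
  generalize √(d ^ 2 + (u + s) ^ 2) = A at *
  generalize √(d ^ 2 + u ^ 2) = B at *
  rw [abs_le]
  constructor
  · have := abs_le_of_sq_le_sq' (show B ^ 2 ≤ (A + 1) ^ 2 by linarith [mul_self_nonneg s]) (by linarith)
    linarith [this.2]
  · have := abs_le_of_sq_le_sq' (show A ^ 2 ≤ (B + 1) ^ 2 by linarith) (by linarith)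
    linarith [this.2]
end

section
/- Let M > 0 and let x, x′ ∈ ℝⁿ with |x| < M and |x′| > M. Let x″ be the point of the line segment [x, x′] with |x″| = M. Then |x′|·|x − x″| ≤ 2M·|x − x′|. -/
open Metric

/-- If `|x| < M < |x'|` and `x''` is the point of the segment `[x, x']` with `|x''| = M`,
then `|x'| |x - x''| ≤ 2 M |x - x'|`. -/
theorem segment_norm_estimate {n : ℕ} (M : ℝ) (hM : 0 < M)
    (x x' x'' : EuclideanSpace ℝ (Fin n))
    (hx : ‖x‖ < M) (hx' : M < ‖x'‖)
    (hseg : x'' ∈ segment ℝ x x') (hx'' : ‖x''‖ = M) :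
    ‖x'‖ * ‖x - x''‖ ≤ 2 * M * ‖x - x'‖ := by
  obtain ⟨a, b, ha, hb, hab, rfl⟩ := hseg
  have h1 : x - (a • x + b • x') = b • (x - x') := by
    have : a = 1 - b := by linarith
    subst this
    module
  have h2 : ‖b • x'‖ ≤ ‖a • x + b • x'‖ + ‖a • x‖ := by
    have h := norm_sub_le (a • x + b • x') (a • x)
    rwa [add_sub_cancel_left] at h
  rw [hx'', norm_smul, norm_smul, Real.norm_of_nonneg ha, Real.norm_of_nonneg hb] at h2
  rw [h1, norm_smul, Real.norm_of_nonneg hb]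
  have h3 : b * ‖x'‖ ≤ 2 * M := by
    nlinarith [norm_nonneg x]
  calc ‖x'‖ * (b * ‖x - x'‖) = (b * ‖x'‖) * ‖x - x'‖ := by ring
    _ ≤ 2 * M * ‖x - x'‖ := mul_le_mul_of_nonneg_right h3 (norm_nonneg _)
end

section
/- Let n ≥ 2, let M ≥ 1, let r = 1/(8√M), and let A_r = {(x,t) ∈ ℝ^{n−1} × ℝ : |t| ≤ r|x|}. Then the restriction of g to A_r is a 1-nearisometry: for all z, z′ ∈ A_r, ||g z′ − g z| − |z′ − z|| ≤ 1. -/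
open Filter Metric Bornology

/-- The set `A_r = {(x,t) : |t| ≤ r |x|}` in `ℝ^{n-1} × ℝ`. -/
def coneSet {m : ℕ} (r : ℝ) : Set (WithLp 2 (EuclideanSpace ℝ (Fin m) × ℝ)) :=
  {z | |(WithLp.equiv 2 _ z).2| ≤ r * ‖(WithLp.equiv 2 _ z).1‖}

noncomputable def hAux (M a : ℝ) : ℝ := if a ≤ M then Real.sqrt a else Real.sqrt M

lemma hAux_bounds (M a b : ℝ) (hM : 1 ≤ M) (ha : 0 ≤ a) (hab : a ≤ b) :
    0 ≤ hAux M b - hAux M a ∧ (hAux M b - hAux M a)^2 ≤ b - a ∧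
    (a + b) * (hAux M b - hAux M a) ≤ 4 * Real.sqrt M * (b - a) := by
  have hu : Real.sqrt M ^ 2 = M := Real.sq_sqrt (by linarith)
  have hp : Real.sqrt a ^ 2 = a := Real.sq_sqrt ha
  have hq : Real.sqrt b ^ 2 = b := Real.sq_sqrt (by linarith)
  have hpq : Real.sqrt a ≤ Real.sqrt b := Real.sqrt_le_sqrt hab
  have hp0 := Real.sqrt_nonneg a
  have hu0 := Real.sqrt_nonneg M
  unfold hAux
  by_cases h1 : b ≤ M
  · have h2 : a ≤ M := hab.trans h1
    have hqu : Real.sqrt b ≤ Real.sqrt M := Real.sqrt_le_sqrt h1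
    rw [if_pos h1, if_pos h2]
    generalize Real.sqrt a = p at *
    generalize Real.sqrt b = q at *
    generalize Real.sqrt M = u at *
    subst hp hq
    have hd : 0 ≤ q - p := by linarith
    refine ⟨hd, by nlinarith, ?_⟩
    have : p^2 + q^2 ≤ 4 * u * (q + p) := by nlinarith
    nlinarith [mul_le_mul_of_nonneg_right this hd]
  · rw [if_neg h1]
    by_cases h2 : a ≤ M
    · rw [if_pos h2]
      have hpu : Real.sqrt a ≤ Real.sqrt M := Real.sqrt_le_sqrt h2
      clear hq hpq
      generalize Real.sqrt a = p at *
      generalize Real.sqrt M = u at *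
      subst hp hu
      have hd : 0 ≤ u - p := by linarith
      have he : 0 ≤ b - u^2 := by linarith
      refine ⟨hd, by nlinarith, ?_⟩
      have : p^2 + u^2 ≤ 4 * u * (u + p) := by nlinarith
      nlinarith [mul_le_mul_of_nonneg_right this hd, mul_nonneg he hp0, mul_nonneg he hu0]
    · rw [if_neg h2]
      have : 0 ≤ Real.sqrt M * (b - a) := mul_nonneg hu0 (by linarith)
      refine ⟨by simp, by simp; linarith, by simp; linarith⟩

lemma near_key (d T S : ℝ) (hd : 0 ≤ d) (h : |2 * T * S + S^2| ≤ 2 * d) :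
    |Real.sqrt (d^2 + (T + S)^2) - Real.sqrt (d^2 + T^2)| ≤ 1 := by
  have hU : Real.sqrt (d^2 + (T + S)^2) ^ 2 = d^2 + (T + S)^2 := Real.sq_sqrt (by positivity)
  have hV : Real.sqrt (d^2 + T^2) ^ 2 = d^2 + T^2 := Real.sq_sqrt (by positivity)
  have hUd : d ≤ Real.sqrt (d^2 + (T + S)^2) := Real.le_sqrt_of_sq_le (by nlinarith [sq_nonneg (T + S)])
  have hVd : d ≤ Real.sqrt (d^2 + T^2) := Real.le_sqrt_of_sq_le (by nlinarith [sq_nonneg T])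
  generalize Real.sqrt (d^2 + (T + S)^2) = U at *
  generalize Real.sqrt (d^2 + T^2) = V at *
  rw [abs_le] at *
  obtain ⟨h1, h2⟩ := h
  constructor
  · by_contra hc
    push Not at hc
    nlinarith
  · by_contra hc
    push Not at hc
    nlinarith

lemma near_aux {m : ℕ} (M : ℝ) (hM : 1 ≤ M) (r : ℝ) (hr : r = 1 / (8 * Real.sqrt M))
    (z z' : WithLp 2 (EuclideanSpace ℝ (Fin m) × ℝ))
    (hz : z ∈ coneSet (m := m) r) (hz' : z' ∈ coneSet (m := m) r)
    (hle : ‖z.fst‖ ≤ ‖z'.fst‖) :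
    |‖gMap M z' - gMap M z‖ - ‖z' - z‖| ≤ 1 := by
  have hz1 : |z.snd| ≤ r * ‖z.fst‖ := hz
  have hz2 : |z'.snd| ≤ r * ‖z'.fst‖ := hz'
  have e1 : ‖gMap M z' - gMap M z‖ = Real.sqrt (‖z'.fst - z.fst‖^2 +
      ((z'.snd - z.snd) + (hAux M ‖z'.fst‖ - hAux M ‖z.fst‖))^2) := by
    rw [WithLp.prod_norm_eq_of_L2]
    have a1 : (gMap M z' - gMap M z).fst = z'.fst - z.fst := rfl
    have a2 : (gMap M z' - gMap M z).snd =
      (z'.snd + hAux M ‖z'.fst‖) - (z.snd + hAux M ‖z.fst‖) := rfl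
    rw [a1, a2, Real.norm_eq_abs, sq_abs]
    congr 2
    ring
  have e2 : ‖z' - z‖ = Real.sqrt (‖z'.fst - z.fst‖^2 + (z'.snd - z.snd)^2) := by
    rw [WithLp.prod_norm_eq_of_L2]
    have a1 : (z' - z).fst = z'.fst - z.fst := rfl
    have a2 : (z' - z).snd = z'.snd - z.snd := rfl
    rw [a1, a2, Real.norm_eq_abs, sq_abs]
  rw [e1, e2]
  apply near_key _ _ _ (norm_nonneg _)
  obtain ⟨h0, h1, h2⟩ := hAux_bounds M ‖z.fst‖ ‖z'.fst‖ hM (norm_nonneg _) hle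
  have hd := norm_sub_norm_le z'.fst z.fst
  have hu : 0 < Real.sqrt M := Real.sqrt_pos.mpr (by linarith)
  have hT : |z'.snd - z.snd| ≤ r * (‖z.fst‖ + ‖z'.fst‖) := by
    have := abs_sub z'.snd z.snd
    linarith
  generalize hAux M ‖z'.fst‖ - hAux M ‖z.fst‖ = S at *
  generalize z'.snd - z.snd = T at *
  have h3 : |2 * T * S| ≤ ‖z'.fst‖ - ‖z.fst‖ := by
    rw [abs_mul, abs_mul, abs_of_nonneg h0, abs_two]
    calc 2 * |T| * S ≤ 2 * (r * (‖z.fst‖ + ‖z'.fst‖)) * S := by gcongr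
      _ = ((‖z.fst‖ + ‖z'.fst‖) * S) / (4 * Real.sqrt M) := by
        rw [hr]; field_simp; ring
      _ ≤ _ := by rw [div_le_iff₀ (by positivity)]; linarith
  calc |2 * T * S + S^2| ≤ |2 * T * S| + |S^2| := abs_add_le _ _
    _ ≤ _ := by rw [abs_of_nonneg (sq_nonneg S)]; linarith

/-- Lemma 3.5: with `M ≥ 1` and `r = 1/(8√M)`, the restriction of `g` to `A_r` is a
`1`-nearisometry. -/
theorem gMap_nearisometry_on_cone {n : ℕ} (hn : 2 ≤ n) (M : ℝ) (hM : 1 ≤ M)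
    (r : ℝ) (hr : r = 1 / (8 * Real.sqrt M)) :
    ∀ z ∈ coneSet (m := n - 1) r, ∀ z' ∈ coneSet (m := n - 1) r,
      |‖gMap M z' - gMap M z‖ - ‖z' - z‖| ≤ 1 := by
  intro z hz z' hz'
  rcases le_total ‖z.fst‖ ‖z'.fst‖ with h | h
  · exact near_aux M hM r hr z z' hz hz' h
  · rw [norm_sub_rev (gMap M z') (gMap M z), norm_sub_rev z' z]
    exact near_aux M hM r hr z' z hz' hz h
end

section
/- Let n ≥ 2, M ≥ 1, r = 1/(8√M), and 0 < λ ≤ 1. Let A′(r,λ) = A_r ∪ B̄(0,λ) and define f : A′(r,λ) → ℝⁿ by f z = g z for z ∈ A_r and f z = 0 for z ∈ B̄(0,λ) \ A_r. Then f is a (1+λ)-nearisometry. -/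
open Filter Metric Bornology

lemma scalar_aux {a b p q m r τ : ℝ} (hq : 0 ≤ q) (hpq : q ≤ p) (hpm : p ≤ m) (hr0 : 0 ≤ r)
    (hrm : 8 * r * m = 1) (hb : 0 ≤ b) (hba : b ≤ a) (hτ : |τ| ≤ r * (a + b))
    (h2 : b * p ^ 2 ≤ a * q ^ 2) : 2 * |τ| * (p - q) ≤ a - b := by
  rcases (add_nonneg (hq.trans hpq) hq).eq_or_lt with h0 | h0
  · have : p - q = 0 := by linarith
    rw [this]; linarith
  · have e1 : |τ| * (p ^ 2 - q ^ 2) ≤ r * (a + b) * (p ^ 2 - q ^ 2) :=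
      mul_le_mul_of_nonneg_right hτ (by nlinarith)
    have e2 : r * ((a + b) * (p ^ 2 - q ^ 2)) ≤ r * ((a - b) * (p ^ 2 + q ^ 2)) :=
      mul_le_mul_of_nonneg_left (by nlinarith) hr0
    have e3 : p ^ 2 + q ^ 2 ≤ m * (p + q) := by nlinarith
    have e4 : r * (a - b) * (p ^ 2 + q ^ 2) ≤ r * (a - b) * (m * (p + q)) :=
      mul_le_mul_of_nonneg_left e3 (mul_nonneg hr0 (by linarith))
    have e5 : r * (a - b) * (m * (p + q)) = (a - b) * (p + q) / 8 := by
      linear_combination (a - b) * (p + q) / 8 * hrm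
    have e6 : 0 ≤ (a - b) * (p + q) := mul_nonneg (by linarith) h0.le
    refine le_of_mul_le_mul_right ?_ h0
    nlinarith

lemma norm_aux {N1 N2 d τ δ : ℝ} (h1 : 0 ≤ N1) (h2 : 0 ≤ N2) (hd : 0 ≤ d)
    (e1 : N1 ^ 2 = d ^ 2 + (τ + δ) ^ 2) (e2 : N2 ^ 2 = d ^ 2 + τ ^ 2)
    (hδ : 0 ≤ δ) (hδ2 : δ ^ 2 ≤ d) (hτ : 2 * |τ| * δ ≤ d) : |N1 - N2| ≤ 1 := by
  have g1 : d ≤ N1 := by nlinarith [sq_nonneg (τ + δ)]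
  have g2 : d ≤ N2 := by nlinarith [sq_nonneg τ]
  have k1 : τ * δ ≤ |τ| * δ := mul_le_mul_of_nonneg_right (le_abs_self τ) hδ
  have k2 : -τ * δ ≤ |τ| * δ := mul_le_mul_of_nonneg_right (neg_le_abs τ) hδ
  have hs1 : N1 ^ 2 - N2 ^ 2 ≤ N1 + N2 := by nlinarith
  have hs2 : N2 ^ 2 - N1 ^ 2 ≤ N1 + N2 := by nlinarith
  rw [abs_le]
  constructor
  · by_contra! h
    nlinarith
  · by_contra! h
    nlinarith

lemma ite_eq_sqrt_min (M a : ℝ) :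
    (if a ≤ M then Real.sqrt a else Real.sqrt M) = Real.sqrt (min a M) := by
  split_ifs with h
  · rw [min_eq_left h]
  · rw [min_eq_right (le_of_not_ge h)]

lemma g_aux {m : ℕ} (M : ℝ) (hM : 1 ≤ M) (r : ℝ) (hr : r = 1 / (8 * Real.sqrt M))
    (z w : WithLp 2 (EuclideanSpace ℝ (Fin m) × ℝ)) (hz : z ∈ coneSet r) (hw : w ∈ coneSet r)
    (hle : ‖w.fst‖ ≤ ‖z.fst‖) : |‖gMap M z - gMap M w‖ - ‖z - w‖| ≤ 1 := by
  have hz' : |z.snd| ≤ r * ‖z.fst‖ := hz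
  have hw' : |w.snd| ≤ r * ‖w.fst‖ := hw
  have hM0 : 0 < Real.sqrt M := Real.sqrt_pos.2 (by linarith)
  have hr0 : 0 ≤ r := by rw [hr]; positivity
  have hrm : 8 * r * Real.sqrt M = 1 := by rw [hr]; field_simp
  have ha := norm_nonneg z.fst
  have hb := norm_nonneg w.fst
  have hd : ‖z.fst‖ - ‖w.fst‖ ≤ ‖z.fst - w.fst‖ := norm_sub_norm_le _ _
  have hpq : Real.sqrt (min ‖w.fst‖ M) ≤ Real.sqrt (min ‖z.fst‖ M) :=
    Real.sqrt_le_sqrt (min_le_min_right _ hle)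
  have hpm : Real.sqrt (min ‖z.fst‖ M) ≤ Real.sqrt M := Real.sqrt_le_sqrt (min_le_right _ _)
  have hp2 := Real.sq_sqrt (le_min ha (by linarith : (0:ℝ) ≤ M))
  have hq2 := Real.sq_sqrt (le_min hb (by linarith : (0:ℝ) ≤ M))
  have hq0 := Real.sqrt_nonneg (min ‖w.fst‖ M)
  have h2 : ‖w.fst‖ * min ‖z.fst‖ M ≤ ‖z.fst‖ * min ‖w.fst‖ M := by
    rcases le_total ‖z.fst‖ M with h | h <;> rcases le_total ‖w.fst‖ M with h' | h' <;>
      simp only [min_eq_left, min_eq_right, h, h'] <;> nlinarith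
  have h3 : min ‖z.fst‖ M - min ‖w.fst‖ M ≤ ‖z.fst‖ - ‖w.fst‖ := by
    rcases le_total ‖z.fst‖ M with h | h <;> rcases le_total ‖w.fst‖ M with h' | h' <;>
      simp only [min_eq_left, min_eq_right, h, h'] <;> linarith
  have hτ : |z.snd - w.snd| ≤ r * (‖z.fst‖ + ‖w.fst‖) := by
    have := abs_sub z.snd w.snd
    linarith
  refine norm_aux (d := ‖z.fst - w.fst‖) (τ := z.snd - w.snd)
    (δ := Real.sqrt (min ‖z.fst‖ M) - Real.sqrt (min ‖w.fst‖ M))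
    (norm_nonneg _) (norm_nonneg _) (norm_nonneg _) ?_ ?_ (by linarith) ?_ ?_
  · rw [WithLp.prod_norm_sq_eq_of_L2, ← ite_eq_sqrt_min, ← ite_eq_sqrt_min, Real.norm_eq_abs,
      sq_abs]
    simp only [gMap, WithLp.equiv_apply, WithLp.equiv_symm_apply, WithLp.sub_fst, WithLp.sub_snd,
      WithLp.ofLp_fst, WithLp.ofLp_snd, WithLp.toLp_fst, WithLp.toLp_snd]
    ring
  · rw [WithLp.prod_norm_sq_eq_of_L2, Real.norm_eq_abs, sq_abs]
    rfl
  · nlinarith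
  · refine (scalar_aux hq0 hpq hpm hr0 hrm hb hle hτ ?_).trans hd
    rw [hp2, hq2]; exact h2

lemma g_aux' {m : ℕ} (M : ℝ) (hM : 1 ≤ M) (r : ℝ) (hr : r = 1 / (8 * Real.sqrt M))
    (z w : WithLp 2 (EuclideanSpace ℝ (Fin m) × ℝ)) (hz : z ∈ coneSet r) (hw : w ∈ coneSet r) :
    |‖gMap M z - gMap M w‖ - ‖z - w‖| ≤ 1 := by
  rcases le_total ‖w.fst‖ ‖z.fst‖ with h | h
  · exact g_aux M hM r hr z w hz hw h
  · rw [norm_sub_rev, norm_sub_rev z]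
    exact g_aux M hM r hr w z hw hz h

lemma g_zero {m : ℕ} (M : ℝ) (hM : 1 ≤ M) (r : ℝ) (hr : r = 1 / (8 * Real.sqrt M))
    (z : WithLp 2 (EuclideanSpace ℝ (Fin m) × ℝ)) (hz : z ∈ coneSet r) :
    |‖gMap M z‖ - ‖z‖| ≤ 1 := by
  have h0 : (0 : WithLp 2 (EuclideanSpace ℝ (Fin m) × ℝ)) ∈ coneSet r := by
    simp [coneSet]
  have hg : gMap M (0 : WithLp 2 (EuclideanSpace ℝ (Fin m) × ℝ)) = 0 := by
    have : 0 ≤ M := by linarith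
    simp [gMap, this]
  have := g_aux' M hM r hr z 0 hz h0
  rwa [hg, sub_zero, sub_zero] at this

/-- Lemma 3.7: with `M ≥ 1`, `r = 1/(8√M)` and `0 < λ ≤ 1`, the map
`f : A_r ∪ B̄(0, λ) → ℝⁿ` given by `f z = g z` on `A_r` and `f z = 0` on `B̄(0, λ) \ A_r`
is a `(1 + λ)`-nearisometry. -/
theorem extended_map_nearisometry {n : ℕ} (hn : 2 ≤ n) (M : ℝ) (hM : 1 ≤ M)
    (r : ℝ) (hr : r = 1 / (8 * Real.sqrt M)) (lam : ℝ) (hlam0 : 0 < lam) (hlam1 : lam ≤ 1)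
    (f : WithLp 2 (EuclideanSpace ℝ (Fin (n - 1)) × ℝ) →
      WithLp 2 (EuclideanSpace ℝ (Fin (n - 1)) × ℝ))
    (hf1 : ∀ z ∈ coneSet (m := n - 1) r, f z = gMap M z)
    (hf2 : ∀ z ∈ closedBall (0 : WithLp 2 (EuclideanSpace ℝ (Fin (n - 1)) × ℝ)) lam \
      coneSet (m := n - 1) r, f z = 0) :
    ∀ z ∈ coneSet (m := n - 1) r ∪ closedBall 0 lam,
      ∀ z' ∈ coneSet (m := n - 1) r ∪ closedBall 0 lam,
        |‖f z' - f z‖ - ‖z' - z‖| ≤ 1 + lam := by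
  have mixed : ∀ z ∈ coneSet (m := n - 1) r, ∀ w ∈ closedBall 0 lam \ coneSet (m := n - 1) r,
      |‖f z - f w‖ - ‖z - w‖| ≤ 1 + lam := by
    intro z hz w hw
    rw [hf1 z hz, hf2 w hw, sub_zero]
    have h1 := abs_le.1 (g_zero M hM r hr z hz)
    have h2 : ‖w‖ ≤ lam := by simpa using hw.1
    have h3 := norm_sub_le z w
    have h4 := norm_sub_norm_le z w
    rw [abs_le]
    constructor <;> linarith [h1.1, h1.2]
  intro z hz w hw
  by_cases hz1 : z ∈ coneSet (m := n - 1) r <;> by_cases hw1 : w ∈ coneSet (m := n - 1) r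
  · rw [hf1 z hz1, hf1 w hw1]
    linarith [g_aux' M hM r hr w z hw1 hz1]
  · rw [norm_sub_rev, norm_sub_rev w]
    exact mixed z hz1 w ⟨hw.resolve_left hw1, hw1⟩
  · exact mixed w hw1 z ⟨hz.resolve_left hz1, hz1⟩
  · have hz2 := hz.resolve_left hz1
    have hw2 := hw.resolve_left hw1
    rw [hf2 z ⟨hz2, hz1⟩, hf2 w ⟨hw2, hw1⟩, sub_zero, norm_zero, zero_sub, abs_neg, abs_norm]
    have h1 : ‖z‖ ≤ lam := by simpa using hz2
    have h2 : ‖w‖ ≤ lam := by simpa using hw2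
    linarith [norm_sub_le w z]
end

section
/- Let n ≥ 2, M ≥ 1, r = 1/(8√M), 0 < λ ≤ 1, and let f : A′(r,λ) → ℝⁿ be defined by f z = g z for z ∈ A_r and f z = 0 for z ∈ B̄(0,λ) \ A_r. Let A ⊆ A′(r,λ) be unbounded and let T : ℝⁿ → ℝⁿ be a linear isometry with sup{|T x − f x| : x ∈ A} < ∞. Then T u = u for every cluster direction u of A. -/
open Filter Metric Bornology

/-- Lemma 3.9: if `f` equals `g` on `A_r` and vanishes on `B̄(0, λ) \ A_r`, `A ⊆ A_r ∪ B̄(0, λ)`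
is unbounded and `T` is a linear isometry of `ℝⁿ` with `sup_{x ∈ A} |T x - f x| < ∞`, then
`T u = u` for every cluster direction `u` of `A`. -/
theorem linearIsometry_id_on_clusterDirections {n : ℕ} (hn : 2 ≤ n) (M : ℝ) (hM : 1 ≤ M)
    (r : ℝ) (hr : r = 1 / (8 * Real.sqrt M)) (lam : ℝ) (hlam0 : 0 < lam) (hlam1 : lam ≤ 1)
    (f : WithLp 2 (EuclideanSpace ℝ (Fin (n - 1)) × ℝ) →
      WithLp 2 (EuclideanSpace ℝ (Fin (n - 1)) × ℝ))
    (hf1 : ∀ z ∈ coneSet (m := n - 1) r, f z = gMap M z)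
    (hf2 : ∀ z ∈ closedBall (0 : WithLp 2 (EuclideanSpace ℝ (Fin (n - 1)) × ℝ)) lam \
      coneSet (m := n - 1) r, f z = 0)
    (A : Set (WithLp 2 (EuclideanSpace ℝ (Fin (n - 1)) × ℝ)))
    (hA : A ⊆ coneSet (m := n - 1) r ∪ closedBall 0 lam) (hAu : ¬ IsBounded A)
    (T : WithLp 2 (EuclideanSpace ℝ (Fin (n - 1)) × ℝ) →ₗᵢ[ℝ]
      WithLp 2 (EuclideanSpace ℝ (Fin (n - 1)) × ℝ))
    (hT : ∃ K : ℝ, ∀ x ∈ A, ‖T x - f x‖ ≤ K) :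
    ∀ u, IsClusterDirection A u → T u = u := by
  rintro u ⟨x, hxA, hx1, hx2⟩
  obtain ⟨K, hK⟩ := hT
  have hg : ∀ z : WithLp 2 (EuclideanSpace ℝ (Fin (n - 1)) × ℝ),
      ‖gMap M z - z‖ ≤ Real.sqrt M := by
    intro z
    have h1 : (gMap M z - z).fst = 0 := by simp [gMap]
    have h2 : (gMap M z - z).snd = if ‖z.fst‖ ≤ M then Real.sqrt ‖z.fst‖ else Real.sqrt M := by
      simp [gMap]
    rw [WithLp.prod_norm_eq_of_L2, h1, h2, norm_zero]
    have h3 : ∀ a : ℝ, Real.sqrt (0 ^ 2 + ‖a‖ ^ 2) = |a| := by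
      intro a
      rw [Real.norm_eq_abs, sq_abs, zero_pow two_ne_zero, zero_add, Real.sqrt_sq_eq_abs]
    rw [h3]
    split_ifs with h
    · rw [abs_of_nonneg (Real.sqrt_nonneg _)]
      exact Real.sqrt_le_sqrt h
    · rw [abs_of_nonneg (Real.sqrt_nonneg _)]
  have hev : ∀ᶠ j in atTop, ‖T (‖x j‖⁻¹ • x j) - ‖x j‖⁻¹ • x j‖ ≤
      ‖x j‖⁻¹ * (K + Real.sqrt M) := by
    filter_upwards [hx1.eventually_gt_atTop lam] with j hj
    have hc : x j ∈ coneSet (m := n - 1) r := by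
      rcases hA (hxA j) with h | h
      · exact h
      · rw [mem_closedBall_zero_iff] at h
        exact absurd h (not_le.mpr hj)
    have hb := hK _ (hxA j)
    rw [hf1 _ hc] at hb
    have hle : ‖T (x j) - x j‖ ≤ K + Real.sqrt M := by
      calc ‖T (x j) - x j‖ = ‖(T (x j) - gMap M (x j)) + (gMap M (x j) - x j)‖ := by
            rw [sub_add_sub_cancel]
        _ ≤ _ := (norm_add_le _ _).trans (add_le_add hb (hg _))
    rw [map_smul, ← smul_sub, norm_smul, norm_inv, norm_norm]
    exact mul_le_mul_of_nonneg_left hle (inv_nonneg.mpr (norm_nonneg _))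
  have hl : Tendsto (fun j => ‖T (‖x j‖⁻¹ • x j) - ‖x j‖⁻¹ • x j‖) atTop (nhds ‖T u - u‖) :=
    (((T.continuous.tendsto u).comp hx2).sub hx2).norm
  have hr0 : Tendsto (fun j => ‖x j‖⁻¹ * (K + Real.sqrt M)) atTop (nhds 0) := by
    simpa using (tendsto_inv_atTop_zero.comp hx1).mul_const (K + Real.sqrt M)
  have h0 := le_of_tendsto_of_tendsto hl hr0 hev
  exact sub_eq_zero.mp (norm_le_zero_iff.mp h0)
end

section
/- Let E and F be real Hilbert spaces, let ε > 0, let x, y ∈ E with |x| ≥ 2ε and |y| ≥ 2ε, and let a, b ∈ F satisfy ||a| − |x|| ≤ ε, ||b| − |y|| ≤ ε and ||a − b| − |x − y|| ≤ ε (so a, b ≠ 0). Then |a/|a| − b/|b||² ≤ 4·|x/|x| − y/|y||² + 24ε/|x| + 24ε/|y| + 12ε²/(|x|·|y|). -/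
open RealInnerProductSpace

theorem proj_aux {E : Type*} [NormedAddCommGroup E] [InnerProductSpace ℝ E]
    (x y : E) (hx : 0 < ‖x‖) (hy : 0 < ‖y‖) :
    ‖‖x‖⁻¹ • x - ‖y‖⁻¹ • y‖ ^ 2 = (‖x - y‖ ^ 2 - (‖x‖ - ‖y‖) ^ 2) / (‖x‖ * ‖y‖) := by
  rw [norm_sub_sq_real, norm_sub_sq_real, norm_smul, norm_smul, inner_smul_left,
    inner_smul_right]
  simp only [norm_inv, norm_norm, conj_trivial]
  field_simp
  ring

/-- Lemma 4.2: if `|x|, |y| ≥ 2ε` and the map `0 ↦ 0, x ↦ a, y ↦ b` is an `ε`-nearisometry,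
then `|p a - p b|² ≤ 4 |p x - p y|² + 24 ε/|x| + 24 ε/|y| + 12 ε²/(|x||y|)`, where
`p z = z/|z|` is the central projection. -/
theorem central_projection_estimate {E F : Type*}
    [NormedAddCommGroup E] [InnerProductSpace ℝ E]
    [NormedAddCommGroup F] [InnerProductSpace ℝ F]
    (ε : ℝ) (hε : 0 < ε) (x y : E) (hx : 2 * ε ≤ ‖x‖) (hy : 2 * ε ≤ ‖y‖)
    (a b : F) (ha : |‖a‖ - ‖x‖| ≤ ε) (hb : |‖b‖ - ‖y‖| ≤ ε)
    (hab : |‖a - b‖ - ‖x - y‖| ≤ ε) :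
    ‖‖a‖⁻¹ • a - ‖b‖⁻¹ • b‖ ^ 2 ≤
      4 * ‖‖x‖⁻¹ • x - ‖y‖⁻¹ • y‖ ^ 2 + 24 * ε / ‖x‖ + 24 * ε / ‖y‖ +
        12 * ε ^ 2 / (‖x‖ * ‖y‖) := by
  have hr : 0 < ‖x‖ := by linarith
  have hs : 0 < ‖y‖ := by linarith
  obtain ⟨ha1, ha2⟩ := abs_le.1 ha
  obtain ⟨hb1, hb2⟩ := abs_le.1 hb
  obtain ⟨hd1, hd2⟩ := abs_le.1 hab
  have hA : 0 < ‖a‖ := by linarith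
  have hB : 0 < ‖b‖ := by linarith
  have htri : ‖x - y‖ ≤ ‖x‖ + ‖y‖ := norm_sub_le x y
  have htri2 : |‖x‖ - ‖y‖| ≤ ‖x - y‖ := abs_norm_sub_norm_le x y
  have hD0 := norm_nonneg (a - b)
  have hd0 := norm_nonneg (x - y)
  rw [proj_aux a b hA hB, proj_aux x y hr hs]
  generalize ‖a - b‖ = D at *
  generalize ‖x - y‖ = d at *
  generalize ‖x‖ = r at *
  generalize ‖y‖ = s at *
  generalize ‖a‖ = A at *
  generalize ‖b‖ = B at *
  have hN : 0 ≤ d ^ 2 - (r - s) ^ 2 := by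
    have := sq_le_sq' (abs_le.1 htri2).1 (abs_le.1 htri2).2
    linarith
  have h1 : D ^ 2 ≤ d ^ 2 + 2 * ε * (r + s) + ε ^ 2 := by
    have : D ^ 2 ≤ (d + ε) ^ 2 := pow_le_pow_left₀ hD0 (by linarith) 2
    nlinarith
  have h2 : (r - s) ^ 2 - 4 * ε * (r + s) ≤ (A - B) ^ 2 := by
    have hu : |r - s| ≤ r + s := abs_le.2 ⟨by linarith, by linarith⟩
    have hh : |(A - B) - (r - s)| ≤ 2 * ε := abs_le.2 ⟨by linarith, by linarith⟩
    have hm : |(r - s) * ((A - B) - (r - s))| ≤ (r + s) * (2 * ε) := by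
      rw [abs_mul]
      exact mul_le_mul hu hh (abs_nonneg _) (by linarith)
    have := (abs_le.1 hm).1
    nlinarith [sq_nonneg ((A - B) - (r - s))]
  have h3 : r * s ≤ 4 * (A * B) := by
    have : (r / 2) * (s / 2) ≤ A * B :=
      mul_le_mul (by linarith) (by linarith) (by linarith) hA.le
    linarith
  have hM : 0 ≤ d ^ 2 - (r - s) ^ 2 + 6 * ε * (r + s) + 3 * ε ^ 2 := by positivity
  calc (D ^ 2 - (A - B) ^ 2) / (A * B)
      ≤ (d ^ 2 - (r - s) ^ 2 + 6 * ε * (r + s) + 3 * ε ^ 2) / (A * B) := by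
        gcongr
        nlinarith [sq_nonneg ε]
    _ ≤ (d ^ 2 - (r - s) ^ 2 + 6 * ε * (r + s) + 3 * ε ^ 2) / (r * s / 4) := by
        apply div_le_div_of_nonneg_left hM (by positivity) (by linarith)
    _ = _ := by
        field_simp
        ring
end

section
/- Let E and F be real Hilbert spaces, let ε ≥ 0, let x, y ∈ E, and let a, b ∈ F satisfy ||a| − |x|| ≤ ε, ||b| − |y|| ≤ ε and ||a − b| − |x − y|| ≤ ε. Then |⟨a, b⟩ − ⟨x, y⟩| ≤ 2ε(|x| + |y| + ε). -/
open RealInnerProductSpace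

theorem sq_diff_aux (p q e : ℝ) (hp : 0 ≤ p) (hq : 0 ≤ q) (he : 0 ≤ e) (h : |p - q| ≤ e) :
    |p ^ 2 - q ^ 2| ≤ e * (2 * q + e) := by
  have h1 : p ^ 2 - q ^ 2 = (p - q) * (p + q) := by ring
  have h2 := (abs_le.mp h).2
  rw [h1, abs_mul, abs_of_nonneg (add_nonneg hp hq)]
  exact mul_le_mul h (by linarith) (by linarith) he

/-- Lemma 4.6: if the map `0 ↦ 0, x ↦ a, y ↦ b` is an `ε`-nearisometry, then
`|⟨a, b⟩ - ⟨x, y⟩| ≤ 2ε(|x| + |y| + ε)`. -/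
theorem inner_estimate {E F : Type*}
    [NormedAddCommGroup E] [InnerProductSpace ℝ E]
    [NormedAddCommGroup F] [InnerProductSpace ℝ F]
    (ε : ℝ) (hε : 0 ≤ ε) (x y : E) (a b : F)
    (ha : |‖a‖ - ‖x‖| ≤ ε) (hb : |‖b‖ - ‖y‖| ≤ ε) (hab : |‖a - b‖ - ‖x - y‖| ≤ ε) :
    |⟪a, b⟫ - ⟪x, y⟫| ≤ 2 * ε * (‖x‖ + ‖y‖ + ε) := by
  have h1 := abs_le.mp (sq_diff_aux _ _ ε (norm_nonneg a) (norm_nonneg x) hε ha)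
  have h2 := abs_le.mp (sq_diff_aux _ _ ε (norm_nonneg b) (norm_nonneg y) hε hb)
  have h3 := abs_le.mp (sq_diff_aux _ _ ε (norm_nonneg (a - b)) (norm_nonneg (x - y)) hε hab)
  have h4 := norm_sub_sq_real a b
  have h5 := norm_sub_sq_real x y
  have h6 := mul_le_mul_of_nonneg_left (norm_sub_le x y) hε
  have h7 := mul_nonneg hε hε
  rw [abs_le]
  constructor <;> linarith [h1.1, h1.2, h2.1, h2.2, h3.1, h3.2]
end

section
/- Let n ≥ 1, let c′ > 0, let A ⊆ ℝⁿ be an unbounded set with 0 ∈ A and μ(A) ≥ 1/c′, and let f : A → ℝⁿ be an ε-nearisometry for some ε ≥ 0 with f 0 = 0. Then there is a linear isometry U : ℝⁿ → ℝⁿ with |U x − f x| ≤ 2c′ε for all x ∈ A. -/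
open Filter Metric Bornology RealInnerProductSpace

lemma aux_tendsto {E : Type*} [NormedAddCommGroup E] [InnerProductSpace ℝ E]
    (z : ℕ → E) (r : ℕ → ℝ) (hr : Tendsto r atTop atTop) (v b : E) (hv : ‖v‖ = 1)
    (hz : Tendsto (fun j => (r j)⁻¹ • z j) atTop (nhds v)) :
    Tendsto (fun j => ‖b - z j‖ - ‖z j‖) atTop (nhds (-⟪b, v⟫)) := by
  have hi : Tendsto (fun j => (r j)⁻¹) atTop (nhds 0) := hr.inv_tendsto_atTop
  have hb : Tendsto (fun j => (r j)⁻¹ • b) atTop (nhds 0) := by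
    simpa using hi.smul_const b
  have hD : Tendsto (fun j => ‖(r j)⁻¹ • b - (r j)⁻¹ • z j‖ + ‖(r j)⁻¹ • z j‖) atTop
      (nhds (‖(0:E) - v‖ + ‖v‖)) := (hb.sub hz).norm.add hz.norm
  have hN : Tendsto (fun j => (r j)⁻¹ * ‖b‖ ^ 2 - 2 * ⟪b, (r j)⁻¹ • z j⟫) atTop
      (nhds (0 * ‖b‖ ^ 2 - 2 * ⟪b, v⟫)) :=
    (hi.mul_const _).sub ((tendsto_const_nhds.inner hz).const_mul 2)
  have hD2 : ‖(0:E) - v‖ + ‖v‖ = 2 := by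
    rw [zero_sub, norm_neg, hv]; norm_num
  rw [hD2] at hD
  have hQ := hN.div hD (by norm_num)
  have e : (0 * ‖b‖ ^ 2 - 2 * ⟪b, v⟫) / 2 = -⟪b, v⟫ := by ring
  rw [e] at hQ
  refine hQ.congr' ?_
  filter_upwards [hr.eventually_gt_atTop 0, hD.eventually_ne (by norm_num : (2:ℝ) ≠ 0)] with j hj hne
  simp only [Pi.div_apply]
  rw [div_eq_iff hne]
  rw [← smul_sub, norm_smul, norm_smul, inner_smul_right, Real.norm_of_nonneg (by positivity)]
  have := norm_sub_sq_real b (z j)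
  linear_combination (-(r j)⁻¹) * this

def PairDir {E F : Type*} [NormedAddCommGroup E] [NormedSpace ℝ E]
    [NormedAddCommGroup F] [NormedSpace ℝ F] (f : E → F)
    (A : Set E) (u : E) (v : F) : Prop :=
  ∃ x : ℕ → E, (∀ j, x j ∈ A) ∧ Tendsto (fun j => ‖x j‖) atTop atTop ∧
    Tendsto (fun j => ‖x j‖⁻¹ • x j) atTop (nhds u) ∧
    Tendsto (fun j => ‖x j‖⁻¹ • f (x j)) atTop (nhds v)

lemma cd_norm {E : Type*} [NormedAddCommGroup E] [NormedSpace ℝ E]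
    {A : Set E} {u : E} (h : IsClusterDirection A u) : ‖u‖ = 1 := by
  obtain ⟨x, -, hx, hu⟩ := h
  refine tendsto_nhds_unique hu.norm (tendsto_const_nhds.congr' ?_)
  filter_upwards [hx.eventually_gt_atTop 0] with j hj
  rw [norm_smul, norm_inv, norm_norm, inv_mul_cancel₀ hj.ne']

lemma near_norm {E F : Type*} [NormedAddCommGroup E] [NormedAddCommGroup F]
    {f : E → F} {A : Set E} {ε : ℝ} (hf : IsNearisometryOn f A ε) (h0 : (0:E) ∈ A)
    (hf0 : f 0 = 0) {x : E} (hx : x ∈ A) : |‖f x‖ - ‖x‖| ≤ ε := by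
  simpa [hf0] using hf x hx 0 h0

lemma pair_norm {E F : Type*} [NormedAddCommGroup E] [NormedSpace ℝ E]
    [NormedAddCommGroup F] [NormedSpace ℝ F] {f : E → F} {A : Set E} {ε : ℝ}
    (hf : IsNearisometryOn f A ε) (h0 : (0:E) ∈ A)
    (hf0 : f 0 = 0) {u : E} {v : F} (h : PairDir f A u v) : ‖v‖ = 1 := by
  obtain ⟨x, hxA, hx, -, hv⟩ := h
  have hi : Tendsto (fun j => ‖x j‖⁻¹) atTop (nhds 0) := hx.inv_tendsto_atTop
  have h2 : Tendsto (fun j => ‖‖x j‖⁻¹ • f (x j)‖ - 1) atTop (nhds 0) := by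
    refine squeeze_zero_norm' ?_ (by simpa using hi.mul_const ε)
    filter_upwards [hx.eventually_gt_atTop 0] with j hj
    have e : ‖‖x j‖⁻¹ • f (x j)‖ - 1 = ‖x j‖⁻¹ * (‖f (x j)‖ - ‖x j‖) := by
      rw [norm_smul, norm_inv, norm_norm]; field_simp
    rw [e, norm_mul, norm_inv, norm_norm]
    exact mul_le_mul_of_nonneg_left (near_norm hf h0 hf0 (hxA j)) (by positivity)
  have := tendsto_nhds_unique (hv.norm.sub_const 1) h2
  linarith

lemma pair_exists {E F : Type*} [NormedAddCommGroup E] [NormedSpace ℝ E]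
    [NormedAddCommGroup F] [NormedSpace ℝ F] [ProperSpace F] {f : E → F} {A : Set E} {ε : ℝ}
    (hf : IsNearisometryOn f A ε) (h0 : (0:E) ∈ A)
    (hf0 : f 0 = 0) {u : E} (h : IsClusterDirection A u) : ∃ v, PairDir f A u v := by
  obtain ⟨x, hxA, hx, hu⟩ := h
  have hev : ∀ᶠ j in atTop, ‖x j‖⁻¹ • f (x j) ∈ closedBall (0:F) (1 + ε) := by
    filter_upwards [hx.eventually_ge_atTop 1] with j hj
    have h1 := (abs_le.1 (near_norm hf h0 hf0 (hxA j))).2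
    have hε : 0 ≤ ε := (abs_nonneg _).trans (near_norm hf h0 hf0 (hxA j))
    rw [mem_closedBall_zero_iff, norm_smul, norm_inv, norm_norm, inv_mul_le_iff₀ (by linarith)]
    nlinarith
  obtain ⟨v, -, φ, hφ, hv⟩ := (isCompact_closedBall (0:F) (1 + ε)).tendsto_subseq'
    hev.frequently
  exact ⟨v, x ∘ φ, fun j => hxA _, hx.comp hφ.tendsto_atTop, hu.comp hφ.tendsto_atTop, hv⟩

lemma pair_inner_le {E F : Type*} [NormedAddCommGroup E] [InnerProductSpace ℝ E]
    [NormedAddCommGroup F] [InnerProductSpace ℝ F] {f : E → F} {A : Set E} {ε : ℝ}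
    (hf : IsNearisometryOn f A ε) (h0 : (0:E) ∈ A)
    (hf0 : f 0 = 0) {u : E} {v : F} (h : PairDir f A u v) {a : E} (ha : a ∈ A) :
    |⟪f a, v⟫ - ⟪a, u⟫| ≤ 2 * ε := by
  have hv := pair_norm hf h0 hf0 h
  obtain ⟨x, hxA, hx, hxu, hxv⟩ := h
  have hu : ‖u‖ = 1 := cd_norm ⟨x, hxA, hx, hxu⟩
  have h1 := aux_tendsto x _ hx u a hu hxu
  have h2 := aux_tendsto (fun j => f (x j)) _ hx v (f a) hv hxv
  have h3 := (h1.sub h2).abs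
  have e : -⟪a, u⟫ - -⟪f a, v⟫ = ⟪f a, v⟫ - ⟪a, u⟫ := by ring
  rw [e] at h3
  refine le_of_tendsto h3 (Eventually.of_forall fun j => ?_)
  have k1 := abs_le.1 (hf a ha (x j) (hxA j))
  have k2 := abs_le.1 (near_norm hf h0 hf0 (hxA j))
  rw [abs_le]
  constructor <;> linarith [k1.1, k1.2, k2.1, k2.2]

lemma pair_inner {E F : Type*} [NormedAddCommGroup E] [InnerProductSpace ℝ E]
    [NormedAddCommGroup F] [InnerProductSpace ℝ F] {f : E → F} {A : Set E} {ε : ℝ}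
    (hf : IsNearisometryOn f A ε) (h0 : (0:E) ∈ A)
    (hf0 : f 0 = 0) {u u' : E} {v v' : F} (h : PairDir f A u v) (h' : PairDir f A u' v') :
    ⟪v', v⟫ = ⟪u', u⟫ := by
  obtain ⟨y, hyA, hy, hyu, hyv⟩ := h'
  have hi : Tendsto (fun j => ‖y j‖⁻¹) atTop (nhds 0) := hy.inv_tendsto_atTop
  have h1 : Tendsto (fun j => ⟪‖y j‖⁻¹ • f (y j), v⟫ - ⟪‖y j‖⁻¹ • y j, u⟫) atTop
      (nhds (⟪v', v⟫ - ⟪u', u⟫)) :=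
    (hyv.inner tendsto_const_nhds).sub (hyu.inner tendsto_const_nhds)
  have h2 : Tendsto (fun j => ⟪‖y j‖⁻¹ • f (y j), v⟫ - ⟪‖y j‖⁻¹ • y j, u⟫) atTop
      (nhds 0) := by
    refine squeeze_zero_norm (fun j => ?_) (by simpa using hi.mul_const (2 * ε))
    rw [real_inner_smul_left, real_inner_smul_left, ← mul_sub, norm_mul, norm_inv, norm_norm]
    exact mul_le_mul_of_nonneg_left (pair_inner_le hf h0 hf0 h (hyA j)) (by positivity)
  exact sub_eq_zero.1 (tendsto_nhds_unique h1 h2)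

lemma gram_extend {E F : Type*} [NormedAddCommGroup E] [InnerProductSpace ℝ E]
    [NormedAddCommGroup F] [InnerProductSpace ℝ F] {S : Set E} (hS : Submodule.span ℝ S = ⊤)
    (φ : E → F) (hφ : ∀ u ∈ S, ∀ v ∈ S, ⟪φ u, φ v⟫ = ⟪u, v⟫) :
    ∃ U : E →ₗᵢ[ℝ] F, ∀ x, ∀ u ∈ S, ⟪U x, φ u⟫ = ⟪x, u⟫ := by
  obtain ⟨b, hbS, hspan, hli⟩ := exists_linearIndependent ℝ S
  let B : Module.Basis b ℝ E := Module.Basis.mk hli (by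
    rw [Subtype.range_coe_subtype, Set.ofPred_mem_eq, hspan, hS])
  have hB : ∀ i, B i = (i : E) := fun i => Module.Basis.mk_apply _ _ i
  let T : E →ₗ[ℝ] F := B.constr ℝ (fun i => φ i)
  have hT : ∀ i, T (B i) = φ (i : E) := fun i => B.constr_basis ℝ _ i
  have h1 : ∀ x, ∀ u ∈ S, ⟪T x, φ u⟫ = ⟪x, u⟫ := by
    intro x u hu
    have : (innerₗ F (φ u)) ∘ₗ T = innerₗ E u := by
      refine B.ext fun i => ?_
      simp only [LinearMap.comp_apply, innerₗ_apply_apply]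
      rw [hT, hφ _ hu _ (hbS i.2), hB]
    have := congrArg (fun g => g x) this
    simp only [LinearMap.comp_apply, innerₗ_apply_apply] at this
    rw [real_inner_comm, this, real_inner_comm]
  have h2 : ∀ x y, ⟪T x, T y⟫ = ⟪x, y⟫ := by
    intro x y
    have : (innerₗ F (T x)) ∘ₗ T = innerₗ E x := by
      refine B.ext fun i => ?_
      simp only [LinearMap.comp_apply, innerₗ_apply_apply]
      rw [hT, h1 _ _ (hbS i.2), hB]
    have := congrArg (fun g => g y) this
    simpa only [LinearMap.comp_apply, innerₗ_apply_apply] using this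
  exact ⟨T.isometryOfInner h2, h1⟩

lemma mu_le {E : Type*} [NormedAddCommGroup E] [InnerProductSpace ℝ E] (A : Set E)
    (e : E) (he : ‖e‖ = 1) (c : ℝ) (hc : 0 ≤ c)
    (h : ∀ u, IsClusterDirection A u → |⟪u, e⟫| ≤ c) : muDir A ≤ c := by
  unfold muDir
  refine le_trans (csInf_le ⟨0, ?_⟩ ⟨e, he, rfl⟩) (Real.sSup_le ?_ hc)
  · rintro s ⟨e, -, rfl⟩
    apply Real.sSup_nonneg
    rintro t ⟨u, -, rfl⟩
    exact abs_nonneg _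
  · rintro t ⟨u, hu, rfl⟩
    exact h u hu

/-- Corollary 4.9: if `A ⊆ ℝⁿ` is unbounded with `0 ∈ A` and `μ(A) ≥ 1/c'`, and
`f : A → ℝⁿ` is an `ε`-nearisometry with `f 0 = 0`, then there is a linear isometry
`U : ℝⁿ → ℝⁿ` with `|U x - f x| ≤ 2 c' ε` for all `x ∈ A`. -/
theorem exists_linearIsometry_approx_euclidean {n : ℕ} (hn : 1 ≤ n)
    (c' : ℝ) (hc' : 0 < c') (A : Set (EuclideanSpace ℝ (Fin n)))
    (hA : ¬ IsBounded A) (h0A : (0 : EuclideanSpace ℝ (Fin n)) ∈ A)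
    (hmu : 1 / c' ≤ muDir A)
    (f : EuclideanSpace ℝ (Fin n) → EuclideanSpace ℝ (Fin n)) (ε : ℝ) (hε : 0 ≤ ε)
    (hf : IsNearisometryOn f A ε) (hf0 : f 0 = 0) :
    ∃ U : EuclideanSpace ℝ (Fin n) →ₗᵢ[ℝ] EuclideanSpace ℝ (Fin n),
      ∀ x ∈ A, ‖U x - f x‖ ≤ 2 * c' * ε := by
  have hpos : 0 < muDir A := lt_of_lt_of_le (by positivity) hmu
  have hspan : Submodule.span ℝ {u | IsClusterDirection A u} = ⊤ := by
    by_contra hne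
    have h1 : (Submodule.span ℝ {u | IsClusterDirection A u})ᗮ ≠ ⊥ := fun h =>
      hne ((Submodule.orthogonal_eq_bot_iff).1 h)
    obtain ⟨w, hw, hw0⟩ := Submodule.exists_mem_ne_zero_of_ne_bot h1
    refine absurd (mu_le A (‖w‖⁻¹ • w) ?_ 0 le_rfl ?_) (not_le.2 hpos)
    · rw [norm_smul, norm_inv, norm_norm, inv_mul_cancel₀ (norm_ne_zero_iff.2 hw0)]
    · intro u hu
      rw [real_inner_smul_right, (Submodule.mem_orthogonal _ _).1 hw u (Submodule.subset_span hu)]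
      simp
  have hex : ∀ u, ∃ v, IsClusterDirection A u → PairDir f A u v := by
    intro u
    by_cases hu : IsClusterDirection A u
    · obtain ⟨v, hv⟩ := pair_exists hf h0A hf0 hu
      exact ⟨v, fun _ => hv⟩
    · exact ⟨0, fun h => absurd h hu⟩
  choose φ hφ using hex
  obtain ⟨U, hU⟩ := gram_extend hspan φ
    (fun u hu v hv => pair_inner hf h0A hf0 (hφ v hv) (hφ u hu))
  refine ⟨U, fun x hx => ?_⟩
  obtain ⟨w, hw⟩ := (U.toLinearIsometryEquiv rfl).surjective (U x - f x)
  rw [LinearIsometry.coe_toLinearIsometryEquiv] at hw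
  rw [← hw, U.norm_map]
  rcases eq_or_ne w 0 with rfl | hw0
  · simp; positivity
  have hwp : 0 < ‖w‖ := norm_pos_iff.2 hw0
  have key := mu_le A (‖w‖⁻¹ • w) (by
    rw [norm_smul, norm_inv, norm_norm, inv_mul_cancel₀ hwp.ne']) (‖w‖⁻¹ * (2 * ε))
    (by positivity) (by
      intro u hu
      rw [real_inner_smul_right, abs_mul, abs_inv, abs_norm]
      refine mul_le_mul_of_nonneg_left ?_ (by positivity)
      rw [real_inner_comm, ← hU w u hu, hw, inner_sub_left, hU x u hu, abs_sub_comm]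
      exact pair_inner_le hf h0A hf0 (hφ u hu) hx)
  have h3 := hmu.trans key
  rw [← div_eq_inv_mul, div_le_div_iff₀ hc' hwp] at h3
  linarith
end

section
/- Let E be a real Banach space, F a real Hilbert space, and f : E → F an ε-nearisometry for some ε ≥ 0 with f 0 = 0 and τ(f(E)) < 1. Then there is a surjective linear isometry T : E → F with |T x − f x| ≤ 2ε for all x ∈ E. -/
open Filter Metric Bornology

/-- `τ(B) = sup_{|e|=1} liminf_{|t|→∞} dist(t e, B)/|t|`. -/
noncomputable def tauSet {F : Type*} [NormedAddCommGroup F] [NormedSpace ℝ F]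
    (B : Set F) : ℝ :=
  sSup {s | ∃ e : F, ‖e‖ = 1 ∧
    s = liminf (fun t : ℝ => infDist (t • e) B / |t|) (cocompact ℝ)}


lemma le_of_sq_le_sq_aux {a b : ℝ} (h : a ^ 2 ≤ b ^ 2) (hb : 0 ≤ b) : a ≤ b :=
  (le_abs_self a).trans (abs_le_of_sq_le_sq h hb)

section aux

variable {E F : Type*} [NormedAddCommGroup E] [NormedSpace ℝ E]
    [NormedAddCommGroup F] [InnerProductSpace ℝ F]

lemma aux_mid (f : E → F) (ε : ℝ) (hε : 0 ≤ ε)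
    (hf : IsNearisometryOn f Set.univ ε) (hf0 : f 0 = 0) (x : E) :
    ‖(2 : ℝ) • f x - f ((2 : ℝ) • x)‖ ^ 2 ≤ 12 * ε * ‖x‖ + 4 * ε ^ 2 := by
  have h1 := abs_le.1 (hf x trivial 0 trivial)
  have h2 := abs_le.1 (hf ((2 : ℝ) • x) trivial 0 trivial)
  have h3 := abs_le.1 (hf ((2 : ℝ) • x) trivial x trivial)
  have e : (2 : ℝ) • x - x = x := by rw [two_smul]; abel
  rw [e] at h3
  rw [hf0, sub_zero, sub_zero] at h1 h2
  rw [norm_smul, Real.norm_of_nonneg (by norm_num : (0:ℝ) ≤ 2)] at h2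
  set u := f x
  set v := f ((2 : ℝ) • x)
  have hp := parallelogram_law_with_norm ℝ u (v - u)
  have e1 : u + (v - u) = v := by abel
  have e2 : u - (v - u) = (2 : ℝ) • u - v := by rw [two_smul]; abel
  rw [e1, e2] at hp
  have hr := norm_nonneg x
  have hu := norm_nonneg u
  have hv := norm_nonneg v
  have hvu := norm_nonneg (v - u)
  have s1 : ‖u‖ ^ 2 ≤ (‖x‖ + ε) ^ 2 := by
    apply pow_le_pow_left₀ hu; linarith
  have s2 : ‖v - u‖ ^ 2 ≤ (‖x‖ + ε) ^ 2 := by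
    apply pow_le_pow_left₀ hvu; linarith
  rcases le_total (2 * ‖x‖) ε with h | h
  · nlinarith [mul_nonneg hr hε, mul_nonneg hr (sub_nonneg.2 h)]
  · have s3 : (2 * ‖x‖ - ε) ^ 2 ≤ ‖v‖ ^ 2 := by
      apply pow_le_pow_left₀ (by linarith); linarith
    nlinarith [mul_nonneg hr hε]

lemma aux_step (f : E → F) (ε : ℝ) (hε : 0 ≤ ε)
    (hf : IsNearisometryOn f Set.univ ε) (hf0 : f 0 = 0) (x : E) (n : ℕ) :
    dist (((2 : ℝ) ^ n)⁻¹ • f ((2 : ℝ) ^ n • x))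
      (((2 : ℝ) ^ (n + 1))⁻¹ • f ((2 : ℝ) ^ (n + 1) • x))
      ≤ (√(12 * ε * ‖x‖ + 4 * ε ^ 2) / 2) * (3 / 4 : ℝ) ^ n := by
  have h := aux_mid f ε hε hf hf0 ((2 : ℝ) ^ n • x)
  have hK : 0 ≤ 12 * ε * ‖x‖ + 4 * ε ^ 2 := by positivity
  rw [smul_smul, ← pow_succ', norm_smul, Real.norm_of_nonneg (by positivity)] at h
  have e : ((2 : ℝ) ^ n)⁻¹ • f ((2 : ℝ) ^ n • x) - ((2 : ℝ) ^ (n + 1))⁻¹ • f ((2 : ℝ) ^ (n + 1) • x)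
     = ((2 : ℝ) ^ (n + 1))⁻¹ • ((2 : ℝ) • f ((2 : ℝ) ^ n • x) - f ((2 : ℝ) ^ (n + 1) • x)) := by
    rw [smul_sub, smul_smul]
    congr 2
    rw [pow_succ]; field_simp
  rw [dist_eq_norm, e, norm_smul, Real.norm_of_nonneg (by positivity)]
  apply le_of_sq_le_sq_aux _ (by positivity)
  rw [mul_pow, mul_pow, div_pow, Real.sq_sqrt hK]
  set N := ‖(2 : ℝ) • f ((2 : ℝ) ^ n • x) - f ((2 : ℝ) ^ (n + 1) • x)‖
  have one : (1 : ℝ) ≤ 2 ^ n := one_le_pow₀ (by norm_num)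
  have h2 : N ^ 2 ≤ 2 ^ n * (12 * ε * ‖x‖ + 4 * ε ^ 2) := by
    nlinarith [mul_nonneg (sub_nonneg.2 one) (sq_nonneg ε)]
  have h3 : ((1 : ℝ) / 2) ^ n ≤ ((3 / 4 : ℝ) ^ n) ^ 2 := by
    rw [← pow_mul, mul_comm, pow_mul]
    apply pow_le_pow_left₀ <;> norm_num
  calc (((2:ℝ) ^ (n + 1))⁻¹) ^ 2 * N ^ 2
      ≤ (((2:ℝ) ^ (n + 1))⁻¹) ^ 2 * (2 ^ n * (12 * ε * ‖x‖ + 4 * ε ^ 2)) := by gcongr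
    _ = (12 * ε * ‖x‖ + 4 * ε ^ 2) / 2 ^ 2 * (1 / 2) ^ n := by
      have e4 : ((1 : ℝ) / 2) ^ n = ((2 : ℝ) ^ n)⁻¹ := by rw [one_div, inv_pow]
      have e5 : (2 : ℝ) ^ (n + 1) = 2 ^ n * 2 := pow_succ _ _
      rw [e4, e5]
      have : (2 : ℝ) ^ n ≠ 0 := by positivity
      generalize (2 : ℝ) ^ n = c at *
      field_simp
    _ ≤ _ := by gcongr

lemma aux_lim (p e : F) (he : ‖e‖ = 1) (q : ℕ → F)
    (hq : Tendsto (fun n => ((2 : ℝ) ^ n)⁻¹ • q n) atTop (nhds e)) :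
    Tendsto (fun n => ‖p - q n‖ - ‖q n‖) atTop (nhds (-inner ℝ p e)) := by
  have h0 : Tendsto (fun n : ℕ => ((2 : ℝ) ^ n)⁻¹) atTop (nhds 0) := by
    simpa using tendsto_pow_atTop_nhds_zero_of_lt_one (r := (2:ℝ)⁻¹) (by norm_num) (by norm_num)
  have hp : Tendsto (fun n : ℕ => ((2 : ℝ) ^ n)⁻¹ • p) atTop (nhds 0) := by
    simpa using h0.smul_const p
  have hnum : Tendsto (fun n : ℕ => ((2 : ℝ) ^ n)⁻¹ * ‖p‖ ^ 2
      - 2 * inner ℝ p (((2 : ℝ) ^ n)⁻¹ • q n)) atTop (nhds (0 * ‖p‖ ^ 2 - 2 * inner ℝ p e)) :=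
    (h0.mul_const _).sub ((Tendsto.inner tendsto_const_nhds hq).const_mul 2)
  have hden : Tendsto (fun n : ℕ => ‖((2 : ℝ) ^ n)⁻¹ • p - ((2 : ℝ) ^ n)⁻¹ • q n‖
      + ‖((2 : ℝ) ^ n)⁻¹ • q n‖) atTop (nhds (‖0 - e‖ + ‖e‖)) :=
    (hp.sub hq).norm.add hq.norm
  rw [zero_sub, norm_neg, he] at hden
  have h := hnum.div hden (by norm_num)
  have ev : ∀ᶠ n : ℕ in atTop, 0 < ‖((2 : ℝ) ^ n)⁻¹ • p - ((2 : ℝ) ^ n)⁻¹ • q n‖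
      + ‖((2 : ℝ) ^ n)⁻¹ • q n‖ := hden.eventually_const_lt (by norm_num)
  have e3 : (0 * ‖p‖ ^ 2 - 2 * inner ℝ p e) / (1 + 1) = -inner ℝ p e := by ring
  rw [e3] at h
  refine h.congr' ?_
  filter_upwards [ev] with n hn
  simp only [Pi.div_apply]
  rw [div_eq_iff hn.ne', ← smul_sub, norm_smul, norm_smul, Real.norm_of_nonneg (by positivity),
    inner_smul_right]
  have := norm_sub_sq_real p (q n)
  linear_combination (-((2:ℝ) ^ n)⁻¹) * this

lemma aux_exists [CompleteSpace F] (f : E → F) (ε : ℝ) (hε : 0 ≤ ε)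
    (hf : IsNearisometryOn f Set.univ ε) (hf0 : f 0 = 0) :
    ∃ T : E →ₗᵢ[ℝ] F,
      (∀ x, Tendsto (fun n : ℕ => ((2 : ℝ) ^ n)⁻¹ • f ((2 : ℝ) ^ n • x)) atTop (nhds (T x))) ∧
      ∀ x, ‖f x - T x‖ ≤ 2 * √(12 * ε * ‖x‖ + 4 * ε ^ 2) := by
  have hc : ∀ x, ∃ y, Tendsto (fun n : ℕ => ((2 : ℝ) ^ n)⁻¹ • f ((2 : ℝ) ^ n • x)) atTop (nhds y) :=
    fun x => cauchySeq_tendsto_of_complete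
      (cauchySeq_of_le_geometric _ _ (by norm_num) (aux_step f ε hε hf hf0 x))
  choose S hS using hc
  have h0 : Tendsto (fun n : ℕ => ((2 : ℝ) ^ n)⁻¹) atTop (nhds 0) := by
    simpa using tendsto_pow_atTop_nhds_zero_of_lt_one (r := (2:ℝ)⁻¹) (by norm_num) (by norm_num)
  have hI : Isometry S := by
    refine Isometry.of_dist_eq fun x y => ?_
    have l1 := (hS x).dist (hS y)
    refine tendsto_nhds_unique l1 ?_
    rw [tendsto_iff_dist_tendsto_zero]
    refine squeeze_zero (fun _ => dist_nonneg) (fun n => ?_) (by simpa using h0.mul_const ε)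
    have := hf ((2:ℝ)^n • x) trivial ((2:ℝ)^n • y) trivial
    rw [← smul_sub, norm_smul, Real.norm_of_nonneg (by positivity)] at this
    rw [Real.dist_eq, dist_eq_norm, dist_eq_norm, ← smul_sub, norm_smul,
      Real.norm_of_nonneg (by positivity)]
    have e : ((2:ℝ)^n)⁻¹ * ‖f ((2:ℝ)^n • x) - f ((2:ℝ)^n • y)‖ - ‖x - y‖ =
      ((2:ℝ)^n)⁻¹ * (‖f ((2:ℝ)^n • x) - f ((2:ℝ)^n • y)‖ - 2 ^ n * ‖x - y‖) := by
      field_simp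
    rw [e, abs_mul, abs_of_nonneg (by positivity : (0:ℝ) ≤ ((2:ℝ)^n)⁻¹)]
    gcongr
  have hS0 : S 0 = 0 := by
    refine tendsto_nhds_unique (hS 0) ?_
    simp [hf0]
  let A := hI.affineIsometryOfStrictConvexSpace
  have hA : ∀ x, A x = S x := fun x => rfl
  have hL : ∀ x, A.linearIsometry x = S x := by
    intro x
    have := A.map_vadd 0 x
    simp only [hA, vadd_eq_add, add_zero, hS0] at this
    exact this.symm
  refine ⟨A.linearIsometry, fun x => by rw [hL]; exact hS x, fun x => ?_⟩
  rw [hL]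
  have := dist_le_of_le_geometric_of_tendsto₀ _ _ (by norm_num) (aux_step f ε hε hf hf0 x) (hS x)
  simp only [pow_zero, inv_one, one_smul] at this
  rw [dist_eq_norm] at this
  refine this.trans (le_of_eq ?_)
  ring

lemma aux_orth (f : E → F) (ε : ℝ) (hε : 0 ≤ ε) (hf0 : f 0 = 0) (T : E →ₗᵢ[ℝ] F)
    (hT : ∀ x, ‖f x - T x‖ ≤ 2 * √(12 * ε * ‖x‖ + 4 * ε ^ 2))
    (e : F) (he : ‖e‖ = 1) (horth : ∀ x, inner ℝ e (T x) = 0) :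
    1 ≤ tauSet (Set.range f) := by
  have hle : ∀ (e : F), ‖e‖ = 1 → ∀ t : ℝ, infDist (t • e) (Set.range f) / |t| ≤ 1 := by
    intro e he t
    apply div_le_one_of_le₀ _ (abs_nonneg t)
    have := infDist_le_dist_of_mem (x := t • e) (Set.mem_range_self (f := f) 0)
    rwa [hf0, dist_zero_right, norm_smul, he, mul_one, Real.norm_eq_abs] at this
  have hnn : ∀ (e : F) (t : ℝ), 0 ≤ infDist (t • e) (Set.range f) / |t| := fun e t =>
    div_nonneg infDist_nonneg (abs_nonneg t)
  have hbdd : BddAbove {s | ∃ e : F, ‖e‖ = 1 ∧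
    s = liminf (fun t : ℝ => infDist (t • e) (Set.range f) / |t|) (cocompact ℝ)} := by
    refine ⟨1, ?_⟩
    rintro s ⟨e, he, rfl⟩
    refine liminf_le_of_frequently_le (Eventually.frequently (Eventually.of_forall (hle e he))) ?_
    exact isBoundedUnder_of ⟨0, hnn e⟩
  have key : ∀ δ : ℝ, 0 < δ → δ ≤ 1 → 1 - 2 * δ ≤ tauSet (Set.range f) := by
    intro δ hδ hδ1
    refine le_csSup_of_le hbdd ⟨e, he, rfl⟩ ?_
    refine le_liminf_of_le
      (IsBoundedUnder.isCoboundedUnder_ge (isBoundedUnder_of ⟨1, hle e he⟩)) ?_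
    set M := 24 * ε / δ + 4 * ε with hM
    have hM0 : 0 ≤ M := by positivity
    have hb : ∀ x, ‖f x - T x‖ ≤ δ * ‖x‖ + M := by
      intro x
      refine (hT x).trans ?_
      have : √(12 * ε * ‖x‖ + 4 * ε ^ 2) ≤ (δ * ‖x‖ + M) / 2 := by
        apply Real.sqrt_le_iff.2 ⟨by positivity, ?_⟩
        have e1 : δ * M = 24 * ε + 4 * ε * δ := by rw [hM]; field_simp
        have e2 : (4 * ε) ^ 2 ≤ M ^ 2 := by
          apply pow_le_pow_left₀ (by positivity)
          rw [hM]; linarith [show 0 ≤ 24 * ε / δ by positivity]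
        have e3 : δ * M * ‖x‖ ≥ 24 * ε * ‖x‖ := by
          rw [e1]; nlinarith [show 0 ≤ ε * δ * ‖x‖ by positivity]
        nlinarith [sq_nonneg (δ * ‖x‖)]
      linarith
    have hev : ∀ᶠ t : ℝ in cocompact ℝ, M / δ + 1 ≤ ‖t‖ :=
      (tendsto_norm_cocompact_atTop (E := ℝ)).eventually_ge_atTop _
    filter_upwards [hev] with t ht
    rw [Real.norm_eq_abs] at ht
    have htp : 0 < |t| := lt_of_lt_of_le (by positivity) ht
    have hMt : M ≤ δ * |t| := by
      have : M / δ ≤ |t| := by linarith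
      rw [div_le_iff₀ hδ] at this; linarith
    rw [le_div_iff₀ htp]
    rw [le_infDist (Set.range_nonempty f)]
    rintro _ ⟨x, rfl⟩
    rw [dist_eq_norm]
    have hpy : ‖t • e - T x‖ ^ 2 = |t| ^ 2 + ‖x‖ ^ 2 := by
      rw [norm_sub_sq_real, inner_smul_left, horth, norm_smul, he, T.norm_map, Real.norm_eq_abs]
      simp
    have g1 : |t| ≤ ‖t • e - T x‖ :=
      le_of_sq_le_sq_aux (by rw [hpy]; nlinarith [sq_nonneg ‖x‖]) (norm_nonneg _)
    have g2 : ‖x‖ ≤ ‖t • e - T x‖ :=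
      le_of_sq_le_sq_aux (by rw [hpy]; nlinarith [sq_nonneg |t|]) (norm_nonneg _)
    have g3 : ‖t • e - T x‖ ≤ ‖t • e - f x‖ + ‖f x - T x‖ := norm_sub_le_norm_sub_add_norm_sub _ _ _
    have := hb x
    nlinarith [mul_le_mul_of_nonneg_left g1 (sub_nonneg.2 hδ1), mul_le_mul_of_nonneg_left g2 hδ.le]
  by_contra hlt
  push Not at hlt
  have := key (min 1 ((1 - tauSet (Set.range f)) / 4)) (lt_min one_pos (by linarith))
    (min_le_left _ _)
  have := min_le_right 1 ((1 - tauSet (Set.range f)) / 4)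
  linarith

end aux

/-- Theorem 5.3: if `E` is a Banach space, `F` a Hilbert space, and `f : E → F` an
`ε`-nearisometry with `f 0 = 0` and `τ(f(E)) < 1`, then there is a surjective linear
isometry `T : E → F` with `|T x - f x| ≤ 2ε` for all `x`. -/
theorem hyersUlam_of_tau_lt_one {E F : Type*}
    [NormedAddCommGroup E] [NormedSpace ℝ E] [CompleteSpace E]
    [NormedAddCommGroup F] [InnerProductSpace ℝ F] [CompleteSpace F]
    (f : E → F) (ε : ℝ) (hε : 0 ≤ ε)
    (hf : IsNearisometryOn f Set.univ ε) (hf0 : f 0 = 0)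
    (htau : tauSet (Set.range f) < 1) :
    ∃ T : E →ₗᵢ[ℝ] F, Function.Surjective T ∧ ∀ x : E, ‖T x - f x‖ ≤ 2 * ε := by
  obtain ⟨T, hlim, hT⟩ := aux_exists f ε hε hf hf0
  have hsurj : Function.Surjective T := by
    rw [← LinearIsometry.coe_toLinearMap, ← LinearMap.range_eq_top]
    by_contra hne
    have hcl : IsClosed (T.toLinearMap.range : Set F) := by
      have := T.isometry.isClosedEmbedding.isClosed_range
      exact this
    have : CompleteSpace T.toLinearMap.range := hcl.completeSpace_coe
    have hb : T.toLinearMap.rangeᗮ ≠ ⊥ := fun h =>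
      hne (Submodule.orthogonal_eq_bot_iff.1 h)
    obtain ⟨v, hv, hv0⟩ := Submodule.exists_mem_ne_zero_of_ne_bot hb
    have := aux_orth f ε hε hf0 T hT (‖v‖⁻¹ • v) (norm_smul_inv_norm (𝕜 := ℝ) hv0) (fun x => by
      rw [inner_smul_left, (Submodule.mem_orthogonal' _ _).1 hv (T x) ⟨x, rfl⟩, mul_zero])
    linarith
  refine ⟨T, hsurj, fun x => ?_⟩
  by_cases hd : T x - f x = 0
  · rw [hd, norm_zero]; linarith
  obtain ⟨w, hw⟩ := hsurj (‖T x - f x‖⁻¹ • (T x - f x))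
  have hw1 : ‖T w‖ = 1 := by rw [hw]; exact norm_smul_inv_norm (𝕜 := ℝ) hd
  have l1 := aux_lim (f x) (T w) hw1 _ (hlim w)
  have l2 := aux_lim (T x) (T w) hw1 (fun n => T ((2 : ℝ) ^ n • w)) (by
    refine tendsto_const_nhds.congr fun n => ?_
    rw [map_smul, smul_smul, inv_mul_cancel₀ (by positivity), one_smul])
  have l3 := l1.sub l2
  have hb : -inner ℝ (f x) (T w) - -inner ℝ (T x) (T w) ≤ 2 * ε := by
    refine le_of_tendsto' l3 fun n => ?_
    have h1 := abs_le.1 (hf x trivial ((2 : ℝ) ^ n • w) trivial)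
    have h2 := abs_le.1 (hf ((2 : ℝ) ^ n • w) trivial 0 trivial)
    rw [hf0, sub_zero, sub_zero] at h2
    rw [← map_sub, T.norm_map, T.norm_map]
    linarith [h1.2, h2.1]
  have e : -inner ℝ (f x) (T w) - -inner ℝ (T x) (T w) = ‖T x - f x‖ := by
    have : inner ℝ (T x - f x) (T w) = ‖T x - f x‖ := by
      rw [hw, inner_smul_right, real_inner_self_eq_norm_sq]
      field_simp
    rw [inner_sub_left] at this
    linarith
  linarith
end

section
/- Let E be a real Banach space, F a real Hilbert space, and f : E → F a nearisometry (i.e., an ε-nearisometry for some ε ≥ 0). Then τ(f(E)) ∈ {0, 1}. -/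
open Filter Metric Bornology

lemma tz_step {F : Type*} [NormedAddCommGroup F] [InnerProductSpace ℝ F]
    (a b : F) (n ε : ℝ) (hn : 0 ≤ n) (hε : 0 ≤ ε) (ha : ‖a‖ ≤ n + ε) (hba : ‖b - a‖ ≤ n + ε)
    (hb : 2 * n - ε ≤ ‖b‖) : ‖b - (2:ℝ) • a‖ ≤ (4 * √ε + 2 * ε) * (√n + 1) := by
  have hp := parallelogram_law_with_norm ℝ (b - a) a
  have e1 : b - a - a = b - (2:ℝ) • a := by rw [two_smul]; abel
  rw [e1, sub_add_cancel] at hp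
  have h1 : 4 * n ^ 2 - 4 * n * ε ≤ ‖b‖ * ‖b‖ := by
    rcases le_total ε (2 * n) with h | h
    · nlinarith [mul_self_le_mul_self (by linarith : 0 ≤ 2 * n - ε) hb, sq_nonneg ε]
    · nlinarith [norm_nonneg b, mul_self_nonneg ‖b‖]
  have h2 := mul_self_le_mul_self (norm_nonneg _) ha
  have h3 := mul_self_le_mul_self (norm_nonneg _) hba
  have hs : 0 ≤ √ε := Real.sqrt_nonneg _
  have hsn : 0 ≤ √n := Real.sqrt_nonneg _
  have hse : √ε * √ε = ε := Real.mul_self_sqrt hε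
  have hsnn : √n * √n = n := Real.mul_self_sqrt hn
  have h4 : ‖b - (2:ℝ) • a‖ ≤ 4 * (√ε * √n) + 2 * ε := by
    refine abs_le_of_sq_le_sq' ?_ (by positivity) |>.2
    have : (√ε * √n) * (√ε * √n) = n * ε := by
      rw [← hse, ← hsnn]; simp only [hse, hsnn]; nlinarith
    have h5 : 0 ≤ (√ε * √n) * ε := by positivity
    nlinarith [mul_nonneg hn hε]
  nlinarith [mul_nonneg hε hsn]

lemma tz_approx {E F : Type*}
    [NormedAddCommGroup E] [NormedSpace ℝ E]
    [NormedAddCommGroup F] [InnerProductSpace ℝ F] [CompleteSpace F]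
    (f : E → F) (ε : ℝ) (hε : 0 ≤ ε) (hf : IsNearisometryOn f Set.univ ε) :
    ∃ L : E →ₗᵢ[ℝ] F, ∃ C : ℝ, 0 ≤ C ∧ ∀ x, ‖f x - L x‖ ≤ C * √‖x‖ + C := by
  have hf' : ∀ x y, |‖f x - f y‖ - ‖x - y‖| ≤ ε := fun x y => hf x trivial y trivial
  set u : E → ℕ → F := fun x k => ((2:ℝ) ^ k)⁻¹ • (f ((2:ℝ) ^ k • x) - f 0) with hu
  set K := 4 * √ε + 2 * ε with hK
  have hK0 : 0 ≤ K := by positivity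
  set r : ℝ := (√2)⁻¹ with hr
  have hs2 : √2 * √2 = (2:ℝ) := Real.mul_self_sqrt (by norm_num)
  have hs1 : 1 < √2 := by rw [Real.lt_sqrt] <;> norm_num
  have hr1 : r < 1 := inv_lt_one_of_one_lt₀ hs1
  have hstep : ∀ x k, dist (u x k) (u x (k+1)) ≤ (K * (√‖x‖ + 1)) * r ^ k := by
    intro x k
    set y := (2:ℝ) ^ k • x with hy
    have hy2 : (2:ℝ) ^ (k+1) • x = (2:ℝ) • y := by rw [hy, smul_smul, pow_succ']
    have hny : ‖y‖ = 2 ^ k * ‖x‖ := by rw [hy, norm_smul]; simp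
    have h1 := abs_le.1 (hf' y 0)
    have h2 := abs_le.1 (hf' ((2:ℝ) • y) y)
    have h3 := abs_le.1 (hf' ((2:ℝ) • y) 0)
    have e2 : (2:ℝ) • y - y = y := by rw [two_smul]; abel
    have e3 : ‖(2:ℝ) • y‖ = 2 * ‖y‖ := by rw [norm_smul]; simp
    rw [sub_zero] at h1 h3
    rw [e2] at h2
    rw [e3] at h3
    have h := tz_step (f y - f 0) (f ((2:ℝ) • y) - f 0) ‖y‖ ε (norm_nonneg _) hε
      (by linarith) (by rw [sub_sub_sub_cancel_right]; linarith) (by linarith)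
    have e4 : u x (k+1) - u x k = ((2:ℝ) ^ (k+1))⁻¹ •
        ((f ((2:ℝ) • y) - f 0) - (2:ℝ) • (f y - f 0)) := by
      simp only [hu]
      rw [hy2, smul_sub _ (f ((2:ℝ) • y) - f 0) ((2:ℝ) • _),
        smul_smul _ (2:ℝ) (f y - f 0)]
      have e5 : ((2:ℝ) ^ (k+1))⁻¹ * 2 = ((2:ℝ) ^ k)⁻¹ := by rw [pow_succ]; field_simp
      rw [e5]
    rw [dist_comm, dist_eq_norm, e4, norm_smul, norm_inv, norm_pow, Real.norm_ofNat]
    have hsq : √‖y‖ = √2 ^ k * √‖x‖ := by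
      rw [hny, Real.sqrt_mul (by positivity)]
      congr 1
      rw [Real.sqrt_eq_iff_mul_self_eq (by positivity) (by positivity), ← mul_pow, hs2]
    have hone : 1 ≤ √2 ^ k := one_le_pow₀ hs1.le
    have h5 : ‖(f ((2:ℝ) • y) - f 0) - (2:ℝ) • (f y - f 0)‖ ≤ K * (√‖x‖ + 1) * √2 ^ k := by
      refine h.trans ?_
      rw [hsq, mul_assoc]
      apply mul_le_mul_of_nonneg_left _ hK0
      linarith
    have hrk : ((2:ℝ)^k)⁻¹ * √2 ^ k = r ^ k := by
      rw [hr, ← inv_pow, ← mul_pow]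
      congr 1
      have h0 : √2 ≠ 0 := by positivity
      field_simp
      nlinarith
    calc _ ≤ ((2:ℝ) ^ (k+1))⁻¹ * (K * (√‖x‖ + 1) * √2 ^ k) := by gcongr
      _ ≤ ((2:ℝ) ^ k)⁻¹ * (K * (√‖x‖ + 1) * √2 ^ k) := by
        gcongr
        · norm_num
        · omega
      _ = _ := by rw [← hrk]; ring
  have hlim : ∀ x, ∃ l, Tendsto (u x) atTop (nhds l) := fun x =>
    cauchySeq_tendsto_of_complete (cauchySeq_of_le_geometric r _ hr1 (hstep x))
  choose T hT using hlim
  have hdist : ∀ x, ‖f x - f 0 - T x‖ ≤ K * (√‖x‖ + 1) / (1 - r) := by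
    intro x
    have := dist_le_of_le_geometric_of_tendsto₀ r _ hr1 (hstep x) (hT x)
    simpa [hu, dist_eq_norm] using this
  have hiso : Isometry T := by
    refine Isometry.of_dist_eq fun x y => ?_
    have ht : Tendsto (fun k => ‖u x k - u y k‖) atTop (nhds ‖T x - T y‖) :=
      ((hT x).sub (hT y)).norm
    rw [dist_eq_norm, dist_eq_norm]
    refine tendsto_nhds_unique ht ?_
    rw [tendsto_iff_norm_sub_tendsto_zero]
    have hz : Tendsto (fun k : ℕ => ε * ((2:ℝ)⁻¹) ^ k) atTop (nhds 0) := by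
      simpa using (tendsto_pow_atTop_nhds_zero_of_lt_one (by norm_num : (0:ℝ) ≤ 2⁻¹)
        (by norm_num)).const_mul ε
    refine squeeze_zero (fun _ => norm_nonneg _) (fun k => ?_) hz
    have e1 : ‖u x k - u y k‖ = ((2:ℝ)^k)⁻¹ * ‖f ((2:ℝ)^k • x) - f ((2:ℝ)^k • y)‖ := by
      simp only [hu]
      rw [← smul_sub, sub_sub_sub_cancel_right, norm_smul]; simp
    have e2 : ‖x - y‖ = ((2:ℝ)^k)⁻¹ * ‖(2:ℝ)^k • x - (2:ℝ)^k • y‖ := by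
      rw [← smul_sub, norm_smul]; simp
    rw [e1, e2, ← mul_sub, norm_mul, mul_comm, inv_pow]
    have := hf' ((2:ℝ)^k • x) ((2:ℝ)^k • y)
    rw [Real.norm_eq_abs, Real.norm_eq_abs, abs_of_nonneg (by positivity : 0 ≤ ((2:ℝ)^k)⁻¹)]
    gcongr
  have hT0 : T 0 = 0 := by
    refine tendsto_nhds_unique (hT 0) ?_
    simp [hu]
  let A := hiso.affineIsometryOfStrictConvexSpace
  have hA : ∀ x, A x = T x := fun x => rfl
  have hL : ∀ x, A.linearIsometry x = T x := by
    intro x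
    have := A.map_vadd 0 x
    simp only [vadd_eq_add, add_zero, hA, hT0] at this
    exact this.symm
  have h1r : 0 < 1 - r := by linarith
  refine ⟨A.linearIsometry, K / (1 - r) + ‖f 0‖, by positivity, fun x => ?_⟩
  rw [hL]
  have h1 : ‖f x - T x‖ ≤ ‖f x - f 0 - T x‖ + ‖f 0‖ := by
    have : f x - T x = (f x - f 0 - T x) + f 0 := by abel
    rw [this]; exact norm_add_le _ _
  have h2 := hdist x
  have h3 : K * (√‖x‖ + 1) / (1 - r) = K / (1 - r) * √‖x‖ + K / (1 - r) := by ring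
  have h4 : 0 ≤ ‖f 0‖ * √‖x‖ := by positivity
  linarith

/-- Corollary 5.4: if `f : E → F` is a nearisometry from a Banach space to a Hilbert
space, then `τ(f(E)) ∈ {0, 1}`. -/
theorem tau_range_zero_or_one {E F : Type*}
    [NormedAddCommGroup E] [NormedSpace ℝ E] [CompleteSpace E]
    [NormedAddCommGroup F] [InnerProductSpace ℝ F] [CompleteSpace F]
    (f : E → F) (hf : ∃ ε : ℝ, 0 ≤ ε ∧ IsNearisometryOn f Set.univ ε) :
    tauSet (Set.range f) = 0 ∨ tauSet (Set.range f) = 1 := by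
  obtain ⟨ε, hε, hf⟩ := hf
  obtain ⟨L, C, hC, hL⟩ := tz_approx f ε hε hf
  have habs : Tendsto (fun t : ℝ => |t|) (cocompact ℝ) atTop := tendsto_norm_cocompact_atTop
  have hinv : Tendsto (fun t : ℝ => |t|⁻¹) (cocompact ℝ) (nhds 0) :=
    tendsto_inv_atTop_zero.comp habs
  have hsinv : Tendsto (fun t : ℝ => (√|t|)⁻¹) (cocompact ℝ) (nhds 0) :=
    tendsto_inv_atTop_zero.comp (Real.tendsto_sqrt_atTop.comp habs)
  have herr : Tendsto (fun t : ℝ => C * (√|t|)⁻¹ + C * |t|⁻¹) (cocompact ℝ) (nhds 0) := by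
    simpa using (hsinv.const_mul C).add (hinv.const_mul C)
  have hdiv : ∀ t : ℝ, 0 < |t| → (C * √|t| + C) / |t| = C * (√|t|)⁻¹ + C * |t|⁻¹ := by
    intro t ht
    have h0 : 0 < √|t| := Real.sqrt_pos.2 ht
    have h1 : √|t| / |t| = (√|t|)⁻¹ := Real.sqrt_div_self
    rw [add_div, mul_div_assoc, h1, div_eq_mul_inv]
  by_cases hsurj : Function.Surjective L
  · left
    have key : ∀ e : F, ‖e‖ = 1 →
        liminf (fun t : ℝ => infDist (t • e) (Set.range f) / |t|) (cocompact ℝ) = 0 := by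
      intro e he
      apply Tendsto.liminf_eq
      refine squeeze_zero' (Eventually.of_forall fun t => div_nonneg infDist_nonneg (abs_nonneg _))
        ?_ herr
      filter_upwards [habs.eventually_gt_atTop 0] with t ht
      rw [← hdiv t ht]
      gcongr
      obtain ⟨x, hx⟩ := hsurj (t • e)
      have hnx : ‖x‖ = |t| := by
        rw [← L.norm_map, hx, norm_smul, he, mul_one, Real.norm_eq_abs]
      refine (infDist_le_dist_of_mem (Set.mem_range_self x)).trans ?_
      rw [dist_comm, dist_eq_norm, ← hx, ← hnx]
      exact hL x
    unfold tauSet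
    by_cases hne : ∃ e : F, ‖e‖ = 1
    · obtain ⟨e, he⟩ := hne
      have hg : IsGreatest {s | ∃ e : F, ‖e‖ = 1 ∧
          s = liminf (fun t : ℝ => infDist (t • e) (Set.range f) / |t|) (cocompact ℝ)} 0 := by
        refine ⟨⟨e, he, (key e he).symm⟩, ?_⟩
        rintro _ ⟨e', he', rfl⟩
        exact (key e' he').le
      exact hg.csSup_eq
    · convert Real.sSup_empty
      ext s
      simp only [Set.mem_ofPred_eq, Set.mem_empty_iff_false, iff_false]
      rintro ⟨e, he, -⟩
      exact hne ⟨e, he⟩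
  · right
    -- upper bound
    have hub : ∀ e : F, ‖e‖ = 1 → ∀ t : ℝ, 0 < |t| →
        infDist (t • e) (Set.range f) / |t| ≤ 1 + ‖f 0‖ * |t|⁻¹ := by
      intro e he t ht
      rw [div_le_iff₀ ht]
      have : (1 + ‖f 0‖ * |t|⁻¹) * |t| = |t| + ‖f 0‖ := by field_simp
      rw [this]
      refine (infDist_le_dist_of_mem (Set.mem_range_self 0)).trans ?_
      rw [dist_eq_norm]
      refine (norm_sub_le _ _).trans ?_
      rw [norm_smul, he, mul_one, Real.norm_eq_abs]
    have hub1 : Tendsto (fun t : ℝ => 1 + ‖f 0‖ * |t|⁻¹) (cocompact ℝ) (nhds 1) := by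
      simpa using (hinv.const_mul ‖f 0‖).const_add 1
    have hle : ∀ e : F, ‖e‖ = 1 →
        liminf (fun t : ℝ => infDist (t • e) (Set.range f) / |t|) (cocompact ℝ) ≤ 1 := by
      intro e he
      rw [← hub1.liminf_eq]
      refine liminf_le_liminf ?_ ?_ hub1.isCoboundedUnder_ge
      · filter_upwards [habs.eventually_gt_atTop 0] with t ht using hub e he t ht
      · refine isBoundedUnder_of ⟨0, fun t => ?_⟩
        exact div_nonneg infDist_nonneg (abs_nonneg _)
    obtain ⟨e, he, hperp⟩ : ∃ e : F, ‖e‖ = 1 ∧ ∀ x, inner ℝ (L x) e = 0 := by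
      have hcomp : IsComplete (LinearMap.range L.toLinearMap : Set F) := by
        have := L.isometry.isUniformInducing.isComplete_range
        exact this
      have : CompleteSpace (LinearMap.range L.toLinearMap) := hcomp.completeSpace_coe
      have hne : (LinearMap.range L.toLinearMap)ᗮ ≠ ⊥ := by
        rw [Ne, Submodule.orthogonal_eq_bot_iff, LinearMap.range_eq_top]
        exact hsurj
      obtain ⟨v, hv, hv0⟩ := Submodule.exists_mem_ne_zero_of_ne_bot hne
      refine ⟨(‖v‖⁻¹ : ℝ) • v, ?_, fun x => ?_⟩
      · rw [norm_smul, norm_inv, norm_norm, inv_mul_cancel₀ (norm_ne_zero_iff.2 hv0)]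
      · rw [inner_smul_right, (Submodule.mem_orthogonal _ _).1 hv (L x) ⟨x, rfl⟩, mul_zero]
    have hlow : Tendsto (fun t : ℝ => infDist (t • e) (Set.range f) / |t|)
        (cocompact ℝ) (nhds 1) := by
      have h1 : Tendsto (fun t : ℝ => 1 - (C * (√|t|)⁻¹ + C * |t|⁻¹)) (cocompact ℝ) (nhds 1) := by
        simpa using herr.const_sub 1
      refine tendsto_of_tendsto_of_tendsto_of_le_of_le' h1 hub1 ?_ ?_
      · filter_upwards [habs.eventually_gt_atTop 0, habs.eventually_ge_atTop (C ^ 2)] with t ht htC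
        rw [← hdiv t ht, le_div_iff₀ ht, sub_mul, div_mul_cancel₀ _ ht.ne', one_mul]
        refine (le_infDist (Set.range_nonempty f)).2 ?_
        rintro _ ⟨x, rfl⟩
        set m := ‖t • e - L x‖ with hm
        have hpy : m * m = |t| * |t| + ‖x‖ * ‖x‖ := by
          have h0 : inner ℝ (t • e) (L x) = 0 := by
            rw [inner_smul_left, real_inner_comm, hperp, mul_zero]
          have := norm_sub_sq_eq_norm_sq_add_norm_sq_real h0
          rw [hm, this, L.norm_map, norm_smul, he, mul_one, Real.norm_eq_abs]
        have hm0 : 0 ≤ m := norm_nonneg _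
        have hmt : |t| ≤ m := by
          refine (abs_le_of_sq_le_sq' ?_ hm0).2
          nlinarith [norm_nonneg x]
        have hmx : ‖x‖ ≤ m := by
          refine (abs_le_of_sq_le_sq' ?_ hm0).2
          nlinarith [norm_nonneg x]
        have hd : m ≤ dist (t • e) (f x) + ‖f x - L x‖ := by
          rw [dist_eq_norm, hm]
          exact norm_sub_le_norm_sub_add_norm_sub _ _ _
        have hLx := hL x
        have hs1 : √‖x‖ ≤ √m := Real.sqrt_le_sqrt hmx
        have hs2 : √|t| ≤ √m := Real.sqrt_le_sqrt hmt
        have hs3 : C ≤ √|t| := Real.le_sqrt_of_sq_le htC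
        have hq1 := Real.mul_self_sqrt hm0
        have hq2 := Real.mul_self_sqrt ht.le
        have h6 := mul_le_mul_of_nonneg_left hs1 hC
        have h7 : 0 ≤ (√m - √|t|) * (√m + √|t| - C) :=
          mul_nonneg (by linarith) (by linarith [Real.sqrt_nonneg m])
        nlinarith
      · filter_upwards [habs.eventually_gt_atTop 0] with t ht using hub e he t ht
    have : IsGreatest {s | ∃ e : F, ‖e‖ = 1 ∧
        s = liminf (fun t : ℝ => infDist (t • e) (Set.range f) / |t|) (cocompact ℝ)} 1 := by
      refine ⟨⟨e, he, hlow.liminf_eq.symm⟩, ?_⟩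
      rintro _ ⟨e', he', rfl⟩
      exact hle e' he'
    exact this.csSup_eq
end

section
/- Let E and F be real Banach spaces, let A ⊆ E, and let f : A → F be an ε-nearisometry for some ε ≥ 0 such that the sets E \ A and F \ f(A) are bounded. Then there is a surjective isometry T : E → F with |T x − f x| ≤ 2ε for all x ∈ A; moreover, for each x₀ ∈ A one can choose such a T with T x₀ = f x₀. -/
open Filter Metric Bornology

set_option linter.unusedSectionVars false

/-- Coarse near-isometry on the whole space. -/
def NI {E F : Type*} [NormedAddCommGroup E] [NormedAddCommGroup F] (f : E → F) (s : ℝ) : Prop :=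
  ∀ x y, |‖f x - f y‖ - ‖x - y‖| ≤ s

section aux
variable {E F : Type*} [NormedAddCommGroup E] [NormedSpace ℝ E]
  [NormedAddCommGroup F] [NormedSpace ℝ F]

theorem NI.le {f : E → F} {s : ℝ} (h : NI f s) (x y : E) : ‖f x - f y‖ ≤ ‖x - y‖ + s := by
  have := (abs_le.1 (h x y)).2; linarith

theorem NI.ge {f : E → F} {s : ℝ} (h : NI f s) (x y : E) : ‖x - y‖ ≤ ‖f x - f y‖ + s := by
  have := (abs_le.1 (h x y)).1; linarith

theorem NI.mk' {f : E → F} {s : ℝ} (h : ∀ x y, ‖f x - f y‖ ≤ ‖x - y‖ + s)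
    (h' : ∀ x y, ‖x - y‖ ≤ ‖f x - f y‖ + s) : NI f s := by
  intro x y
  have := h x y
  have := h' x y
  rw [abs_le]; constructor <;> linarith

theorem refl_sub (c x y : E) : ‖(c - x) - (c - y)‖ = ‖x - y‖ := by
  rw [sub_sub_sub_cancel_left, norm_sub_rev]

theorem tri (x y z : E) : ‖x - z‖ ≤ ‖x - y‖ + ‖y - z‖ := norm_sub_le_norm_sub_add_norm_sub x y z

/-- composite h ∘ (c - ·) ∘ f -/
theorem NI.comp_refl {G : Type*} [NormedAddCommGroup G] [NormedSpace ℝ G]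
    {f : E → F} {h : F → G} {s : ℝ} (hf : NI f s) (hh : NI h s)
    (c : F) : NI (fun x => h (c - f x)) (2 * s) := by
  refine NI.mk' (fun x y => ?_) (fun x y => ?_)
  · have h1 := hh.le (c - f x) (c - f y)
    have h2 := hf.le x y
    rw [refl_sub] at h1
    linarith
  · have h1 := hh.ge (c - f x) (c - f y)
    have h2 := hf.ge x y
    rw [refl_sub] at h1
    linarith

theorem NI.mono {f : E → F} {s t : ℝ} (hf : NI f s) (h : s ≤ t) : NI f t :=
  fun x y => (hf x y).trans h

structure W (c a b : E) (s : ℝ) (g g' : E → E) : Prop where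
  ni : NI g s
  ni' : NI g' s
  gg' : ∀ x, ‖g (g' x) - x‖ ≤ s
  g'g : ∀ x, ‖g' (g x) - x‖ ≤ s
  ha : ‖g a - a‖ ≤ s
  hb : ‖g b - b‖ ≤ s

theorem NI.refl_post {f : E → F} {s : ℝ} (hf : NI f s) (c : F) : NI (fun x => c - f x) s := by
  intro x y
  simp only [refl_sub]; exact hf x y

theorem NI.refl_pre {f : E → F} {s : ℝ} (hf : NI f s) (c : E) : NI (fun x => f (c - x)) s := by
  intro x y
  have := hf (c - x) (c - y)
  rwa [refl_sub] at this

/-- roundtrip -/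
theorem round_trip {f : E → F} {h : F → E} {s : ℝ} (hh : NI h s)
    (hfh : ∀ y, ‖f (h y) - y‖ ≤ s) (hhf : ∀ x, ‖h (f x) - x‖ ≤ s) (c : F) (x : E) :
    ‖h (c - f (h (c - f x))) - x‖ ≤ 3 * s := by
  have h1 := hfh (c - f x)
  have h2 := hh.le (c - f (h (c - f x))) (f x)
  have h3 : ‖c - f (h (c - f x)) - f x‖ = ‖f (h (c - f x)) - (c - f x)‖ := by
    rw [← norm_neg]; congr 1; abel
  have h4 := hhf x
  have h5 := tri (h (c - f (h (c - f x)))) (h (f x)) x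
  linarith

theorem W.step {a b : E} {s : ℝ} {g g' : E → E} (hs : 0 ≤ s) (w : W (a + b) a b s g g') :
    W (a + b) a b (5 * s) (fun x => (a + b) - g' ((a + b) - g x))
      (fun x => g' ((a + b) - g ((a + b) - x))) := by
  have key : ∀ p q : E, p + q = a + b → ‖g p - p‖ ≤ s → ‖g q - q‖ ≤ s →
      ‖(a + b) - g' ((a + b) - g p) - p‖ ≤ 5 * s := by
    intro p q hpq hp hq
    rw [← hpq]
    have h1 := w.ni'.le (p + q - g p) (g q)
    have h2 : ‖p + q - g p - g q‖ ≤ 2 * s := by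
      have : p + q - g p - g q = -((g p - p) + (g q - q)) := by abel
      rw [this, norm_neg]
      linarith [norm_add_le (g p - p) (g q - q)]
    have h3 := w.g'g q
    have h4 := tri (g' (p + q - g p)) (g' (g q)) q
    have h5 : ‖p + q - g' (p + q - g p) - p‖ = ‖g' (p + q - g p) - q‖ := by
      rw [← norm_neg]; congr 1; abel
    linarith
  constructor
  · exact ((w.ni.comp_refl w.ni' (a + b)).refl_post (a + b)).mono (by linarith)
  · exact ((w.ni.comp_refl w.ni' (a + b)).refl_pre (a + b)).mono (by linarith)
  · intro x
    have := round_trip w.ni' w.gg' w.g'g (a + b) (a + b - x)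
    have h5 : ‖a + b - g' (a + b - g (g' (a + b - g (a + b - x)))) - x‖
      = ‖g' (a + b - g (g' (a + b - g (a + b - x)))) - (a + b - x)‖ := by
      rw [← norm_neg]; congr 1; abel
    simp only [h5]
    linarith
  · intro x
    have := round_trip w.ni' w.gg' w.g'g (a + b) x
    simp only [sub_sub_cancel]
    linarith
  · exact key a b rfl w.ha w.hb
  · exact key b a (add_comm _ _) w.hb w.ha

theorem W.bound (a b z : E) (hz : z + z = a + b) (k : ℕ) : ∀ (s : ℝ) (g g' : E → E), 0 ≤ s →
    W (a + b) a b s g g' → ‖g z - z‖ * 2 ^ k ≤ ‖a - b‖ + 2 * 7 ^ k * s := by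
  induction k with
  | zero =>
    intro s g g' hs w
    have h1 := w.ni.le z a
    have h2 := w.ha
    have h3 : ‖z - a‖ = ‖a - b‖ / 2 := by
      have : a - b = (2:ℝ) • (a - z) := by
        rw [two_smul]
        have : b = z + z - a := by rw [hz]; abel
        rw [this]; abel
      rw [this, norm_smul, norm_sub_rev]; norm_num
    have h4 := tri (g z) (g a) z
    have h5 := tri (g a) a z
    rw [norm_sub_rev a z] at h5
    simp only [pow_zero]
    linarith
  | succ k ih =>
    intro s g g' hs w
    have h1 := ih (5 * s) _ _ (by linarith) (w.step hs)
    have h2 := w.ni'.ge (a + b - g z) (g z)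
    have h3 : ‖a + b - g z - g z‖ = 2 * ‖g z - z‖ := by
      have : a + b - g z - g z = -((2:ℝ) • (g z - z)) := by
        rw [two_smul, ← hz]; abel
      rw [this, norm_neg, norm_smul]; norm_num
    have h4 := w.g'g z
    have h5 := tri (g' (a + b - g z)) z (g' (g z))
    rw [norm_sub_rev z] at h5
    have h6 : ‖a + b - g' (a + b - g z) - z‖ = ‖g' (a + b - g z) - z‖ := by
      rw [← norm_neg, ← hz]; congr 1; abel
    simp only [h6] at h1
    have h7 : (2:ℝ) ^ k ≤ 7 ^ k := pow_le_pow_left₀ (by norm_num) (by norm_num) k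
    have h8 : 2 * ‖g z - z‖ ≤ ‖g' (a + b - g z) - z‖ + 2 * s := by linarith
    have h9 := mul_le_mul_of_nonneg_right h8 (by positivity : (0:ℝ) ≤ 2 ^ k)
    have h10 := mul_le_mul_of_nonneg_right h7 hs
    have h11 : 0 ≤ (7:ℝ) ^ k * s := by positivity
    rw [pow_succ, pow_succ]
    nlinarith

/-- Coarse equivalence pair. -/
structure CE (f : E → F) (h : F → E) (K : ℝ) : Prop where
  ni : NI f K
  ni' : NI h K
  fh : ∀ y, ‖f (h y) - y‖ ≤ K
  hf : ∀ x, ‖h (f x) - x‖ ≤ K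

theorem CE.symm {f : E → F} {h : F → E} {K : ℝ} (c : CE f h K) : CE h f K :=
  ⟨c.ni', c.ni, c.hf, c.fh⟩

theorem CE.mid {f : E → F} {h : F → E} {K : ℝ} (c : CE f h K) (hK : 0 ≤ K)
    (a b z : E) (hz : z + z = a + b) (k : ℕ) :
    ‖(f a + f b) - f z - f z‖ ≤ ‖a - b‖ / 2 ^ k + 8 * 4 ^ k * K := by
  have key : ∀ p q : E, p + q = a + b →
      ‖(a + b) - h ((f p + f q) - f p) - p‖ ≤ 3 * K := by
    intro p q hpq
    have h1 := c.hf q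
    rw [add_sub_cancel_left, ← hpq]
    have : p + q - h (f q) - p = -(h (f q) - q) := by abel
    rw [this, norm_neg]; linarith
  have w : W (a + b) a b (3 * K) (fun x => (a + b) - h ((f a + f b) - f x))
      (fun x => h ((f a + f b) - f ((a + b) - x))) := by
    constructor
    · exact ((c.ni.comp_refl c.ni' _).refl_post (a + b)).mono (by linarith)
    · exact ((c.ni.comp_refl c.ni' _).refl_pre (a + b)).mono (by linarith)
    · intro x
      have := round_trip c.ni' c.fh c.hf (f a + f b) (a + b - x)
      refine le_trans (le_of_eq ?_) this
      rw [← norm_neg]; congr 1; abel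
    · intro x
      have := round_trip c.ni' c.fh c.hf (f a + f b) x
      simp only [sub_sub_cancel]
      linarith
    · exact key a b rfl
    · have := key b a (add_comm _ _)
      rwa [add_comm (f b)] at this
  have h1 := W.bound a b z hz k _ _ _ (by linarith) w
  have h6 : ‖a + b - h (f a + f b - f z) - z‖ = ‖h (f a + f b - f z) - z‖ := by
    rw [← norm_neg, ← hz]; congr 1; abel
  simp only [h6] at h1
  have h2 := c.fh (f a + f b - f z)
  have h3 := c.ni.le (h (f a + f b - f z)) z
  have h4 := tri (f a + f b - f z) (f (h (f a + f b - f z))) (f z)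
  rw [norm_sub_rev _ (f (h _))] at h4
  have h5 : ‖h (f a + f b - f z) - z‖ ≤ ‖a - b‖ / 2 ^ k + 6 * 4 ^ k * K := by
    have e : (8:ℝ) ^ k = 4 ^ k * 2 ^ k := by rw [← mul_pow]; norm_num
    have h7 : (7:ℝ) ^ k ≤ 8 ^ k := pow_le_pow_left₀ (by norm_num) (by norm_num) k
    have h8 := mul_le_mul_of_nonneg_right h7 hK
    have p : (0:ℝ) < 2 ^ k := by positivity
    rw [← mul_le_mul_iff_left₀ p, add_mul, div_mul_cancel₀ _ p.ne']
    rw [e] at h8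
    nlinarith
  have h9 : (1:ℝ) ≤ 4 ^ k := one_le_pow₀ (by norm_num)
  nlinarith

theorem CE.dbl {f : E → F} {h : F → E} {K : ℝ} (c : CE f h K) (hK : 0 ≤ K) (y : E) (k : ℕ) :
    ‖f ((2:ℝ) • y) - (2:ℝ) • f y‖ ≤ 2 * ‖y‖ / 2 ^ k + 4 ^ k * (8 * K + ‖f 0‖) := by
  have h1 := c.mid hK ((2:ℝ) • y) 0 y (by rw [add_zero, two_smul]) k
  have h2 : f ((2:ℝ) • y) - (2:ℝ) • f y = (f ((2:ℝ) • y) + f 0 - f y - f y) - f 0 := by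
    rw [two_smul ℝ (f y)]; abel
  have h3 := norm_sub_le (f ((2:ℝ) • y) + f 0 - f y - f y) (f 0)
  rw [← h2] at h3
  rw [sub_zero, norm_smul, Real.norm_two] at h1
  have h9 : (1:ℝ) ≤ 4 ^ k := one_le_pow₀ (by norm_num)
  have := norm_nonneg (f 0)
  nlinarith

theorem CE.oct {f : E → F} {h : F → E} {K : ℝ} (c : CE f h K) (hK : 0 ≤ K) (y : E) (k : ℕ) :
    ‖f ((8:ℝ) • y) - (8:ℝ) • f y‖ ≤ 24 * ‖y‖ / 2 ^ k + 7 * (4 ^ k * (8 * K + ‖f 0‖)) := by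
  have h1 := c.dbl hK y k
  have h2 := c.dbl hK ((2:ℝ) • y) k
  have h3 := c.dbl hK ((2:ℝ) • (2:ℝ) • y) k
  have e : (8:ℝ) • y = (2:ℝ) • (2:ℝ) • (2:ℝ) • y := by rw [smul_smul, smul_smul]; norm_num
  have e2 : f ((8:ℝ) • y) - (8:ℝ) • f y =
      (f ((2:ℝ) • (2:ℝ) • (2:ℝ) • y) - (2:ℝ) • f ((2:ℝ) • (2:ℝ) • y))
      + (2:ℝ) • (f ((2:ℝ) • (2:ℝ) • y) - (2:ℝ) • f ((2:ℝ) • y))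
      + (4:ℝ) • (f ((2:ℝ) • y) - (2:ℝ) • f y) := by
    rw [e]; module
  rw [e2]
  refine (norm_add₃_le).trans ?_
  rw [norm_smul (2:ℝ) (_ : F), norm_smul (4:ℝ) (_ : F)]
  simp only [norm_smul, Real.norm_two] at h1 h2 h3 ⊢
  have : ‖(4:ℝ)‖ = 4 := by norm_num
  rw [this]
  have e3 : 24 * ‖y‖ / 2 ^ k = 4 * (2 * ‖y‖ / 2 ^ k) + 2 * (2 * (2 * ‖y‖) / 2 ^ k)
    + 2 * (2 * (2 * ‖y‖)) / 2 ^ k := by ring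
  rw [e3]
  linarith

theorem CE.lim [CompleteSpace F] {f : E → F} {h : F → E} {K : ℝ} (c : CE f h K) (hK : 0 ≤ K)
    (x : E) : ∃ l, Tendsto (fun n : ℕ => ((8:ℝ) ^ n)⁻¹ • f ((8:ℝ) ^ n • x)) atTop (nhds l) := by
  apply cauchySeq_tendsto_of_complete
  apply cauchySeq_of_le_geometric (1/2) (3 * ‖x‖ + 7 * (8 * K + ‖f 0‖)) (by norm_num)
  intro n
  rw [dist_comm, dist_eq_norm]
  have h1 := c.oct hK ((8:ℝ) ^ n • x) n
  have e : ((8:ℝ) ^ (n+1))⁻¹ • f ((8:ℝ) ^ (n+1) • x) - ((8:ℝ) ^ n)⁻¹ • f ((8:ℝ) ^ n • x)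
    = ((8:ℝ) ^ (n+1))⁻¹ • (f ((8:ℝ) • (8:ℝ) ^ n • x) - (8:ℝ) • f ((8:ℝ) ^ n • x)) := by
    rw [smul_smul (8:ℝ) _ x, smul_sub, smul_smul, pow_succ' (8:ℝ) n]
    congr 2
    field_simp
  rw [e, norm_smul, norm_inv, norm_pow]
  rw [norm_smul, norm_pow] at h1
  have : ‖(8:ℝ)‖ = 8 := by norm_num
  rw [this] at h1 ⊢
  have p : (0:ℝ) < 8 ^ (n + 1) := by positivity
  rw [inv_mul_le_iff₀ p]
  refine h1.trans ?_
  have e4 : (8:ℝ) ^ n * (1/2) ^ n = 4 ^ n := by rw [← mul_pow]; norm_num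
  have e5 : 24 * (8 ^ n * ‖x‖) / 2 ^ n = 24 * ‖x‖ * 4 ^ n := by
    rw [← e4, one_div, inv_pow]; ring
  have e6 : (8:ℝ) ^ (n + 1) * ((3 * ‖x‖ + 7 * (8 * K + ‖f 0‖)) * (1 / 2) ^ n) =
    8 * (3 * ‖x‖ + 7 * (8 * K + ‖f 0‖)) * 4 ^ n := by rw [← e4]; ring
  rw [e5, e6]
  have : 0 ≤ (8 * K + ‖f 0‖) * 4 ^ n := by positivity
  nlinarith

theorem inv8 (C : ℝ) : Tendsto (fun n : ℕ => ((8:ℝ) ^ n)⁻¹ * C) atTop (nhds 0) := by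
  have := (tendsto_pow_atTop_nhds_zero_of_lt_one (r := (8:ℝ)⁻¹) (by norm_num) (by norm_num)).mul_const C
  simpa using this

theorem lim_isom {f : E → F} {K : ℝ} (ni : NI f K) (T : E → F)
    (hT : ∀ x, Tendsto (fun n : ℕ => ((8:ℝ) ^ n)⁻¹ • f ((8:ℝ) ^ n • x)) atTop (nhds (T x))) :
    Isometry T := by
  refine Isometry.of_dist_eq fun x y => ?_
  rw [dist_eq_norm, dist_eq_norm]
  have h1 := (((hT x).sub (hT y)).norm).sub_const ‖x - y‖
  have h2 : Tendsto (fun n : ℕ => ‖((8:ℝ) ^ n)⁻¹ • f ((8:ℝ) ^ n • x)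
      - ((8:ℝ) ^ n)⁻¹ • f ((8:ℝ) ^ n • y)‖ - ‖x - y‖) atTop (nhds 0) := by
    refine squeeze_zero_norm (fun n => ?_) (inv8 K)
    have p : (0:ℝ) < 8 ^ n := by positivity
    have := ni ((8:ℝ) ^ n • x) ((8:ℝ) ^ n • y)
    rw [← smul_sub, norm_smul] at this
    rw [← smul_sub, norm_smul, norm_inv, Real.norm_eq_abs]
    have e : ‖(8:ℝ) ^ n‖ = 8 ^ n := by rw [Real.norm_eq_abs, abs_of_pos p]
    rw [e] at this ⊢
    rw [le_inv_mul_iff₀ p, ← abs_of_pos p, ← abs_mul, abs_of_pos p, mul_sub,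
      mul_inv_cancel_left₀ p.ne']
    exact this
  have := tendsto_nhds_unique h1 h2
  linarith

theorem lim_inv {f : E → F} {h : F → E} {K : ℝ} (c : CE f h K) (T : E → F) (S : F → E)
    (hT : ∀ x, Tendsto (fun n : ℕ => ((8:ℝ) ^ n)⁻¹ • f ((8:ℝ) ^ n • x)) atTop (nhds (T x)))
    (hS : ∀ x, Tendsto (fun n : ℕ => ((8:ℝ) ^ n)⁻¹ • h ((8:ℝ) ^ n • x)) atTop (nhds (S x)))
    (y : F) : T (S y) = y := by
  have h1 := (hT (S y)).sub_const y
  have h2 : Tendsto (fun n : ℕ => ((8:ℝ) ^ n)⁻¹ • f ((8:ℝ) ^ n • S y) - y) atTop (nhds 0) := by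
    have h3 := ((hS y).const_sub (S y)).norm.add (inv8 (2 * K))
    rw [sub_self, norm_zero, add_zero] at h3
    refine squeeze_zero_norm (fun n => ?_) h3
    have p : (0:ℝ) < 8 ^ n := by positivity
    have e : ‖(8:ℝ) ^ n‖ = 8 ^ n := by rw [Real.norm_eq_abs, abs_of_pos p]
    have a1 := c.ni.le ((8:ℝ) ^ n • S y) (h ((8:ℝ) ^ n • y))
    have a2 := c.fh ((8:ℝ) ^ n • y)
    have a3 := tri (f ((8:ℝ) ^ n • S y)) (f (h ((8:ℝ) ^ n • y))) ((8:ℝ) ^ n • y)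
    have e1 : ((8:ℝ) ^ n)⁻¹ • f ((8:ℝ) ^ n • S y) - y =
      ((8:ℝ) ^ n)⁻¹ • (f ((8:ℝ) ^ n • S y) - (8:ℝ) ^ n • y) := by
      rw [smul_sub, inv_smul_smul₀ p.ne']
    have e2 : S y - ((8:ℝ) ^ n)⁻¹ • h ((8:ℝ) ^ n • y) =
      ((8:ℝ) ^ n)⁻¹ • ((8:ℝ) ^ n • S y - h ((8:ℝ) ^ n • y)) := by
      rw [smul_sub, inv_smul_smul₀ p.ne']
    rw [e1, e2, norm_smul, norm_smul]
    rw [norm_inv, e, ← mul_add]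
    gcongr
    linarith
  have := tendsto_nhds_unique h1 h2
  exact sub_eq_zero.1 this

theorem CE.main [CompleteSpace E] [CompleteSpace F] {f : E → F} {h : F → E} {K : ℝ}
    (c : CE f h K) (hK : 0 ≤ K) : ∃ T : E ≃ₗᵢ[ℝ] F,
    ∀ x, Tendsto (fun n : ℕ => ((8:ℝ) ^ n)⁻¹ • f ((8:ℝ) ^ n • x)) atTop (nhds (T x)) := by
  choose T hT using c.lim hK
  choose S hS using c.symm.lim hK
  have iT := lim_isom c.ni T hT
  let I : E ≃ᵢ F := IsometryEquiv.mk' T S (lim_inv c T S hT hS) iT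
  have I0 : I 0 = 0 := by
    have h1 := hT 0
    have h2 : Tendsto (fun n : ℕ => ((8:ℝ) ^ n)⁻¹ • f ((8:ℝ) ^ n • (0:E))) atTop (nhds 0) := by
      have := (inv8 1).smul_const (f 0)
      simpa using this
    exact tendsto_nhds_unique h1 h2
  exact ⟨I.toRealLinearIsometryEquivOfMapZero I0, hT⟩

theorem dense_diff (g : ℝ → ℝ) (C : NNReal) (hg : LipschitzWith C g) (δ : ℝ) (hδ : 0 < δ) :
    ∃ t, |t| < δ ∧ DifferentiableAt ℝ g t := by
  have := hg.ae_differentiableAt_real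
  have hd := MeasureTheory.Measure.dense_of_ae this
  obtain ⟨t, h1, h2⟩ := hd.exists_dist_lt 0 hδ
  refine ⟨t, ?_, h1⟩
  simpa [dist_comm, Real.dist_eq] using h2

/-- Sharp estimate at a single point, the linear part being the identity. -/
theorem sharp_dir (f : E → E) (ε : ℝ) (x : E) (t d : ℝ)
    (hd : HasDerivAt (fun τ : ℝ => ‖(f x - x) + τ • x‖) d t)
    (hlim : Tendsto (fun n : ℕ => ((8:ℝ) ^ n)⁻¹ • f (-((8:ℝ) ^ n • ((f x - x) + t • x)))) atTop
      (nhds (-((f x - x) + t • x))))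
    (h1 : ∀ᶠ n : ℕ in atTop, ‖f (-((8:ℝ) ^ n • ((f x - x) + t • x))) - f x‖ ≤
      ‖-((8:ℝ) ^ n • ((f x - x) + t • x)) - x‖ + ε)
    (h2 : ∀ᶠ n : ℕ in atTop, ‖-((8:ℝ) ^ n • ((f x - x) + t • x))‖ ≤
      ‖f (-((8:ℝ) ^ n • ((f x - x) + t • x)))‖ + ε) :
    ‖(f x - x) + t • x‖ ≤ t * d + 2 * ε := by
  set u := f x - x with hu
  set z := u + t • x with hz
  set g : ℝ → ℝ := fun τ => ‖u + τ • x‖ with hg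
  have gz : g t = ‖z‖ := rfl
  -- right side limit
  have hinv : Tendsto (fun n : ℕ => ((8:ℝ) ^ n)⁻¹) atTop (nhds 0) := by simpa using inv8 1
  have hR : Tendsto (fun n : ℕ => ‖-((8:ℝ) ^ n • z) - x‖ - ‖-((8:ℝ) ^ n • z)‖) atTop (nhds d) := by
    have hs := hasDerivAt_iff_tendsto_slope_zero.1 hd
    have hinv' : Tendsto (fun n : ℕ => ((8:ℝ) ^ n)⁻¹) atTop (nhdsWithin 0 {0}ᶜ) := by
      rw [tendsto_nhdsWithin_iff]
      exact ⟨hinv, Eventually.of_forall fun n => by simp⟩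
    refine (hs.comp hinv').congr fun n => ?_
    have p : (0:ℝ) < 8 ^ n := by positivity
    simp only [Function.comp, inv_inv, smul_eq_mul]
    have e1 : -((8:ℝ) ^ n • z) - x = -((8:ℝ) ^ n • (u + (t + (8 ^ n)⁻¹) • x)) := by
      rw [hz, add_smul, ← add_assoc, smul_add _ (u + t • x), smul_inv_smul₀ p.ne']; abel
    rw [e1, norm_neg, norm_neg, norm_smul, norm_smul, Real.norm_eq_abs, abs_of_pos p]
    ring
  have hL : ∀ s : ℝ, 0 < s → ‖z‖ - ‖z - s • f x‖ ≤ s * (d + 2 * ε) := by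
    intro s hs
    have a1 : Tendsto (fun n : ℕ => ‖((8:ℝ) ^ n)⁻¹ • f (-((8:ℝ) ^ n • z))‖ -
        ‖((8:ℝ) ^ n)⁻¹ • f (-((8:ℝ) ^ n • z)) + s • f x‖) atTop
        (nhds (‖-z‖ - ‖-z + s • f x‖)) := hlim.norm.sub (hlim.add_const _).norm
    have a2 := (hR.add_const (2 * ε)).const_mul s
    have a3 := le_of_tendsto_of_tendsto a1 a2 ?_
    · have : -z + s • f x = -(z - s • f x) := by abel
      rwa [this, norm_neg, norm_neg] at a3
    · filter_upwards [h1, h2] with n b1 b2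
      have p : (0:ℝ) < 8 ^ n := by positivity
      set w := f (-((8:ℝ) ^ n • z))
      have b3 : ‖w - f x‖ - ‖w‖ ≤ ‖-((8:ℝ) ^ n • z) - x‖ - ‖-((8:ℝ) ^ n • z)‖ + 2 * ε := by linarith
      refine le_trans ?_ (mul_le_mul_of_nonneg_left b3 hs.le)
      have e1 : ((8:ℝ) ^ n)⁻¹ • w + s • f x = ((8:ℝ) ^ n)⁻¹ • (w + ((8:ℝ) ^ n * s) • f x) := by
        rw [smul_add, smul_smul, inv_mul_cancel_left₀ p.ne']
      rw [e1, norm_smul, norm_smul, norm_inv, Real.norm_eq_abs, abs_of_pos p, ← mul_sub,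
        inv_mul_le_iff₀ p, ← mul_assoc]
      set S := (8:ℝ) ^ n * s
      have hS : 0 < S := by positivity
      have e2 : (1 + S) • w = (w + S • f x) + S • (w - f x) := by
        module
      have e3 := norm_add_le (w + S • f x) (S • (w - f x))
      rw [← e2, norm_smul, norm_smul, Real.norm_eq_abs, Real.norm_eq_abs, abs_of_pos hS,
        abs_of_pos (by linarith)] at e3
      linarith
  -- let s → 0
  have hG : HasDerivAt (fun s : ℝ => (1 - s) * g (t - s * (1 - t) / (1 - s)))
      (-‖z‖ - (1 - t) * d) 0 := by
    have c1 : HasDerivAt (fun s : ℝ => t - s * (1 - t) / (1 - s)) (-(1 - t)) 0 := by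
      have q1 : HasDerivAt (fun s : ℝ => 1 - s) (-1) 0 := by
        simpa using (hasDerivAt_id (0:ℝ)).const_sub 1
      have q2 : HasDerivAt (fun s : ℝ => s * (1 - t)) (1 - t) 0 := by
        simpa using (hasDerivAt_id (0:ℝ)).mul_const (1 - t)
      have := (q2.div q1 (by norm_num)).const_sub t
      exact this.congr_deriv (by norm_num)
    have c2 : HasDerivAt g d ((fun s : ℝ => t - s * (1 - t) / (1 - s)) 0) := by
      simpa using hd
    have c3 := c2.comp (0:ℝ) c1
    have q1 : HasDerivAt (fun s : ℝ => 1 - s) (-1) 0 := by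
      simpa using (hasDerivAt_id (0:ℝ)).const_sub 1
    have := q1.mul c3
    refine this.congr_deriv ?_
    simp [gz]
    ring
  have hlim2 := (hasDerivAt_iff_tendsto_slope_zero.1 hG).mono_left
    (nhdsWithin_mono (0:ℝ) (fun s (hs : s ∈ Set.Ioi (0:ℝ)) => (ne_of_gt hs : s ≠ 0)))
  have hfin : -(d + 2 * ε) ≤ -‖z‖ - (1 - t) * d := by
    refine ge_of_tendsto hlim2 ?_
    have : Set.Ioo (0:ℝ) 1 ∈ nhdsWithin (0:ℝ) (Set.Ioi 0) := Ioo_mem_nhdsGT one_pos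
    filter_upwards [this] with s hs
    have hs0 := hs.1
    have hs1 : 0 < 1 - s := by linarith [hs.2]
    have e0 := hL s hs0
    have e1 : z - s • f x = (1 - s) • (u + (t - s * (1 - t) / (1 - s)) • x) := by
      have : f x = u + x := by rw [hu]; abel
      rw [this, hz, smul_add (1 - s), smul_smul (1 - s), mul_sub, mul_div_cancel₀ _ hs1.ne']
      module
    rw [e1, norm_smul, Real.norm_eq_abs, abs_of_pos hs1] at e0
    simp only [zero_add, smul_eq_mul, sub_zero, zero_mul, zero_div, one_mul, gz]
    rw [inv_mul_eq_div, le_div_iff₀ hs0]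
    have e2 : g (t - s * (1 - t) / (1 - s)) = ‖u + (t - s * (1 - t) / (1 - s)) • x‖ := rfl
    rw [e2]
    linarith
  linarith

theorem sharp (f : E → E) (ε : ℝ) (hε : 0 ≤ ε) (A : Set E) (hA : IsBounded (Set.univ \ A))
    (h0 : (0:E) ∈ A) (hf0 : f 0 = 0) (hf : IsNearisometryOn f A ε)
    (hlim : ∀ v, v ≠ 0 → Tendsto (fun n : ℕ => ((8:ℝ) ^ n)⁻¹ • f ((8:ℝ) ^ n • v)) atTop (nhds v))
    (x : E) (hx : x ∈ A) : ‖f x - x‖ ≤ 2 * ε := by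
  obtain ⟨r, hr⟩ := hA.exists_norm_le
  have hg : LipschitzWith ‖x‖₊ (fun τ : ℝ => ‖(f x - x) + τ • x‖) := by
    refine LipschitzWith.of_dist_le_mul fun a b => ?_
    rw [Real.dist_eq, Real.dist_eq, coe_nnnorm]
    refine (abs_norm_sub_norm_le _ _).trans ?_
    have : f x - x + a • x - (f x - x + b • x) = (a - b) • x := by module
    rw [this, norm_smul, Real.norm_eq_abs, mul_comm]
  refine le_of_forall_pos_le_add fun η hη => ?_
  have hδ : 0 < η / (2 * (‖x‖ + 1)) := by positivity
  obtain ⟨t, ht, hdiff⟩ := dense_diff _ _ hg _ hδ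
  have hd := hdiff.hasDerivAt
  set d := deriv (fun τ : ℝ => ‖(f x - x) + τ • x‖) t with hdd
  have hdb : |d| ≤ ‖x‖ := by
    have := norm_deriv_le_of_lipschitz (x₀ := t) hg
    simpa using this
  have hz : ‖(f x - x) + t • x‖ ≤ t * d + 2 * ε ∨ (f x - x) + t • x = 0 := by
    by_cases hz0 : (f x - x) + t • x = 0
    · exact Or.inr hz0
    left
    set z := (f x - x) + t • x
    have hmem : ∀ᶠ n : ℕ in atTop, -((8:ℝ) ^ n • z) ∈ A := by
      have : Tendsto (fun n : ℕ => (8:ℝ) ^ n * ‖z‖) atTop atTop :=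
        (tendsto_pow_atTop_atTop_of_one_lt (by norm_num)).atTop_mul_const (norm_pos_iff.2 hz0)
      filter_upwards [this.eventually_gt_atTop r] with n hn
      by_contra hc
      have := hr _ ⟨Set.mem_univ _, hc⟩
      rw [norm_neg, norm_smul, norm_pow] at this
      have e : ‖(8:ℝ)‖ = 8 := by norm_num
      rw [e] at this
      linarith
    refine sharp_dir f ε x t d hd ?_ ?_ ?_
    · have := hlim (-z) (neg_ne_zero.2 hz0)
      simpa only [smul_neg] using this
    · filter_upwards [hmem] with n hn
      have := (abs_le.1 (hf _ hn _ hx)).2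
      linarith
    · filter_upwards [hmem] with n hn
      have := (abs_le.1 (hf _ hn _ h0)).1
      rw [hf0, sub_zero, sub_zero] at this
      linarith
  have htx : |t| * ‖x‖ ≤ η / 2 := by
    rw [lt_div_iff₀ (by positivity)] at ht
    nlinarith [abs_nonneg t, norm_nonneg x]
  have htd : t * d ≤ η / 2 := by
    refine (le_abs_self _).trans ?_
    rw [abs_mul]
    exact (mul_le_mul_of_nonneg_left hdb (abs_nonneg t)).trans htx
  have htri : ‖f x - x‖ ≤ ‖(f x - x) + t • x‖ + η / 2 := by
    have e : f x - x = ((f x - x) + t • x) - t • x := by abel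
    have := norm_sub_le ((f x - x) + t • x) (t • x)
    rw [← e, norm_smul, Real.norm_eq_abs] at this
    linarith
  rcases hz with hz | hz
  · linarith
  · rw [hz, norm_zero] at htri
    linarith

open Classical in
theorem pointed [CompleteSpace E] [CompleteSpace F]
    (A : Set E) (f : E → F) (ε : ℝ) (hε : 0 ≤ ε) (hf : IsNearisometryOn f A ε)
    (hEA : IsBounded (Set.univ \ A)) (hFfA : IsBounded (Set.univ \ (f '' A)))
    (x₀ : E) (hx₀ : x₀ ∈ A) : ∃ T : E → F, Isometry T ∧ Function.Surjective T ∧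
        (∀ x ∈ A, ‖T x - f x‖ ≤ 2 * ε) ∧ T x₀ = f x₀ := by
  obtain ⟨r, hr⟩ := hEA.exists_norm_le
  obtain ⟨ρ, hρ⟩ := hFfA.exists_norm_le
  -- the bounds relative to the base point
  set R := |r| + ‖x₀‖ with hR
  set P := |ρ| + ‖f x₀‖ with hP
  have hR0 : 0 ≤ R := by positivity
  have hP0 : 0 ≤ P := by positivity
  have hRb : ∀ x, x ∉ A → ‖x - x₀‖ ≤ R := fun x hx => by
    have := hr x ⟨Set.mem_univ _, hx⟩
    linarith [norm_sub_le x x₀, le_abs_self r]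
  have hPb : ∀ y, y ∉ f '' A → ‖f x₀ - y‖ ≤ P := fun y hy => by
    have := hρ y ⟨Set.mem_univ _, hy⟩
    linarith [norm_sub_le (f x₀) y, le_abs_self ρ]
  let F' : E → F := fun x => if x ∈ A then f x else f x₀
  have F'A : ∀ x ∈ A, F' x = f x := fun x hx => if_pos hx
  have hF' : NI F' (ε + 2 * R) := by
    let pr : E → E := fun x => if x ∈ A then x else x₀
    have prA : ∀ x, pr x ∈ A := fun x => by
      by_cases hx : x ∈ A <;> simp [pr, hx, hx₀]
    have prn : ∀ x, ‖x - pr x‖ ≤ R := fun x => by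
      by_cases hx : x ∈ A
      · simp [pr, hx, hR0]
      · simpa [pr, hx] using hRb x hx
    have prf : ∀ x, F' x = f (pr x) := fun x => by
      by_cases hx : x ∈ A <;> simp [F', pr, hx]
    intro x y
    rw [prf, prf]
    have h1 := hf _ (prA x) _ (prA y)
    have h2 := abs_norm_sub_norm_le (pr x - pr y) (x - y)
    have h3 : pr x - pr y - (x - y) = (y - pr y) - (x - pr x) := by abel
    rw [h3] at h2
    have h4 := norm_sub_le (y - pr y) (x - pr x)
    have h5 := prn x
    have h6 := prn y
    have h7 := abs_sub_le (‖f (pr x) - f (pr y)‖) ‖pr x - pr y‖ ‖x - y‖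
    linarith
  have hsur : ∀ y, ∃ x, ‖F' x - y‖ ≤ P := fun y => by
    by_cases hy : y ∈ f '' A
    · obtain ⟨x, hx, rfl⟩ := hy
      exact ⟨x, by rw [F'A x hx]; simpa using hP0⟩
    · exact ⟨x₀, by rw [F'A x₀ hx₀]; exact hPb y hy⟩
  choose h hh using hsur
  set K := ε + 2 * R + 2 * P with hK
  have hK0 : 0 ≤ K := by positivity
  have ce : CE F' h K := by
    refine ⟨hF'.mono (by linarith), NI.mk' (fun x y => ?_) (fun x y => ?_),
      fun y => (hh y).trans (by linarith), fun x => ?_⟩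
    · have h1 := hF'.ge (h x) (h y)
      have h2 := tri (F' (h x)) x (F' (h y))
      have h3 := tri x y (F' (h y))
      rw [norm_sub_rev y] at h3
      linarith [hh x, hh y]
    · have h1 := hF'.le (h x) (h y)
      have h2 := tri x (F' (h x)) y
      have h3 := tri (F' (h x)) (F' (h y)) y
      rw [norm_sub_rev x (F' _)] at h2
      linarith [hh x, hh y]
    · have h1 := hF'.ge (h (F' x)) x
      linarith [hh (F' x)]
  obtain ⟨T, hT⟩ := ce.main hK0
  -- the normalised map
  let φ : E → E := fun p => T.symm (f (x₀ + p) - f x₀)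
  let B : Set E := {p | x₀ + p ∈ A}
  have hB : IsBounded (Set.univ \ B) := by
    refine isBounded_iff_forall_norm_le.2 ⟨R, fun p hp => ?_⟩
    have := hRb (x₀ + p) hp.2
    simpa using this
  have hφ : IsNearisometryOn φ B ε := by
    intro p hp q hq
    have := hf _ hp _ hq
    simp only [φ]
    rw [← map_sub, T.symm.norm_map, sub_sub_sub_cancel_right]
    rwa [add_sub_add_left_eq_sub] at this
  have hφlim : ∀ v, v ≠ 0 →
      Tendsto (fun n : ℕ => ((8:ℝ) ^ n)⁻¹ • φ ((8:ℝ) ^ n • v)) atTop (nhds v) := by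
    intro v hv
    have h1 : Tendsto (fun n : ℕ => T.symm (((8:ℝ) ^ n)⁻¹ • F' ((8:ℝ) ^ n • v))) atTop (nhds v) := by
      have := (T.symm.continuous.tendsto _).comp (hT v)
      simpa [Function.comp_def] using this
    refine (tendsto_iff_of_dist ?_).1 h1
    have hmem : ∀ᶠ n : ℕ in atTop, x₀ + (8:ℝ) ^ n • v ∈ A := by
      have : Tendsto (fun n : ℕ => (8:ℝ) ^ n * ‖v‖) atTop atTop :=
        (tendsto_pow_atTop_atTop_of_one_lt (by norm_num)).atTop_mul_const (norm_pos_iff.2 hv)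
      filter_upwards [this.eventually_gt_atTop R] with n hn
      by_contra hc
      have := hRb _ hc
      rw [add_sub_cancel_left, norm_smul, norm_pow] at this
      have e : ‖(8:ℝ)‖ = 8 := by norm_num
      rw [e] at this
      linarith
    refine squeeze_zero' (Eventually.of_forall fun n => dist_nonneg) ?_
      (inv8 (‖x₀‖ + K + ‖f x₀‖))
    filter_upwards [hmem] with n hn
    have p : (0:ℝ) < 8 ^ n := by positivity
    simp only [φ]
    rw [← F'A _ hn, ← map_smul, T.symm.dist_map, dist_eq_norm, ← smul_sub, norm_smul, norm_inv,
      Real.norm_eq_abs, abs_of_pos p]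
    gcongr
    have e1 : F' ((8:ℝ) ^ n • v) - (F' (x₀ + (8:ℝ) ^ n • v) - f x₀) =
      (F' ((8:ℝ) ^ n • v) - F' (x₀ + (8:ℝ) ^ n • v)) + f x₀ := by abel
    rw [e1]
    refine (norm_add_le _ _).trans ?_
    have := ce.ni.le ((8:ℝ) ^ n • v) (x₀ + (8:ℝ) ^ n • v)
    rw [sub_add_cancel_right, norm_neg] at this
    linarith
  have hsharp := sharp φ ε hε B hB (by simpa [B] using hx₀) (by simp [φ]) hφ hφlim
  refine ⟨fun x => T (x - x₀) + f x₀, ?_, ?_, ?_, by simp⟩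
  · refine Isometry.of_dist_eq fun x y => ?_
    rw [dist_add_right, T.dist_map, dist_sub_right]
  · intro y
    exact ⟨T.symm (y - f x₀) + x₀, by simp⟩
  · intro x hx
    have := hsharp (x - x₀) (by simpa [B] using hx)
    simp only [φ, add_sub_cancel] at this
    rw [← T.norm_map, map_sub, T.apply_symm_apply, norm_sub_rev] at this
    refine le_trans (le_of_eq ?_) this
    show ‖T (x - x₀) + f x₀ - f x‖ = _
    generalize T (x - x₀) = q
    congr 1; abel

end aux

/-- Theorem 6.1: if `E, F` are Banach spaces, `A ⊆ E`, and `f : A → F` is an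
`ε`-nearisometry such that `E \ A` and `F \ f(A)` are bounded, then there is a surjective
isometry `T : E → F` with `|T x - f x| ≤ 2ε` on `A`; moreover, for each `x₀ ∈ A` one can
choose `T` with `T x₀ = f x₀`. -/
theorem hyersUlam_local {E F : Type*}
    [NormedAddCommGroup E] [NormedSpace ℝ E] [CompleteSpace E]
    [NormedAddCommGroup F] [NormedSpace ℝ F] [CompleteSpace F]
    (A : Set E) (f : E → F) (ε : ℝ) (hε : 0 ≤ ε) (hf : IsNearisometryOn f A ε)
    (hEA : IsBounded (Set.univ \ A)) (hFfA : IsBounded (Set.univ \ (f '' A))) :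
    (∃ T : E → F, Isometry T ∧ Function.Surjective T ∧ ∀ x ∈ A, ‖T x - f x‖ ≤ 2 * ε) ∧
      ∀ x₀ ∈ A, ∃ T : E → F, Isometry T ∧ Function.Surjective T ∧
        (∀ x ∈ A, ‖T x - f x‖ ≤ 2 * ε) ∧ T x₀ = f x₀ := by
  have main := pointed A f ε hε hf hEA hFfA
  refine ⟨?_, main⟩
  rcases A.eq_empty_or_nonempty with rfl | ⟨x₀, hx₀⟩
  · have hE : Subsingleton E := by
      by_contra hc
      rw [not_subsingleton_iff_nontrivial] at hc
      exact NormedSpace.unbounded_univ ℝ E (by simpa using hEA)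
    have hF : Subsingleton F := by
      by_contra hc
      rw [not_subsingleton_iff_nontrivial] at hc
      exact NormedSpace.unbounded_univ ℝ F (by simpa using hFfA)
    exact ⟨fun _ => 0, isometry_subsingleton, fun y => ⟨0, Subsingleton.elim _ _⟩, by simp⟩
  · obtain ⟨T, h1, h2, h3, _⟩ := main x₀ hx₀
    exact ⟨T, h1, h2, h3⟩
end
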